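/- There exists a radial Schwartz function g: ℝ⁸ → ℝ satisfying: g(x) ≤ 0 for all ‖x‖ ≥ √2; ĝ(x) ≥ 0 for all x ∈ ℝ⁸; g(0) = ĝ(0) = 1; moreover g(x) ≠ 0 and ĝ(x) ≠ 0 for every vector x with ‖x‖² ∉ 2ℤ_{>0}. -/

import Mathlib

open MeasureTheory FourierTransform

namespace SP
abbrev V := EuclideanSpace ℝ (Fin 8)

lemma exists_schwartz (h : ℂ → ℂ) (hd : DifferentiableOn ℂ h {u | -1/2 < u.re})
    (hb : ∀ k : ℕ, ∃ C, ∀ u : ℂ, -1/4 ≤ u.re → |u.im| ≤ 1 → (u.re + 1/4) ^ k * ‖h u‖ ≤ C) :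
    ∃ S : SchwartzMap V ℂ, ∀ x, S x = h ((‖x‖ ^ 2 : ℝ) : ℂ) := by
  set g : ℝ → ℂ := fun u => (Real.smoothTransition (8 * u + 2) : ℂ) * h u with hg
  have hop : IsOpen {u : ℂ | -1/2 < u.re} := isOpen_lt continuous_const Complex.continuous_re
  have hsm : ContDiff ℝ (⊤ : ℕ∞) g := by
    rw [contDiff_iff_contDiffAt]
    intro v
    rcases lt_or_ge (-1/2) v with hv | hv
    · apply ContDiffAt.mul
      · exact Complex.ofRealCLM.contDiff.contDiffAt.comp v
          ((Real.smoothTransition.contDiff (n := ⊤)).contDiffAt.comp v (by fun_prop))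
      · have h1 : ContDiffAt ℂ (⊤ : ℕ∞) h (v : ℂ) :=
          (hd.contDiffOn hop).contDiffAt (hop.mem_nhds (by simpa using hv))
        exact (h1.restrict_scalars ℝ).comp v Complex.ofRealCLM.contDiff.contDiffAt
    · have : g =ᶠ[nhds v] fun _ => 0 := by
        filter_upwards [Iio_mem_nhds (show v < -1/4 by linarith)] with w hw
        have hw' : w < -1/4 := hw
        simp [hg, Real.smoothTransition.zero_of_nonpos (show 8 * w + 2 ≤ 0 by linarith)]
      exact contDiffAt_const.congr_of_eventuallyEq this
  have hdn : ∀ n : ℕ, DifferentiableOn ℂ (iteratedDeriv n h) {u | -1/2 < u.re} := by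
    intro n
    induction n with
    | zero => simpa using hd
    | succ n ih => rw [iteratedDeriv_succ]; exact ih.deriv hop
  have hder : ∀ n : ℕ, ∀ v : ℝ, -1/8 < v → iteratedDeriv n g v = iteratedDeriv n h (v : ℂ) := by
    intro n
    induction n with
    | zero =>
      intro v hv
      simp [hg, Real.smoothTransition.one_of_one_le (show 1 ≤ 8 * v + 2 by linarith)]
    | succ n ih =>
      intro v hv
      rw [iteratedDeriv_succ, iteratedDeriv_succ]
      have e : iteratedDeriv n g =ᶠ[nhds v] fun w : ℝ => iteratedDeriv n h (w : ℂ) := by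
        filter_upwards [Ioi_mem_nhds hv] with w hw using ih w hw
      rw [e.deriv_eq]
      have h2 : DifferentiableAt ℂ (iteratedDeriv n h) (v : ℂ) :=
        (hdn n).differentiableAt (hop.mem_nhds (by simp; linarith))
      exact h2.hasDerivAt.comp_ofReal.deriv
  have hdec : ∀ k n : ℕ, ∃ C : ℝ, ∀ v : ℝ, ‖v‖ ^ k * ‖iteratedFDeriv ℝ n g v‖ ≤ C := by
    intro k n
    obtain ⟨C, hC⟩ := hb k
    have hcont : Continuous fun v : ℝ => ‖v‖ ^ k * ‖iteratedFDeriv ℝ n g v‖ :=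
      (continuous_norm.pow k).mul (hsm.continuous_iteratedFDeriv (by exact_mod_cast le_top)).norm
    obtain ⟨C', hC'⟩ := (isCompact_Icc (a := (-1:ℝ)) (b := 1)).bddAbove_image hcont.continuousOn
    refine ⟨max C' (n.factorial * C / (1/4) ^ n), fun v => ?_⟩
    rcases lt_or_ge v (-1) with hv | hv
    · have hz : g =ᶠ[nhds v] fun _ => 0 := by
        filter_upwards [Iio_mem_nhds (show v < -1/4 by linarith)] with w hw
        have hw' : w < -1/4 := hw
        simp [hg, Real.smoothTransition.zero_of_nonpos (show 8 * w + 2 ≤ 0 by linarith)]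
      have : iteratedFDeriv ℝ n g v = 0 := by
        rw [(hz.iteratedFDeriv ℝ n).eq_of_nhds]
        simp [iteratedFDeriv_fun_zero]
      rw [this]
      have h0 := hC' ⟨0, by norm_num, rfl⟩
      simp only [norm_zero, mul_zero]
      exact le_max_of_le_left (le_trans (by positivity) h0)
    rcases le_or_gt v 1 with hv1 | hv1
    · exact le_max_of_le_left (hC' ⟨v, ⟨hv, hv1⟩, rfl⟩)
    · apply le_max_of_le_right
      rw [norm_iteratedFDeriv_eq_norm_iteratedDeriv, hder n v (by linarith)]
      have key := Complex.norm_iteratedDeriv_le_of_forall_mem_sphere_norm_le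
        (f := fun u => ((v : ℂ) ^ k) * h u) (c := (v : ℂ)) (R := 1/4) (C := C) n (by norm_num) ?_ ?_
      · rw [iteratedDeriv_const_mul_field] at key
        simpa using key
      · apply DifferentiableOn.diffContOnCl
        apply DifferentiableOn.const_mul
        apply hd.mono
        intro u hu
        rw [closure_ball _ (by norm_num)] at hu
        have := (Complex.abs_re_le_norm (u - v)).trans (mem_closedBall_iff_norm.1 hu)
        rw [abs_le] at this
        simp at this ⊢
        linarith
      · intro u hu
        have h1 := (Complex.abs_re_le_norm (u - v)).trans (mem_sphere_iff_norm.1 hu).le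
        have h2 := (Complex.abs_im_le_norm (u - v)).trans (mem_sphere_iff_norm.1 hu).le
        rw [abs_le] at h1
        simp at h1 h2
        refine le_trans ?_ (hC u (by linarith) (by linarith))
        rw [norm_mul, norm_pow, Complex.norm_real, Real.norm_of_nonneg (by linarith)]
        gcongr
        linarith
  let S0 : SchwartzMap ℝ ℂ := ⟨g, hsm, hdec⟩
  refine ⟨SchwartzMap.compCLM ℝ (g := fun x : V => ‖x‖ ^ 2) (Function.hasTemperateGrowth_norm_sq V)
    ⟨1, 1, fun x => ?_⟩ S0, fun x => ?_⟩
  · rw [Real.norm_of_nonneg (by positivity)]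
    nlinarith [sq_nonneg (‖x‖ - 1), norm_nonneg x]
  · have : (0:ℝ) ≤ ‖x‖ ^ 2 := by positivity
    simp only [SchwartzMap.compCLM_apply, Function.comp]
    change g _ = _
    simp only [hg]
    rw [Real.smoothTransition.one_of_one_le (by linarith)]
    simp
end SP

namespace SP
open Complex Set

noncomputable def W (a : ℝ) (c z : ℝ → ℂ) (u : ℂ) : ℂ :=
  ∫ s in Ioi a, c s * cexp (Real.pi * I * u * z s)

structure Adm (a : ℝ) (c z : ℝ → ℂ) (C : ℝ) : Prop where
  ha : 1/2 ≤ a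
  hc : ContinuousOn c (Ioi a)
  hz : ContinuousOn z (Ioi a)
  hC : ∀ s ∈ Ioi a, ‖c s‖ ≤ C * Real.exp (-Real.pi * s)
  him : ∀ s ∈ Ioi a, 1 / (2 * s) ≤ (z s).im
  him' : ∀ s ∈ Ioi a, (z s).im ≤ s + 1/2
  hre : ∀ s ∈ Ioi a, |(z s).re| ≤ 2

lemma norm_e (u z : ℂ) : ‖cexp (Real.pi * I * u * z)‖ =
    Real.exp (-(Real.pi * (u.re * z.im + u.im * z.re))) := by
  rw [Complex.norm_exp]; congr 1; simp; ring

variable {a : ℝ} {c z : ℝ → ℂ} {C : ℝ}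

lemma Adm.C_nonneg (h : Adm a c z C) : 0 ≤ C := by
  have := (norm_nonneg _).trans (h.hC (a+1) (by simp))
  exact nonneg_of_mul_nonneg_left this (Real.exp_pos _)

lemma Adm.aesm (h : Adm a c z C) (u : ℂ) (p : ℂ → ℂ) (hp : Continuous p) :
    AEStronglyMeasurable (fun s => p (z s) * (c s * cexp (Real.pi * I * u * z s))) (volume.restrict (Ioi a)) := by
  apply ContinuousOn.aestronglyMeasurable _ measurableSet_Ioi
  have h1 := h.hc
  have h2 := h.hz
  have h3 := hp.comp_continuousOn h2
  exact h3.mul (h1.mul (by fun_prop))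

/-- pointwise bound -/
lemma Adm.bound (h : Adm a c z C) {u : ℂ} {s : ℝ} {M : ℝ} (hs : s ∈ Ioi a) (hu : -1/2 ≤ u.re) (hM : |u.im| ≤ M) :
    ‖c s * cexp (Real.pi * I * u * z s)‖ ≤
      (C * Real.exp (Real.pi * (2 * M + 1/4))) * Real.exp (-(Real.pi/2) * s) := by
  rw [norm_mul, norm_e]
  have hC0 := h.C_nonneg
  have hpi := Real.pi_pos
  have hs0 : 0 < s := lt_of_lt_of_le (by norm_num) (h.ha.trans (le_of_lt hs))
  have him := h.him s hs
  have him0 : 0 < (z s).im := lt_of_lt_of_le (by positivity) him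
  have him' := h.him' s hs
  have hre := h.hre s hs
  have h1 : -(u.im * (z s).re) ≤ 2 * M := by
    have : |u.im * (z s).re| ≤ M * 2 := by
      rw [abs_mul]; exact mul_le_mul hM hre (abs_nonneg _) ((abs_nonneg _).trans hM)
    have := neg_le_of_abs_le this
    linarith
  have h2 : -(u.re * (z s).im) ≤ 1/2 * (s + 1/2) := by nlinarith
  calc _ ≤ (C * Real.exp (-Real.pi * s)) * Real.exp (Real.pi * (2 * M + 1/2 * (s + 1/2))) := by
        gcongr
        · exact h.hC s hs
        · rw [← mul_neg]; gcongr; linarith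
    _ = _ := by
        rw [mul_assoc, mul_assoc, ← Real.exp_add, ← Real.exp_add]; congr 2; ring

lemma expint (a : ℝ) {b : ℝ} (hb : 0 < b) (K : ℝ) :
    IntegrableOn (fun s => K * Real.exp (-b * s)) (Ioi a) :=
  (exp_neg_integrableOn_Ioi a hb).const_mul K

lemma Adm.integrable (h : Adm a c z C) {u : ℂ} (hu : -1/2 ≤ u.re) :
    IntegrableOn (fun s => c s * cexp (Real.pi * I * u * z s)) (Ioi a) := by
  refine Integrable.mono' (expint a (b := Real.pi/2) (by positivity)
    (C * Real.exp (Real.pi * (2 * |u.im| + 1/4)))) ?_ ?_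
  · simpa using h.aesm u (fun _ => 1) continuous_const
  · filter_upwards [ae_restrict_mem measurableSet_Ioi] with s hs
    exact h.bound hs hu le_rfl

lemma Adm.diff (h : Adm a c z C) : DifferentiableOn ℂ (W a c z) {u | -1/2 < u.re} := by
  intro u0 hu0
  have hop : IsOpen {u : ℂ | -1/2 < u.re} := isOpen_lt continuous_const Complex.continuous_re
  have hop2 : IsOpen {u : ℂ | |u.im| < |u0.im| + 1} := isOpen_lt (by fun_prop) continuous_const
  have hpi := Real.pi_gt_three
  have key := hasDerivAt_integral_of_dominated_loc_of_deriv_le (μ := volume.restrict (Ioi a))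
    (F := fun (u : ℂ) (s : ℝ) => c s * cexp (Real.pi * I * u * z s))
    (F' := fun (u : ℂ) (s : ℝ) => (Real.pi * I * z s) * (c s * cexp (Real.pi * I * u * z s)))
    (bound := fun s => (4 * Real.pi * (C * Real.exp (Real.pi * (2 * (|u0.im| + 1) + 1/4)))) *
      Real.exp (-(Real.pi/2 - 1) * s))
    (x₀ := u0) (s := {u : ℂ | -1/2 < u.re} ∩ {u : ℂ | |u.im| < |u0.im| + 1})
    ((hop.inter hop2).mem_nhds ⟨hu0, by simp⟩) ?_ (h.integrable hu0.le) ?_ ?_ ?_ ?_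
  · exact key.2.differentiableAt.differentiableWithinAt
  · exact Filter.Eventually.of_forall fun u => by simpa using h.aesm u (fun _ => 1) continuous_const
  · exact h.aesm u0 (fun w => Real.pi * I * w) (by fun_prop)
  · filter_upwards [ae_restrict_mem measurableSet_Ioi] with s hs u hu
    have hb := h.bound (M := |u0.im| + 1) hs hu.1.le hu.2.le
    have hs0 : 0 < s := lt_of_lt_of_le (by norm_num) (h.ha.trans (le_of_lt hs))
    have him := h.him s hs
    have him0 : 0 < (z s).im := lt_of_lt_of_le (by positivity) him
    have hn : ‖z s‖ ≤ 4 * Real.exp s := by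
      have h1 := Complex.norm_le_abs_re_add_abs_im (z s)
      have h2 := h.hre s hs
      have h3 := h.him' s hs
      rw [abs_of_pos him0] at h1
      have h4 := Real.add_one_le_exp s
      linarith
    rw [norm_mul]
    have hC0 := h.C_nonneg
    calc _ ≤ (Real.pi * (4 * Real.exp s)) * ((C * Real.exp (Real.pi * (2 * (|u0.im| + 1) + 1/4))) * Real.exp (-(Real.pi/2) * s)) := by
          gcongr
          · simp only [norm_mul, Complex.norm_real, Complex.norm_I, mul_one, Real.norm_of_nonneg Real.pi_pos.le]
            gcongr
      _ = (4 * Real.pi * (C * Real.exp (Real.pi * (2 * (|u0.im| + 1) + 1/4)))) * (Real.exp s * Real.exp (-(Real.pi/2) * s)) := by ring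
      _ = _ := by rw [← Real.exp_add]; congr 2; ring
  · exact expint a (by linarith) _
  · filter_upwards with s u hu
    have : HasDerivAt (fun u : ℂ => Real.pi * I * u * z s) (Real.pi * I * z s) u := by
      simpa using ((hasDerivAt_id u).const_mul (Real.pi * I : ℂ)).mul_const (z s)
    exact (this.cexp.const_mul (c s)).congr_deriv (by ring)

lemma Adm.decay (h : Adm a c z C) (k : ℕ) : ∃ D, ∀ u : ℂ, -1/4 ≤ u.re → |u.im| ≤ 1 →
    (u.re + 1/4) ^ k * ‖W a c z u‖ ≤ D := by
  have hpi := Real.pi_gt_three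
  refine ⟨∫ s in Ioi a, (C * k.factorial * k.factorial * Real.exp (Real.pi * (2 + 1/8))) * Real.exp (-(Real.pi * (3/4) - 1) * s), fun u hu hi => ?_⟩
  have hX : 0 ≤ u.re + 1/4 := by linarith
  rw [W, ← Real.norm_of_nonneg (pow_nonneg hX k), ← Complex.norm_real, ← norm_mul, ← integral_const_mul]
  apply norm_integral_le_of_norm_le (expint a (by linarith) _)
  filter_upwards [ae_restrict_mem measurableSet_Ioi] with s hs
  have hC0 := h.C_nonneg
  have hs0 : 0 < s := lt_of_lt_of_le (by norm_num) (h.ha.trans (le_of_lt hs))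
  have him := h.him s hs
  have him0 : 0 < (z s).im := lt_of_lt_of_le (by positivity) him
  have him' := h.him' s hs
  have hre := h.hre s hs
  have h1 : -(u.im * (z s).re) ≤ 2 := by
    have : |u.im * (z s).re| ≤ 1 * 2 := by
      rw [abs_mul]; exact mul_le_mul hi hre (abs_nonneg _) (by norm_num)
    have := neg_le_of_abs_le this
    linarith
  have h2 : -(u.re * (z s).im) ≤ 1/4 * (s + 1/2) - (u.re + 1/4) * (1/(2*s)) := by
    nlinarith [mul_le_mul_of_nonneg_left him hX]
  have hk1 : (u.re + 1/4) ^ k ≤ k.factorial * s ^ k * Real.exp (Real.pi * ((u.re + 1/4) * (1/(2*s)))) := by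
    have h3 := Real.pow_div_factorial_le_exp (Real.pi * ((u.re + 1/4) * (1/(2*s)))) (by positivity) k
    rw [div_le_iff₀ (by positivity)] at h3
    have h4 : (u.re + 1/4) ≤ s * (Real.pi * ((u.re + 1/4) * (1/(2*s)))) := by
      have : s * (Real.pi * ((u.re + 1/4) * (1/(2*s)))) = (Real.pi/2) * (u.re + 1/4) := by field_simp
      rw [this]; nlinarith
    calc _ ≤ (s * (Real.pi * ((u.re + 1/4) * (1/(2*s))))) ^ k := by gcongr
      _ = s ^ k * (Real.pi * ((u.re + 1/4) * (1/(2*s)))) ^ k := by rw [mul_pow]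
      _ ≤ s ^ k * (Real.exp (Real.pi * ((u.re + 1/4) * (1/(2*s)))) * k.factorial) := by gcongr
      _ = _ := by ring
  have hk2 : s ^ k ≤ k.factorial * Real.exp s := by
    have h3 := Real.pow_div_factorial_le_exp s hs0.le k
    rw [div_le_iff₀ (by positivity)] at h3
    linarith
  rw [norm_mul, norm_mul, norm_e, Complex.norm_real, Real.norm_of_nonneg (pow_nonneg hX k)]
  set E := (u.re + 1/4) * (1/(2*s)) with hE
  calc _ ≤ (k.factorial * (k.factorial * Real.exp s) * Real.exp (Real.pi * E)) *
        ((C * Real.exp (-Real.pi * s)) * Real.exp (Real.pi * (2 + 1/4 * (s + 1/2) - E))) := by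
        gcongr ?_ * (?_ * ?_)
        · refine hk1.trans ?_
          gcongr
        · exact h.hC s hs
        · rw [← mul_neg]; gcongr; linarith
    _ = (C * k.factorial * k.factorial) * (Real.exp s * Real.exp (Real.pi * E) * Real.exp (-Real.pi * s) *
        Real.exp (Real.pi * (2 + 1/4 * (s + 1/2) - E))) := by ring
    _ = _ := by
      rw [← Real.exp_add, ← Real.exp_add, ← Real.exp_add, mul_assoc (C * _ * _) _ _, ← Real.exp_add]
      congr 2; ring

lemma fourier_e (w : ℂ) (hw : 0 < w.im) (y : V) :
    𝓕 (fun x : V => cexp (Real.pi * I * ((‖x‖ ^ 2 : ℝ) : ℂ) * w)) y =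
      w⁻¹ ^ 4 * cexp (Real.pi * I * ((‖y‖ ^ 2 : ℝ) : ℂ) * (-1 / w)) := by
  have hw0 : w ≠ 0 := by rintro rfl; simp at hw
  have hpi : (Real.pi : ℂ) ≠ 0 := by exact_mod_cast Real.pi_ne_zero
  have h := fourier_gaussian_innerProductSpace (V := V) (b := -(Real.pi * I * w))
    (by simp; exact mul_pos Real.pi_pos hw) y
  have hf : (fun x : V => cexp (Real.pi * I * ((‖x‖ ^ 2 : ℝ) : ℂ) * w)) =
      fun v : V => cexp (-(-(Real.pi * I * w)) * ‖v‖ ^ 2) := by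
    ext x; congr 1; push_cast; ring
  rw [hf, h]
  · symm; congr 1
    · rw [finrank_euclideanSpace_fin, show ((8 : ℕ) : ℂ) / 2 = ((4 : ℕ) : ℂ) by norm_num, Complex.cpow_natCast]
      rw [show (Real.pi : ℂ) / -(Real.pi * I * w) = I * w⁻¹ by field_simp; simp]
      rw [mul_pow, Complex.I_pow_four, one_mul]
    · congr 1
      push_cast
      field_simp
      simp

lemma gauss_integrable (b : ℝ) (hb : 0 < b) :
    Integrable (fun x : V => Real.exp (-b * ‖x‖ ^ 2)) ∧ ∫ x : V, Real.exp (-b * ‖x‖ ^ 2) = (Real.pi / b) ^ 4 := by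
  have h1 := GaussianFourier.integral_rexp_neg_mul_sq_norm (V := V) hb
  rw [finrank_euclideanSpace_fin, show ((8 : ℕ) : ℝ) / 2 = ((4 : ℕ) : ℝ) by norm_num, Real.rpow_natCast] at h1
  refine ⟨?_, h1⟩
  by_contra hcon
  rw [integral_undef hcon] at h1
  have : 0 < (Real.pi / b) ^ 4 := by positivity
  linarith

lemma Adm.prodInt (h : Adm a c z C) (y : V) :
    Integrable (Function.uncurry fun (x : V) (s : ℝ) =>
      Real.fourierChar (-(inner ℝ x y)) • (c s * cexp (Real.pi * I * ((‖x‖ ^ 2 : ℝ) : ℂ) * z s)))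
      (volume.prod (volume.restrict (Ioi a))) := by
  have hpi := Real.pi_gt_three
  have hm : AEStronglyMeasurable (Function.uncurry fun (x : V) (s : ℝ) =>
      Real.fourierChar (-(inner ℝ x y)) • (c s * cexp (Real.pi * I * ((‖x‖ ^ 2 : ℝ) : ℂ) * z s)))
      (volume.prod (volume.restrict (Ioi a))) := by
    have : (volume : Measure V).prod (volume.restrict (Ioi a)) =
      (volume.prod volume).restrict (univ ×ˢ Ioi a) := by
        rw [← Measure.prod_restrict, Measure.restrict_univ]
    rw [this]
    apply ContinuousOn.aestronglyMeasurable _ (MeasurableSet.univ.prod measurableSet_Ioi)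
    have h1 : ContinuousOn (fun p : V × ℝ => c p.2) (univ ×ˢ Ioi a) :=
      h.hc.comp continuousOn_snd (fun p hp => hp.2)
    have h2 : ContinuousOn (fun p : V × ℝ => z p.2) (univ ×ˢ Ioi a) :=
      h.hz.comp continuousOn_snd (fun p hp => hp.2)
    have h3 : Continuous (fun p : V × ℝ => (Real.fourierChar (-(inner ℝ p.1 y)) : ℂ)) := by
      exact continuous_subtype_val.comp (Real.continuous_fourierChar.comp (by fun_prop))
    simp only [Function.uncurry_def, Circle.smul_def, smul_eq_mul]
    have h4 : ContinuousOn (fun p : V × ℝ => ((‖p.1‖ ^ 2 : ℝ) : ℂ)) (univ ×ˢ Ioi a) :=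
      (Complex.continuous_ofReal.comp (by fun_prop)).continuousOn
    exact h3.continuousOn.mul (h1.mul (((continuousOn_const.mul h4).mul h2).cexp))
  rw [integrable_prod_iff' hm]
  have hnorm : ∀ (x : V), ∀ s ∈ Ioi a, ‖Real.fourierChar (-(inner ℝ x y)) • (c s * cexp (Real.pi * I * ((‖x‖ ^ 2 : ℝ) : ℂ) * z s))‖
      = ‖c s‖ * Real.exp (-(Real.pi * (z s).im) * ‖x‖ ^ 2) := by
    intro x s hs
    rw [Circle.smul_def, smul_eq_mul, norm_mul, Circle.norm_coe, one_mul, norm_mul, norm_e]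
    congr 2
    simp only [ofReal_re, ofReal_im]; ring
  have himp : ∀ s ∈ Ioi a, 0 < (z s).im := fun s hs => by
    have hs0 : 0 < s := lt_of_lt_of_le (by norm_num) (h.ha.trans (le_of_lt hs))
    exact lt_of_lt_of_le (by positivity) (h.him s hs)
  have hgi : ∀ s ∈ Ioi a, ∫ x : V, ‖c s‖ * Real.exp (-(Real.pi * (z s).im) * ‖x‖ ^ 2) = ‖c s‖ * (1 / (z s).im) ^ 4 := by
    intro s hs
    have := himp s hs
    rw [integral_const_mul, (gauss_integrable _ (mul_pos Real.pi_pos (himp s hs))).2]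
    congr 2; field_simp
  constructor
  · filter_upwards [ae_restrict_mem measurableSet_Ioi] with s hs
    have h1 := ((gauss_integrable _ (mul_pos Real.pi_pos (himp s hs))).1).const_mul ‖c s‖
    refine Integrable.mono' h1 ?_ ?_
    · apply Continuous.aestronglyMeasurable
      simp only [Function.uncurry_def, Circle.smul_def, smul_eq_mul]
      exact (continuous_subtype_val.comp (Real.continuous_fourierChar.comp (by fun_prop))).mul (continuous_const.mul (Complex.continuous_exp.comp ((continuous_const.mul (Complex.continuous_ofReal.comp (by fun_prop))).mul continuous_const)))
    · exact Filter.Eventually.of_forall fun x => (hnorm x s hs).le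
  · refine Integrable.mono' (expint a (b := Real.pi - 1) (by linarith) (16 * 24 * C)) ?_ ?_
    · exact hm.norm.prod_swap.integral_prod_right'
    · filter_upwards [ae_restrict_mem measurableSet_Ioi] with s hs
      have hs0 : 0 < s := lt_of_lt_of_le (by norm_num) (h.ha.trans (le_of_lt hs))
      have e : ∀ x : V, ‖Function.uncurry (fun (x : V) (s : ℝ) =>
          Real.fourierChar (-(inner ℝ x y)) • (c s * cexp (Real.pi * I * ((‖x‖ ^ 2 : ℝ) : ℂ) * z s))) (x, s)‖ =
          ‖c s‖ * Real.exp (-(Real.pi * (z s).im) * ‖x‖ ^ 2) := fun x => hnorm x s hs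
      simp_rw [e]
      rw [hgi s hs, Real.norm_of_nonneg (by have := himp s hs; positivity)]
      have hC0 := h.C_nonneg
      have h2 : 1 / (z s).im ≤ 2 * s := by
        rw [div_le_iff₀ (himp s hs)]
        have := h.him s hs
        rw [div_le_iff₀ (by positivity)] at this
        linarith
      have h3 := Real.pow_div_factorial_le_exp s hs0.le 4
      rw [div_le_iff₀ (by positivity)] at h3
      have := himp s hs
      calc _ ≤ (C * Real.exp (-Real.pi * s)) * (2 * s) ^ 4 := by
            gcongr
            exact h.hC s hs
        _ = (16 * C * Real.exp (-Real.pi * s)) * s ^ 4 := by ring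
        _ ≤ (16 * C * Real.exp (-Real.pi * s)) * (Real.exp s * (Nat.factorial 4 : ℕ)) := by gcongr
        _ = (16 * 24 * C) * (Real.exp (-Real.pi * s) * Real.exp s) := by
          simp [Nat.factorial]; ring
        _ = _ := by rw [← Real.exp_add]; congr 2; ring

lemma Adm.fourier (h : Adm a c z C) (y : V) :
    𝓕 (fun x : V => W a c z ((‖x‖ ^ 2 : ℝ) : ℂ)) y =
      W a (fun s => c s * (z s)⁻¹ ^ 4) (fun s => -1 / z s) ((‖y‖ ^ 2 : ℝ) : ℂ) := by
  rw [Real.fourier_eq]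
  simp only [W]
  have : ∀ x : V, Real.fourierChar (-(inner ℝ x y)) • ∫ s in Ioi a, c s * cexp (Real.pi * I * ((‖x‖ ^ 2 : ℝ) : ℂ) * z s)
     = ∫ s in Ioi a, Real.fourierChar (-(inner ℝ x y)) • (c s * cexp (Real.pi * I * ((‖x‖ ^ 2 : ℝ) : ℂ) * z s)) := by
    intro x
    simp only [Circle.smul_def]
    rw [integral_smul]
  simp_rw [this]
  rw [integral_integral_swap (h.prodInt y)]
  apply setIntegral_congr_fun measurableSet_Ioi
  intro s hs
  have hs0 : 0 < s := lt_of_lt_of_le (by norm_num) (h.ha.trans (le_of_lt hs))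
  have himp : 0 < (z s).im := lt_of_lt_of_le (by positivity) (h.him s hs)
  have h1 := fourier_e (z s) himp y
  rw [Real.fourier_eq] at h1
  simp only
  rw [mul_assoc, ← h1, ← integral_const_mul]
  congr 1; ext x
  simp only [Circle.smul_def, smul_eq_mul]; ring
end SP

namespace SP
open Complex Set Filter Topology

lemma exists_prim (f : ℂ → ℂ) (hf : DifferentiableOn ℂ f {z | 0 < z.im}) :
    ∃ Q : ℂ → ℂ, ∀ z : ℂ, 0 < z.im → HasDerivAt Q (f z) z := by
  set c : ℂ → ℂ := fun w => I * (1 + w) / (1 - w) with hc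
  have hne : ∀ w ∈ Metric.ball (0:ℂ) 1, 1 - w ≠ 0 := by
    intro w hw h
    have : w = 1 := (sub_eq_zero.mp h).symm
    simp [this] at hw
  have hcd : ∀ w ∈ Metric.ball (0:ℂ) 1, HasDerivAt c (2 * I / (1 - w) ^ 2) w := by
    intro w hw
    have h1 := hne w hw
    have h2 : HasDerivAt (fun w : ℂ => I * (1 + w)) I w := by
      simpa using ((hasDerivAt_id w).const_add 1).const_mul I
    have h3 : HasDerivAt (fun w : ℂ => 1 - w) (-1) w := by
      simpa using ((hasDerivAt_id w).const_sub 1)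
    refine (h2.div h3 h1).congr_deriv ?_
    field_simp; ring
  have hcm : ∀ w ∈ Metric.ball (0:ℂ) 1, 0 < (c w).im := by
    intro w hw
    have h1 := hne w hw
    have hn : 0 < Complex.normSq (1 - w) := Complex.normSq_pos.mpr h1
    have hw' : Complex.normSq w < 1 := by
      rw [Complex.normSq_eq_norm_sq]
      have : ‖w‖ < 1 := by simpa using hw
      nlinarith [norm_nonneg w]
    have : (c w).im = (1 - Complex.normSq w) / Complex.normSq (1 - w) := by
      simp only [hc, Complex.div_im, Complex.normSq_apply]
      simp
      ring
    rw [this]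
    exact div_pos (by linarith) hn
  have hd : DifferentiableOn ℂ (fun w => f (c w) * (2 * I / (1 - w) ^ 2)) (Metric.ball (0:ℂ) 1) := by
    apply DifferentiableOn.mul
    · exact hf.comp (fun w hw => (hcd w hw).differentiableAt.differentiableWithinAt) hcm
    · intro w hw
      have := hne w hw
      have h5 : DifferentiableAt ℂ (fun w : ℂ => (1 - w) ^ 2) w := by fun_prop
      exact ((differentiableAt_const _).div h5 (pow_ne_zero 2 this)).differentiableWithinAt
  obtain ⟨P, hP⟩ := hd.isExactOn_ball
  refine ⟨fun z => P ((z - I) / (z + I)), fun z hz => ?_⟩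
  have hzI : z + I ≠ 0 := by
    intro h
    have := congrArg Complex.im h
    simp at this; linarith
  have hb : (z - I) / (z + I) ∈ Metric.ball (0:ℂ) 1 := by
    rw [mem_ball_zero_iff, norm_div, div_lt_one (norm_pos_iff.mpr hzI)]
    rw [← sq_lt_sq₀ (norm_nonneg _) (norm_nonneg _), ← Complex.normSq_eq_norm_sq, ← Complex.normSq_eq_norm_sq]
    simp [Complex.normSq_apply]; nlinarith
  have h1 : HasDerivAt (fun z : ℂ => (z - I) / (z + I)) (2 * I / (z + I) ^ 2) z := by
    refine (((hasDerivAt_id z).sub_const I).div ((hasDerivAt_id z).add_const I) hzI).congr_deriv ?_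
    simp only [id]; field_simp; ring
  have h2 := (hP _ hb).comp z h1
  refine h2.congr_deriv ?_
  have h3 : 1 - (z - I) / (z + I) = 2 * I / (z + I) := by field_simp; ring
  have h4 : c ((z - I) / (z + I)) = z := by
    have : (2 * I : ℂ) ≠ 0 := by simp
    simp only [hc]; rw [h3]; field_simp; ring
  simp only []
  rw [h4, h3]
  have : (I : ℂ) ≠ 0 := I_ne_zero
  field_simp

lemma ray (G Q : ℂ → ℂ) (hQ : ∀ z : ℂ, 0 < z.im → HasDerivAt Q (G z) z) (hGc : ContinuousOn G {z | 0 < z.im})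
    (y C b : ℝ) (hb : 0 < b)
    (hy : 0 < y) (hG : ∀ z : ℂ, y ≤ z.im → |z.re| ≤ 1 → ‖G z‖ ≤ C * Real.exp (-b * z.im)) :
    ∃ L : ℂ, ∀ x t : ℝ, |x| ≤ 1 → y ≤ t → IntegrableOn (fun s : ℝ => G (x + s * I)) (Ioi t) ∧
      Tendsto (fun s : ℝ => Q (x + s * I)) atTop (𝓝 L) ∧
      ∫ s in Ioi t, G (x + s * I) * I = L - Q (x + t * I) := by
  have hd : ∀ x s : ℝ, y ≤ s → HasDerivAt (fun s : ℝ => Q (x + s * I)) (G (x + s * I) * I) s := by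
    intro x s hs
    have h1 : HasDerivAt (fun s : ℝ => ((x : ℂ) + s * I)) I s := by
      simpa using ((Complex.ofRealCLM.hasDerivAt (x := s)).mul_const I).const_add (x : ℂ)
    exact (hQ _ (by simp; linarith)).comp s h1
  have hint : ∀ x t : ℝ, |x| ≤ 1 → y ≤ t → IntegrableOn (fun s : ℝ => G (x + s * I)) (Ioi t) := by
    intro x t hx ht
    refine Integrable.mono' (expint t hb C) ?_ ?_
    · apply ContinuousOn.aestronglyMeasurable _ measurableSet_Ioi
      refine hGc.comp (by fun_prop) ?_
      intro s hs
      have : t < s := hs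
      simp; linarith
    · filter_upwards [ae_restrict_mem measurableSet_Ioi] with s hs
      have : t < s := hs
      simpa using hG (x + s * I) (by simp; linarith) (by simpa using hx)
  have hlim : ∀ x : ℝ, |x| ≤ 1 → ∃ L, Tendsto (fun s : ℝ => Q (x + s * I)) atTop (𝓝 L) := by
    intro x hx
    exact ⟨_, tendsto_limUnder_of_hasDerivAt_of_integrableOn_Ioi (fun s hs => hd x s (le_of_lt hs))
      ((hint x y hx le_rfl).mul_const I)⟩
  obtain ⟨L, hL⟩ := hlim 0 (by simp)
  have hall : ∀ x : ℝ, |x| ≤ 1 → Tendsto (fun s : ℝ => Q (x + s * I)) atTop (𝓝 L) := by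
    intro x hx
    have : Tendsto (fun s : ℝ => Q (x + s * I) - Q (((0:ℝ):ℂ) + s * I)) atTop (𝓝 0) := by
      have hz : Tendsto (fun s : ℝ => C * Real.exp (-b * s) * |x|) atTop (𝓝 0) := by
        have h0 : Tendsto (fun s : ℝ => -b * s) atTop atBot := tendsto_id.const_mul_atTop_of_neg (by linarith)
        simpa using ((Real.tendsto_exp_atBot.comp h0).const_mul C).mul_const |x|
      refine squeeze_zero_norm' ?_ hz
      filter_upwards [eventually_ge_atTop y] with s hs
      have hcv : Convex ℝ {z : ℂ | z.im = s ∧ |z.re| ≤ 1} := by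
        intro z hz w hw α β hα hβ hαβ
        constructor
        · simp [hz.1, hw.1]; rw [← add_mul, hαβ, one_mul]
        · simp only [add_re, real_smul, re_ofReal_mul]
          calc _ ≤ |α * z.re| + |β * w.re| := abs_add_le _ _
            _ ≤ α * 1 + β * 1 := by
              rw [abs_mul, abs_mul, abs_of_nonneg hα, abs_of_nonneg hβ]
              gcongr
              · exact hz.2
              · exact hw.2
            _ = 1 := by linarith
      have := hcv.norm_image_sub_le_of_norm_hasDerivWithin_le (f := Q) (f' := G) (C := C * Real.exp (-b * s))
        (x := (((0:ℝ):ℂ) + s * I)) (y := (x + s * I))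
        (fun z hz => (hQ z (by rw [hz.1]; linarith)).hasDerivWithinAt)
        (fun z hz => by have := hG z (by rw [hz.1]; linarith) hz.2; rwa [hz.1] at this)
        (by simp) (by simpa using hx)
      refine this.trans (le_of_eq ?_)
      simp
    simpa using this.add hL
  refine ⟨L, fun x t hx ht => ⟨hint x t hx ht, hall x hx, ?_⟩⟩
  exact integral_Ioi_of_hasDerivAt_of_tendsto' (fun s hs => hd x s (ht.trans hs))
    ((hint x t hx ht).mul_const I) (hall x hx)

lemma axis (G Q : ℂ → ℂ) (hQ : ∀ z : ℂ, 0 < z.im → HasDerivAt Q (G z) z) (L0 L1 : ℂ)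
    (hi : IntegrableOn (fun t : ℝ => G (t * I)) (Ioi 0))
    (h0 : Tendsto (fun t : ℝ => Q (t * I)) (𝓝[>] 0) (𝓝 L0))
    (h1 : Tendsto (fun t : ℝ => Q (t * I)) atTop (𝓝 L1)) :
    ∫ t in Ioi (0:ℝ), G (t * I) * I = L1 - L0 := by
  classical
  set q : ℝ → ℂ := fun t => if 0 < t then Q (t * I) else L0 with hq
  have e : L0 = q 0 := by simp [hq]
  conv_rhs => rw [e]
  refine integral_Ioi_of_hasDerivAt_of_tendsto ?_ ?_ (hi.mul_const I) ?_
  · rw [← continuousWithinAt_Ioi_iff_Ici]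
    unfold ContinuousWithinAt
    rw [← e]
    refine h0.congr' ?_
    filter_upwards [self_mem_nhdsWithin] with t ht
    have : 0 < t := ht
    simp [hq, this]
  · intro t ht
    have ht' : 0 < t := ht
    have h1 : HasDerivAt (fun s : ℝ => ((s : ℂ) * I)) I t := by
      simpa using ((Complex.ofRealCLM.hasDerivAt (x := t)).mul_const I)
    have h2 := (hQ (t * I) (by simpa using ht')).comp t h1
    refine h2.congr_of_eventuallyEq ?_
    filter_upwards [lt_mem_nhds ht'] with s hs
    simp [hq, hs]
  · refine h1.congr' ?_
    filter_upwards [eventually_gt_atTop 0] with t ht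
    simp [hq, ht]
end SP

namespace SP
open Complex Set Filter Topology

structure Core (ε : ℂ) (k f : ℂ → ℂ) : Prop where
  eps : ε = 1 ∨ ε = -1
  kd : DifferentiableOn ℂ k {z | 0 < z.im}
  fd : DifferentiableOn ℂ f {z | 0 < z.im}
  per : ∀ z : ℂ, 0 < z.im → k (z + 1) = ε * k z
  inv : ∀ z : ℂ, 0 < z.im → f z = ε * z ^ 2 * k (-1 / z)
  dif : ∀ z : ℂ, 0 < z.im → f (z + 1) + f (z - 1) - 2 * f z = 2 * k z
  kb : ∃ C : ℝ, ∀ z : ℂ, 1/2 ≤ z.im → ‖k z‖ ≤ C * Real.exp (-Real.pi * z.im)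
  fb : ∃ C : ℝ, ∀ z : ℂ, 1 ≤ z.im → |z.re| ≤ 1 → ‖f z‖ ≤ C * (1 + z.im ^ 2) * Real.exp (2 * Real.pi * z.im)

noncomputable def cR (k : ℂ → ℂ) (x : ℝ) (s : ℝ) : ℂ := k (x + s * I) * ((x + s * I : ℂ)⁻¹) ^ 4
noncomputable def zR (x σ : ℝ) (s : ℝ) : ℂ := σ - 1 / (x + s * I)

lemma im_neg_inv (w : ℂ) : (-1 / w).im = w.im / (w.re ^ 2 + w.im ^ 2) := by
  rw [div_im]; simp [normSq_apply]; ring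

lemma im_neg_inv_pos (w : ℂ) (hw : 0 < w.im) : 0 < (-1 / w).im := by
  rw [im_neg_inv]; positivity

lemma admR (k : ℂ → ℂ) (hk : DifferentiableOn ℂ k {z | 0 < z.im}) (C : ℝ)
    (hC : ∀ z : ℂ, 1/2 ≤ z.im → ‖k z‖ ≤ C * Real.exp (-Real.pi * z.im)) (x σ a : ℝ) (hx : |x| ≤ 1/2)
    (hσ : |σ| ≤ 1) (ha : 1/2 ≤ a) (hs : ∀ s, a ≤ s → s ≤ s ^ 2 + x ^ 2) :
    Adm a (cR k x) (zR x σ) (C * 16) := by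
  have hne : ∀ s ∈ Ioi a, (x + s * I : ℂ) ≠ 0 := by
    intro s hs h
    have hs : a < s := hs
    have := congrArg Complex.im h
    simp at this; linarith
  have hzim : ∀ s ∈ Ioi a, (zR x σ s).im = s / (s ^ 2 + x ^ 2) := by
    intro s hs
    simp [zR, normSq_apply]; ring
  have hcz : ContinuousOn (fun s : ℝ => (x + s * I : ℂ)) (Ioi a) := by fun_prop
  have hw : ∀ s ∈ Ioi a, (1:ℝ)/2 ≤ ‖(x + s * I : ℂ)‖ := by
    intro s hs
    have hs : a < s := hs
    have := Complex.abs_im_le_norm (x + s * I)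
    simp at this
    rw [abs_of_pos (by linarith)] at this
    linarith
  refine ⟨ha, ?_, ?_, ?_, ?_, ?_, ?_⟩
  · refine ContinuousOn.mul (hk.continuousOn.comp hcz ?_) ((hcz.inv₀ hne).pow 4)
    intro s hs
    have hs : a < s := hs
    simp; linarith
  · exact continuousOn_const.sub (continuousOn_const.div hcz hne)
  · intro s hs
    have hs' : a < s := hs
    rw [cR, norm_mul, norm_pow, norm_inv]
    have h1 := hC (x + s * I) (by simp; linarith)
    simp only [add_im, ofReal_im, mul_im, ofReal_re, I_im, I_re] at h1
    simp only [mul_one, mul_zero, zero_add, add_zero] at h1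
    have h2 : ‖(x + s * I : ℂ)‖⁻¹ ≤ 2 := by
      rw [inv_le_comm₀ (by linarith [hw s hs]) (by norm_num)]
      linarith [hw s hs]
    have h3 : ‖(x + s * I : ℂ)‖⁻¹ ^ 4 ≤ 16 := by
      calc _ ≤ (2:ℝ) ^ 4 := by gcongr
        _ = 16 := by norm_num
    calc _ ≤ (C * Real.exp (-Real.pi * s)) * 16 := by
          apply mul_le_mul h1 h3 (by positivity) ((norm_nonneg _).trans h1)
      _ = _ := by ring
  · intro s hs
    have hs' : a < s := hs
    have hs0 : 0 < s := by linarith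
    rw [hzim s hs, div_le_div_iff₀ (by positivity) (by positivity)]
    have := abs_le.mp hx
    nlinarith
  · intro s hs'
    have hs'' : a < s := hs'
    have hs0 : 0 < s := by linarith
    rw [hzim s hs', div_le_iff₀ (by positivity)]
    nlinarith [hs s hs''.le]
  · intro s hs'
    have hs'' : a < s := hs'
    have hs0 : 0 < s := by linarith
    have e : (zR x σ s).re = σ - x / (s ^ 2 + x ^ 2) := by
      simp [zR, normSq_apply]; ring
    rw [e]
    have : |x / (s ^ 2 + x ^ 2)| ≤ 1 := by
      rw [abs_div, abs_of_pos (by positivity : 0 < s ^ 2 + x ^ 2), div_le_one (by positivity)]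
      linarith [hs s hs''.le]
    have := abs_sub σ (x / (s ^ 2 + x ^ 2))
    linarith

lemma admD (k : ℂ → ℂ) (hk : DifferentiableOn ℂ k {z | 0 < z.im}) (C : ℝ)
    (hC : ∀ z : ℂ, 1/2 ≤ z.im → ‖k z‖ ≤ C * Real.exp (-Real.pi * z.im)) :
    Adm 1 (fun s => k (s * I)) (fun s => s * I) C := by
  refine ⟨by norm_num, ?_, by fun_prop, ?_, ?_, ?_, ?_⟩
  · refine hk.continuousOn.comp (by fun_prop) ?_
    intro s hs
    have hs : 1 < s := hs
    simp; linarith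
  · intro s hs
    have hs : 1 < s := hs
    simpa using hC (s * I) (by simp; linarith)
  · intro s hs
    have hs : 1 < s := hs
    simp
    rw [← mul_inv, inv_le_comm₀ (by linarith) (by linarith), inv_eq_one_div, div_le_iff₀ (by linarith)]
    nlinarith
  · intro s hs; simp
  · intro s hs; simp

/-- the radial profile -/
noncomputable def hC (ε : ℂ) (k : ℂ → ℂ) (u : ℂ) : ℂ :=
  2 * I * (ε * W 1 (cR k 0) (zR 0 0) u + W 1 (fun s => k (s * I)) (fun s => s * I) u)
    - I * ε * (W (1/2) (cR k (-1/2)) (zR (-1/2) (-1)) u + W (1/2) (cR k (1/2)) (zR (1/2) 1) u)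

variable {ε : ℂ} {k f : ℂ → ℂ}

lemma Core.adms (h : Core ε k f) : ∃ C, Adm 1 (cR k 0) (zR 0 0) C ∧
    Adm 1 (fun s => k (s * I)) (fun s => s * I) C ∧
    Adm (1/2) (cR k (-1/2)) (zR (-1/2) (-1)) C ∧ Adm (1/2) (cR k (1/2)) (zR (1/2) 1) C := by
  obtain ⟨C, hC⟩ := h.kb
  have hC0 : 0 ≤ C := by
    have := (norm_nonneg _).trans (hC I (by norm_num))
    exact nonneg_of_mul_nonneg_left this (Real.exp_pos _)
  refine ⟨C * 16, admR k h.kd C hC 0 0 1 (by norm_num) (by norm_num) (by norm_num) ?_,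
    admD k h.kd (C * 16) (fun z hz => (hC z hz).trans ?_),
    admR k h.kd C hC (-1/2) (-1) (1/2) (by norm_num [abs_le]) (by norm_num) (by norm_num) ?_,
    admR k h.kd C hC (1/2) 1 (1/2) (by norm_num [abs_le]) (by norm_num) (by norm_num) ?_⟩
  · intro s hs; nlinarith
  · gcongr; linarith
  · intro s hs; nlinarith [sq_nonneg (s - 1/2)]
  · intro s hs; nlinarith [sq_nonneg (s - 1/2)]

lemma Core.hdiff (h : Core ε k f) : DifferentiableOn ℂ (hC ε k) {u | -1/2 < u.re} := by
  obtain ⟨C, h1, h2, h3, h4⟩ := h.adms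
  have h1 := h1.diff
  have h2 := h2.diff
  have h3 := h3.diff
  have h4 := h4.diff
  unfold hC
  exact (((h1.const_mul ε).add h2).const_mul _).sub ((h3.add h4).const_mul _)

lemma Core.hdecay (h : Core ε k f) (n : ℕ) : ∃ C, ∀ u : ℂ, -1/4 ≤ u.re → |u.im| ≤ 1 →
    (u.re + 1/4) ^ n * ‖hC ε k u‖ ≤ C := by
  obtain ⟨C, h1, h2, h3, h4⟩ := h.adms
  obtain ⟨D1, h1⟩ := h1.decay n
  obtain ⟨D2, h2⟩ := h2.decay n
  obtain ⟨D3, h3⟩ := h3.decay n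
  obtain ⟨D4, h4⟩ := h4.decay n
  have he : ‖ε‖ = 1 := by rcases h.eps with rfl | rfl <;> simp
  refine ⟨2 * (D1 + D2) + (D3 + D4), fun u hu hi => ?_⟩
  have hX : 0 ≤ (u.re + 1/4) ^ n := pow_nonneg (by linarith) n
  have := h1 u hu hi
  have := h2 u hu hi
  have := h3 u hu hi
  have := h4 u hu hi
  have hn : ‖hC ε k u‖ ≤ 2 * (‖W 1 (cR k 0) (zR 0 0) u‖ + ‖W 1 (fun s => k (s * I)) (fun s => s * I) u‖) +
    (‖W (1/2) (cR k (-1/2)) (zR (-1/2) (-1)) u‖ + ‖W (1/2) (cR k (1/2)) (zR (1/2) 1) u‖) := by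
    unfold hC
    refine (norm_sub_le _ _).trans ?_
    gcongr
    · rw [norm_mul]
      simp only [norm_mul, norm_I, mul_one, Complex.norm_ofNat]
      gcongr
      refine (norm_add_le _ _).trans ?_
      rw [norm_mul, he, one_mul]
    · rw [norm_mul, norm_mul, he]
      simp only [norm_I, mul_one, one_mul]
      exact norm_add_le _ _
  calc _ ≤ _ := mul_le_mul_of_nonneg_left hn hX
    _ ≤ _ := by nlinarith

lemma Core.W_int (h : Adm a c z C) : Integrable (fun x : V => W a c z ((‖x‖ ^ 2 : ℝ) : ℂ)) := by
  obtain ⟨S, hS⟩ := exists_schwartz (W a c z) h.diff h.decay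
  have := S.integrable (μ := volume)
  refine this.congr (Eventually.of_forall hS)

lemma W_congr {a : ℝ} {c z c' z' : ℝ → ℂ} (u : ℂ) (hc : ∀ s, a < s → c s = c' s) (hz : ∀ s, a < s → z s = z' s) :
    W a c z u = W a c' z' u := by
  unfold W
  apply setIntegral_congr_fun measurableSet_Ioi
  intro s hs
  simp only [hc s hs, hz s hs]

lemma W_const_mul {a : ℝ} {c z : ℝ → ℂ} (u e : ℂ) : W a (fun s => e * c s) z u = e * W a c z u := by
  unfold W
  simp_rw [mul_assoc]
  rw [integral_const_mul]

lemma Core.four (h : Core ε k f) (y : V) :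
    𝓕 (fun x : V => hC ε k ((‖x‖ ^ 2 : ℝ) : ℂ)) y = ε * hC ε k ((‖y‖ ^ 2 : ℝ) : ℂ) := by
  obtain ⟨C, h1, h2, h3, h4⟩ := h.adms
  have he : ε * ε = 1 := by rcases h.eps with rfl | rfl <;> simp
  have i1 := Core.W_int h1
  have i2 := Core.W_int h2
  have i3 := Core.W_int h3
  have i4 := Core.W_int h4
  have f1 := h1.fourier y
  have f2 := h2.fourier y
  have f3 := h3.fourier y
  have f4 := h4.fourier y
  set u : ℂ := ((‖y‖ ^ 2 : ℝ) : ℂ)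
  have g1 : W 1 (fun s => cR k 0 s * (zR 0 0 s)⁻¹ ^ 4) (fun s => -1 / zR 0 0 s) u =
      W 1 (fun s => k (s * I)) (fun s => s * I) u := by
    apply W_congr
    · intro s hs
      have hs0 : (s : ℂ) ≠ 0 := by exact_mod_cast (by linarith : s ≠ 0)
      simp only [cR, zR]; simp; field_simp; simp
    · intro s hs
      have hs0 : (s : ℂ) ≠ 0 := by exact_mod_cast (by linarith : s ≠ 0)
      simp only [zR]; simp
      rw [div_eq_iff (by simp [hs0])]; field_simp; simp
  have g2 : W 1 (fun s : ℝ => k (s * I) * (s * I : ℂ)⁻¹ ^ 4) (fun s : ℝ => -1 / (s * I : ℂ)) u =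
      W 1 (cR k 0) (zR 0 0) u := by
    apply W_congr
    · intro s hs; simp [cR]
    · intro s hs; simp only [zR]; simp [neg_div]
  have hwz : ∀ x : ℝ, ∀ s : ℝ, 1/2 < s → ((x : ℂ) + s * I ≠ 0) := by
    intro x s hs h
    have := congrArg Complex.im h
    simp at this; linarith
  have key : ∀ s : ℝ, ((1/2 : ℝ) : ℂ) + s * I = ((-1/2 : ℝ) : ℂ) + s * I + 1 := by
    intro s; push_cast; ring
  have g3 : W (1/2) (fun s => cR k (-1/2) s * (zR (-1/2) (-1) s)⁻¹ ^ 4) (fun s => -1 / zR (-1/2) (-1) s) u =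
      ε * W (1/2) (cR k (1/2)) (zR (1/2) 1) u := by
    rw [← W_const_mul]
    apply W_congr
    · intro s hs
      have hp := h.per (((-1/2 : ℝ) : ℂ) + s * I) (by simp; linarith)
      have n1 := hwz (-1/2) s hs
      have n2 := hwz (1/2) s hs
      simp only [cR, zR]
      rw [key, hp, ← mul_assoc, ← mul_assoc, he]
      rw [key] at n2
      set w : ℂ := ((-1/2 : ℝ) : ℂ) + s * I
      have : ((-1 : ℝ) : ℂ) - 1 / w = - ((w + 1) / w) := by push_cast; field_simp; ring
      rw [this]; field_simp
    · intro s hs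
      have n1 := hwz (-1/2) s hs
      have n2 := hwz (1/2) s hs
      simp only [zR]
      rw [key] at n2 ⊢
      set w : ℂ := ((-1/2 : ℝ) : ℂ) + s * I
      have : ((-1 : ℝ) : ℂ) - 1 / w = - ((w + 1) / w) := by push_cast; field_simp; ring
      rw [this]; push_cast; field_simp; ring
  have g4 : W (1/2) (fun s => cR k (1/2) s * (zR (1/2) 1 s)⁻¹ ^ 4) (fun s => -1 / zR (1/2) 1 s) u =
      ε * W (1/2) (cR k (-1/2)) (zR (-1/2) (-1)) u := by
    rw [← W_const_mul]
    apply W_congr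
    · intro s hs
      have hp := h.per (((-1/2 : ℝ) : ℂ) + s * I) (by simp; linarith)
      have n1 := hwz (-1/2) s hs
      have n2 := hwz (1/2) s hs
      simp only [cR, zR]
      rw [key] at n2 ⊢
      rw [hp]
      set w : ℂ := ((-1/2 : ℝ) : ℂ) + s * I
      have : ((1 : ℝ) : ℂ) - 1 / (w + 1) = w / (w + 1) := by push_cast; field_simp; ring
      rw [this]; field_simp
    · intro s hs
      have n1 := hwz (-1/2) s hs
      have n2 := hwz (1/2) s hs
      simp only [zR]
      rw [key] at n2 ⊢
      set w : ℂ := ((-1/2 : ℝ) : ℂ) + s * I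
      have : ((1 : ℝ) : ℂ) - 1 / (w + 1) = w / (w + 1) := by push_cast; field_simp; ring
      rw [this]; push_cast; field_simp; ring
  rw [g1] at f1
  rw [g2] at f2
  rw [g3] at f3
  rw [g4] at f4
  rw [Real.fourier_eq] at f1 f2 f3 f4 ⊢
  have j : ∀ F : V → ℂ, Integrable F → Integrable (fun x : V => Real.fourierChar (-(inner ℝ x y)) • F x) :=
    fun F hF => (Real.fourierIntegral_convergent_iff y).mpr hF
  have e : ∀ x : V, Real.fourierChar (-(inner ℝ x y)) • hC ε k ((‖x‖ ^ 2 : ℝ) : ℂ) =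
    2 * I * (ε * (Real.fourierChar (-(inner ℝ x y)) • W 1 (cR k 0) (zR 0 0) ((‖x‖ ^ 2 : ℝ) : ℂ)) +
       Real.fourierChar (-(inner ℝ x y)) • W 1 (fun s => k (s * I)) (fun s => s * I) ((‖x‖ ^ 2 : ℝ) : ℂ))
    - I * ε * (Real.fourierChar (-(inner ℝ x y)) • W (1/2) (cR k (-1/2)) (zR (-1/2) (-1)) ((‖x‖ ^ 2 : ℝ) : ℂ) +
      Real.fourierChar (-(inner ℝ x y)) • W (1/2) (cR k (1/2)) (zR (1/2) 1) ((‖x‖ ^ 2 : ℝ) : ℂ)) := by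
    intro x; simp only [hC, Circle.smul_def, smul_eq_mul]; ring
  simp_rw [e]
  rw [integral_sub, integral_const_mul, integral_const_mul, integral_add, integral_add, integral_const_mul, f1, f2, f3, f4, hC]
  · linear_combination (- 2 * I * W 1 (cR k 0) (zR 0 0) u) * he
  · exact j _ i3
  · exact j _ i4
  · exact (j _ i1).const_mul _
  · exact j _ i2
  · exact (((j _ i1).const_mul _).add (j _ i2)).const_mul _
  · exact ((j _ i3).add (j _ i4)).const_mul _
end SP

namespace SP
open Complex Set Filter Topology
variable {ε : ℂ} {k f : ℂ → ℂ}

lemma Core.main (h : Core ε k f) (u : ℝ) (hu : 2 < u) :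
    IntegrableOn (fun t : ℝ => f (t * I) * cexp (-(Real.pi * u * t : ℝ))) (Ioi 0) ∧
    hC ε k u = -4 * (Real.sin (Real.pi * u / 2) ^ 2 : ℝ) * I *
      ∫ t in Ioi (0:ℝ), f (t * I) * cexp (-(Real.pi * u * t : ℝ)) := by
  have hpi := Real.pi_gt_three
  have he : ε * ε = 1 := by rcases h.eps with rfl | rfl <;> simp
  have hen : ‖ε‖ = 1 := by rcases h.eps with rfl | rfl <;> simp
  have hopen : IsOpen {z : ℂ | 0 < z.im} := isOpen_lt continuous_const Complex.continuous_im
  set F : ℂ → ℂ := fun z => f z * cexp (Real.pi * I * u * z) with hF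
  have hFd : DifferentiableOn ℂ F {z | 0 < z.im} := h.fd.mul (by fun_prop)
  obtain ⟨Q, hQ⟩ := exists_prim F hFd
  -- infinity side
  obtain ⟨C, hCb⟩ := h.fb
  have hC0 : 0 ≤ C := by
    have := (norm_nonneg _).trans (hCb I (by norm_num) (by norm_num))
    have := nonneg_of_mul_nonneg_left this (Real.exp_pos _)
    exact nonneg_of_mul_nonneg_left this (by norm_num)
  set δ : ℝ := Real.pi * (u - 2) / 2 with hδ
  have hδ0 : 0 < δ := by have : 0 < u - 2 := by linarith
                         positivity
  have hFb : ∀ z : ℂ, 1 ≤ z.im → |z.re| ≤ 1 → ‖F z‖ ≤ (C * (1 + 2 / δ ^ 2)) * Real.exp (-δ * z.im) := by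
    intro z hz hz'
    rw [hF, norm_mul, norm_e]
    have h1 : 1 + z.im ^ 2 ≤ (1 + 2 / δ ^ 2) * Real.exp (δ * z.im) := by
      have h2 := Real.pow_div_factorial_le_exp (δ * z.im) (by positivity) 2
      have h3 : 1 ≤ Real.exp (δ * z.im) := Real.one_le_exp (by positivity)
      have h4 : z.im ^ 2 = 2 / δ ^ 2 * ((δ * z.im) ^ 2 / (Nat.factorial 2 : ℕ)) := by
        simp [Nat.factorial]; field_simp
      rw [h4]
      have : 2 / δ ^ 2 * ((δ * z.im) ^ 2 / (Nat.factorial 2 : ℕ)) ≤ 2 / δ ^ 2 * Real.exp (δ * z.im) := by gcongr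
      linarith
    calc _ ≤ (C * ((1 + 2 / δ ^ 2) * Real.exp (δ * z.im)) * Real.exp (2 * Real.pi * z.im)) *
          Real.exp (-(Real.pi * (u * z.im))) := by
          gcongr
          · refine (hCb z hz hz').trans ?_
            gcongr
          · apply le_of_eq; simp
      _ = (C * (1 + 2 / δ ^ 2)) * (Real.exp (δ * z.im) * Real.exp (2 * Real.pi * z.im) * Real.exp (-(Real.pi * (u * z.im)))) := by ring
      _ = _ := by
        rw [← Real.exp_add, ← Real.exp_add]; congr 2; rw [hδ]; ring
  obtain ⟨L1, hL1⟩ := ray F Q hQ hFd.continuousOn 1 _ δ hδ0 one_pos hFb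
  -- cusp side
  set G : ℂ → ℂ := fun w => ε * (k w * (w⁻¹) ^ 4 * cexp (Real.pi * I * u * (-1 / w))) with hG
  have hne : ∀ w : ℂ, 0 < w.im → w ≠ 0 := by rintro w hw rfl; simp at hw
  have hGF : ∀ w : ℂ, 0 < w.im → F (-1 / w) * (w ^ 2)⁻¹ = G w := by
    intro w hw
    have hw0 := hne w hw
    simp only [hF, hG]
    rw [h.inv _ (im_neg_inv_pos w hw)]
    have : -1 / (-1 / w) = w := by field_simp
    rw [this]; field_simp
  have hP : ∀ w : ℂ, 0 < w.im → HasDerivAt (fun w => Q (-1 / w)) (G w) w := by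
    intro w hw
    have hw0 := hne w hw
    rw [← hGF w hw]
    have h1 : HasDerivAt (fun w : ℂ => -1 / w) ((w ^ 2)⁻¹) w := by
      have := (hasDerivAt_inv hw0).const_mul (-1)
      simpa [div_eq_mul_inv] using this
    exact (hQ _ (im_neg_inv_pos w hw)).comp w h1
  have hGd : ContinuousOn G {z | 0 < z.im} := by
    intro w hw
    have hw0 := hne w hw
    have h1 := (h.kd.continuousOn) w hw
    have h2 : ContinuousAt (fun w : ℂ => w⁻¹ ^ 4) w := (continuousAt_inv₀ hw0).pow 4
    have h3 : ContinuousAt (fun w : ℂ => cexp (Real.pi * I * u * (-1 / w))) w :=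
      (continuousAt_const.mul (continuousAt_const.div continuousAt_id hw0)).cexp
    exact continuousWithinAt_const.mul ((h1.mul h2.continuousWithinAt).mul h3.continuousWithinAt)
  obtain ⟨K, hK⟩ := h.kb
  have hGb : ∀ z : ℂ, 1/2 ≤ z.im → |z.re| ≤ 1 → ‖G z‖ ≤ (K * 16) * Real.exp (-Real.pi * z.im) := by
    intro w hw hw'
    have hw0 : 0 < w.im := by linarith
    rw [hG, norm_mul, hen, one_mul, norm_mul, norm_mul, norm_e, norm_pow, norm_inv]
    have h1 := hK w hw
    have h2 : ‖w‖⁻¹ ≤ 2 := by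
      have := Complex.abs_im_le_norm w
      rw [abs_of_pos hw0] at this
      rw [inv_le_comm₀ (by linarith) (by norm_num)]
      linarith
    have h3 : ‖w‖⁻¹ ^ 4 ≤ 16 := by
      calc _ ≤ (2:ℝ) ^ 4 := by gcongr
        _ = 16 := by norm_num
    have h4 : Real.exp (-(Real.pi * ((u:ℂ).re * (-1 / w).im + (u:ℂ).im * (-1 / w).re))) ≤ 1 := by
      rw [Real.exp_le_one_iff]
      have := im_neg_inv_pos w hw0
      simp only [ofReal_re, ofReal_im, zero_mul, add_zero, Left.neg_nonpos_iff]
      positivity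
    have hK0 : 0 ≤ K * Real.exp (-Real.pi * w.im) := (norm_nonneg _).trans h1
    calc _ ≤ (K * Real.exp (-Real.pi * w.im)) * 16 * 1 := by
          gcongr
      _ = _ := by ring
  obtain ⟨L0, hL0⟩ := ray G (fun w => Q (-1 / w)) hP hGd (1/2) _ Real.pi Real.pi_pos (by norm_num) hGb
  -- axis
  have hFint : IntegrableOn (fun t : ℝ => F (t * I)) (Ioi 0) := by
    rw [← Ioc_union_Ioi_eq_Ioi (zero_le_one (α := ℝ))]
    refine IntegrableOn.union ?_ (by simpa using (hL1 0 1 (by norm_num) le_rfl).1)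
    refine IntegrableOn.of_bound (by simp) ?_ (K * Real.exp 0) ?_
    · apply ContinuousOn.aestronglyMeasurable _ measurableSet_Ioc
      refine hFd.continuousOn.comp (by fun_prop) ?_
      intro t ht; simpa using ht.1
    · filter_upwards [ae_restrict_mem measurableSet_Ioc] with t ht
      have ht0 : (t : ℂ) ≠ 0 := by exact_mod_cast ht.1.ne'
      have e1 : (-1 / (t * I) : ℂ) = (t⁻¹ : ℝ) * I := by
        push_cast; rw [div_eq_iff (by simp [ht0])]; field_simp; simp
      have h1 := h.inv (t * I) (by simpa using ht.1)
      rw [e1] at h1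
      simp only [hF]
      rw [norm_mul, norm_e, h1, norm_mul, norm_mul, hen, one_mul]
      have h5 : 1 ≤ t⁻¹ := (one_le_inv₀ ht.1).mpr ht.2
      have h2 := hK ((t⁻¹ : ℝ) * I) (by simp only [im_ofReal_mul, I_im]; linarith)
      have h3 : ‖(t * I : ℂ) ^ 2‖ ≤ 1 := by
        simp only [norm_pow, norm_mul, norm_I, mul_one, Complex.norm_real, Real.norm_of_nonneg ht.1.le]
        exact pow_le_one₀ ht.1.le ht.2
      have h4 : Real.exp (-(Real.pi * ((u:ℂ).re * (t * I : ℂ).im + (u:ℂ).im * (t * I : ℂ).re))) ≤ 1 := by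
        rw [Real.exp_le_one_iff]
        have := ht.1
        simp
        positivity
      have hK0 : 0 ≤ K := by
        exact nonneg_of_mul_nonneg_left ((norm_nonneg _).trans h2) (Real.exp_pos _)
      calc _ ≤ 1 * (K * Real.exp 0) * 1 := by
            gcongr
            refine h2.trans ?_
            gcongr
            simp only [im_ofReal_mul, I_im]
            nlinarith
        _ = _ := by ring
  have hax := axis F Q hQ L0 L1 hFint ?_ (by simpa using (hL1 0 1 (by norm_num) le_rfl).2.1)
  swap
  · have h1 := (hL0 0 1 (by norm_num) (by norm_num)).2.1
    have h2 := h1.comp tendsto_inv_nhdsGT_zero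
    refine h2.congr' ?_
    filter_upwards [self_mem_nhdsWithin] with t ht
    have ht : 0 < t := ht
    have ht0 : (t : ℂ) ≠ 0 := by exact_mod_cast ht.ne'
    simp only [Function.comp]
    congr 1
    push_cast
    rw [div_eq_iff (by simp [ht0])]
    simp only [zero_add]
    field_simp; simp
  have hexp : ∀ t : ℝ, cexp (Real.pi * I * u * (t * I)) = cexp (-(Real.pi * u * t : ℝ)) := by
    intro t; congr 1; push_cast; linear_combination (Real.pi * u * t : ℂ) * I_mul_I
  constructor
  · refine hFint.congr_fun ?_ measurableSet_Ioi
    intro t ht; simp only [hF, hexp]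
  have hI : (∫ t in Ioi (0:ℝ), f (t * I) * cexp (-(Real.pi * u * t : ℝ))) * I = L1 - L0 := by
    rw [← hax, ← integral_mul_const]
    simp only [hF, hexp]
  -- terms
  have tA : I * ε * W (1/2) (cR k (-1/2)) (zR (-1/2) (-1)) u = cexp (-(Real.pi * I * u)) * (L0 - Q (1 + I)) := by
    have e := (hL0 (-1/2) (1/2) (by norm_num [abs_le]) le_rfl).2.2
    have e2 : (-1 / (((-1/2 : ℝ) : ℂ) + ((1/2 : ℝ) : ℂ) * I)) = 1 + I := by
      rw [div_eq_iff]
      · push_cast; linear_combination (-(1/2) : ℂ) * I_mul_I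
      · apply hne; norm_num
    rw [e2] at e
    rw [← e, W, ← integral_const_mul, ← integral_const_mul]
    congr 1; ext s
    simp only [hG, cR, zR]
    have : cexp (Real.pi * I * u * (((-1 : ℝ) : ℂ) - 1 / (((-1/2 : ℝ) : ℂ) + s * I))) =
       cexp (-(Real.pi * I * u)) * cexp (Real.pi * I * u * (-1 / (((-1/2 : ℝ) : ℂ) + s * I))) := by
      rw [← Complex.exp_add]; congr 1; push_cast; ring
    rw [this]; ring
  have tB : I * ε * W (1/2) (cR k (1/2)) (zR (1/2) 1) u = cexp (Real.pi * I * u) * (L0 - Q (-1 + I)) := by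
    have e := (hL0 (1/2) (1/2) (by norm_num [abs_le]) le_rfl).2.2
    have e2 : (-1 / (((1/2 : ℝ) : ℂ) + ((1/2 : ℝ) : ℂ) * I)) = -1 + I := by
      rw [div_eq_iff]
      · push_cast; linear_combination (-(1/2) : ℂ) * I_mul_I
      · apply hne; norm_num
    rw [e2] at e
    rw [← e, W, ← integral_const_mul, ← integral_const_mul]
    congr 1; ext s
    simp only [hG, cR, zR]
    have : cexp (Real.pi * I * u * (((1 : ℝ) : ℂ) - 1 / (((1/2 : ℝ) : ℂ) + s * I))) =
       cexp (Real.pi * I * u) * cexp (Real.pi * I * u * (-1 / (((1/2 : ℝ) : ℂ) + s * I))) := by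
      rw [← Complex.exp_add]; congr 1; push_cast; ring
    rw [this]; ring
  have tC : I * (ε * W 1 (cR k 0) (zR 0 0) u) = L0 - Q I := by
    have e := (hL0 0 1 (by norm_num) (by norm_num)).2.2
    have e2 : (-1 / (((0 : ℝ) : ℂ) + ((1 : ℝ) : ℂ) * I)) = I := by
      rw [div_eq_iff]
      · push_cast; linear_combination (-1 : ℂ) * I_mul_I
      · apply hne; norm_num
    rw [e2] at e
    rw [← e, W, ← integral_const_mul, ← integral_const_mul]
    congr 1; ext s
    simp only [hG, cR, zR]
    rw [show ((0:ℝ):ℂ) - 1 / (((0:ℝ):ℂ) + s * I) = -1 / (((0:ℝ):ℂ) + s * I) by push_cast; ring]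
    ring
  have tD : 2 * I * W 1 (fun s => k (s * I)) (fun s => s * I) u =
      cexp (-(Real.pi * I * u)) * (L1 - Q (1 + I)) + cexp (Real.pi * I * u) * (L1 - Q (-1 + I)) - 2 * (L1 - Q I) := by
    obtain ⟨i1, -, e1⟩ := (hL1 1 1 (by norm_num) le_rfl)
    obtain ⟨i2, -, e2⟩ := (hL1 (-1) 1 (by norm_num) le_rfl)
    obtain ⟨i3, -, e3⟩ := (hL1 0 1 (by norm_num) le_rfl)
    have j1 := (i1.mul_const I).const_mul (cexp (-(Real.pi * I * u)))
    have j2 := (i2.mul_const I).const_mul (cexp (Real.pi * I * u))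
    have j3 := (i3.mul_const I).const_mul 2
    have j12 : Integrable (fun x : ℝ => cexp (-(Real.pi * I * u)) * (F (((1:ℝ):ℂ) + x * I) * I) +
      cexp (Real.pi * I * u) * (F (((-1:ℝ):ℂ) + x * I) * I)) (volume.restrict (Ioi 1)) := j1.add j2
    rw [show ((1:ℝ):ℂ) + ((1:ℝ):ℂ) * I = 1 + I by simp] at e1
    rw [show ((-1:ℝ):ℂ) + ((1:ℝ):ℂ) * I = -1 + I by simp] at e2
    rw [show ((0:ℝ):ℂ) + ((1:ℝ):ℂ) * I = I by simp] at e3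
    rw [← e1, ← e2, ← e3, W, ← integral_const_mul, ← integral_const_mul, ← integral_const_mul, ← integral_const_mul,
      ← integral_add j1 j2, ← integral_sub j12 j3]
    apply setIntegral_congr_fun measurableSet_Ioi
    intro s hs
    have hs : 1 < s := hs
    have hd := h.dif (s * I) (by simp; linarith)
    have E1 : cexp (Real.pi * I * u * (s * I)) = cexp (-(Real.pi * I * u)) * cexp (Real.pi * I * u * (1 + s * I)) := by
      rw [← Complex.exp_add]; congr 1; ring
    have E2 : cexp (Real.pi * I * u * (s * I)) = cexp (Real.pi * I * u) * cexp (Real.pi * I * u * (-1 + s * I)) := by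
      rw [← Complex.exp_add]; congr 1; ring
    simp only [hF]
    simp only [ofReal_one, ofReal_neg, ofReal_zero, zero_add]
    have a1 : (1 + s * I : ℂ) = s * I + 1 := by ring
    have a2 : (-1 + s * I : ℂ) = s * I - 1 := by ring
    rw [a1] at E1 ⊢
    rw [a2] at E2 ⊢
    linear_combination (-I * cexp (Real.pi * I * u * (s * I))) * hd + I * f (s * I + 1) * E1 + I * f (s * I - 1) * E2
  have hcos : cexp (-(Real.pi * I * u)) + cexp (Real.pi * I * u) - 2 = -4 * (Real.sin (Real.pi * u / 2) ^ 2 : ℝ) := by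
    have h1 : cexp (-(Real.pi * I * u)) + cexp (Real.pi * I * u) = 2 * ((Real.cos (Real.pi * u) : ℝ) : ℂ) := by
      rw [Complex.ofReal_cos, Complex.two_cos, add_comm]; push_cast; congr 2 <;> ring
    have h2 : Real.cos (Real.pi * u) = 1 - 2 * Real.sin (Real.pi * u / 2) ^ 2 := by
      have := Real.cos_two_mul (Real.pi * u / 2)
      rw [show 2 * (Real.pi * u / 2) = Real.pi * u by ring] at this
      have := Real.sin_sq_add_cos_sq (Real.pi * u / 2)
      linarith
    rw [h1, h2]; push_cast; ring
  rw [mul_assoc _ I, mul_comm I, hI, ← hcos, hC]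
  linear_combination 2 * tC + tD - tA - tB
end SP

namespace SP
open Complex Set Filter Topology
open UpperHalfPlane hiding I
open ModularForm EisensteinSeries ArithmeticFunction

noncomputable def qq (z : ℂ) : ℂ := cexp (2 * Real.pi * I * z)
noncomputable def sA (k : ℕ) (z : ℂ) : ℂ := ∑' n : ℕ, (sigma k (n + 1) : ℂ) * qq z ^ (n + 1)
noncomputable def e2 (z : ℂ) : ℂ := E2 (ofComplex z)
noncomputable def e4 (z : ℂ) : ℂ := E (k := 4) (by norm_num) (ofComplex z)
noncomputable def e6 (z : ℂ) : ℂ := E (k := 6) (by norm_num) (ofComplex z)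
noncomputable def dl (z : ℂ) : ℂ := discriminant (ofComplex z)

lemma e2_diff : DifferentiableOn ℂ e2 {z | 0 < z.im} :=
  UpperHalfPlane.mdifferentiable_iff.1 E2_mdifferentiable
lemma e4_diff : DifferentiableOn ℂ e4 {z | 0 < z.im} :=
  UpperHalfPlane.mdifferentiable_iff.1 (E (k := 4) (by norm_num)).holo'
lemma e6_diff : DifferentiableOn ℂ e6 {z | 0 < z.im} :=
  UpperHalfPlane.mdifferentiable_iff.1 (E (k := 6) (by norm_num)).holo'

lemma dl_ne (z : ℂ) : dl z ≠ 0 := discriminant_ne_zero _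

lemma dl_eq (z : ℂ) (hz : 0 < z.im) : dl z = ModularForm.eta z ^ 24 := by
  rw [dl, ofComplex_apply_of_im_pos hz]; rfl

lemma dl_diff : DifferentiableOn ℂ dl {z | 0 < z.im} := by
  refine DifferentiableOn.congr (f := fun z => ModularForm.eta z ^ 24) ?_ (fun z hz => dl_eq z hz)
  intro z hz
  exact ((differentiableAt_eta_of_mem_upperHalfPlaneSet hz).pow 24).differentiableWithinAt

lemma e2_q (z : ℂ) (hz : 0 < z.im) : e2 z = 1 - 24 * sA 1 z := by
  rw [e2, ofComplex_apply_of_im_pos hz, E2_eq_tsum_cexp, sA]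
  congr 2
  exact tsum_pnat_eq_tsum_succ (f := fun n : ℕ => (sigma 1 n : ℂ) * qq z ^ n)

lemma e4_q (z : ℂ) (hz : 0 < z.im) : e4 z = 1 + 240 * sA 3 z := by
  rw [e4, ofComplex_apply_of_im_pos hz, q_expansion_bernoulli (by norm_num) (by decide), sA]
  have := tsum_pnat_eq_tsum_succ (f := fun n : ℕ => (sigma 3 n : ℂ) * qq z ^ n)
  rw [← this]
  have hb : bernoulli 4 = -1/30 := by
    rw [bernoulli_eq_bernoulli'_of_ne_one (by norm_num)]; exact bernoulli'_four
  rw [hb]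
  simp only [qq, zpow_natCast]
  push_cast
  norm_num

lemma e6_q (z : ℂ) (hz : 0 < z.im) : e6 z = 1 - 504 * sA 5 z := by
  rw [e6, ofComplex_apply_of_im_pos hz, q_expansion_bernoulli (by norm_num) (by decide), sA]
  have := tsum_pnat_eq_tsum_succ (f := fun n : ℕ => (sigma 5 n : ℂ) * qq z ^ n)
  rw [← this]
  have hb : bernoulli 6 = 1/42 := by
    rw [bernoulli_eq_bernoulli'_of_ne_one (by norm_num), bernoulli'_def]
    have h5 : bernoulli' 5 = 0 := by
      have := bernoulli'_eq_zero_of_odd (n := 5) (by decide) (by norm_num)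
      exact this
    norm_num [Finset.sum_range_succ, Nat.choose, h5]
  rw [hb]
  simp only [qq, zpow_natCast]
  push_cast
  norm_num

lemma qq_add (z : ℂ) : qq (z + 1) = qq z := by
  rw [qq, qq, mul_add, mul_one, Complex.exp_periodic]

lemma sA_add (k : ℕ) (z : ℂ) : sA k (z + 1) = sA k z := by simp only [sA, qq_add]

lemma im_add_one (z : ℂ) : (z + 1).im = z.im := by simp

lemma e2_T (z : ℂ) (hz : 0 < z.im) : e2 (z + 1) = e2 z := by
  rw [e2_q z hz, e2_q _ (by simpa), sA_add]
lemma e4_T (z : ℂ) (hz : 0 < z.im) : e4 (z + 1) = e4 z := by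
  rw [e4_q z hz, e4_q _ (by simpa), sA_add]
lemma e6_T (z : ℂ) (hz : 0 < z.im) : e6 (z + 1) = e6 z := by
  rw [e6_q z hz, e6_q _ (by simpa), sA_add]

lemma dl_prod (z : ℂ) (hz : 0 < z.im) : dl z = qq z * ∏' n : ℕ, (1 - qq z ^ (n + 1)) ^ 24 := by
  rw [dl, ofComplex_apply_of_im_pos hz, discriminant_eq_q_prod]
  simp only [eta_q, Function.Periodic.qParam, qq]
  simp

lemma dl_T (z : ℂ) (hz : 0 < z.im) : dl (z + 1) = dl z := by
  rw [dl_prod z hz, dl_prod _ (by simpa), qq_add]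

lemma oc_S (z : ℂ) (hz : 0 < z.im) : ofComplex (-1 / z) = ModularGroup.S • (⟨z, hz⟩ : ℍ) := by
  rw [ofComplex_apply_of_im_pos (im_neg_inv_pos z hz), UpperHalfPlane.modular_S_smul]
  ext
  simp [neg_div, inv_neg]

lemma dl_S (z : ℂ) (hz : 0 < z.im) : dl (-1 / z) = z ^ 12 * dl z := by
  have hz0 : z ≠ 0 := by rintro rfl; simp at hz
  have h := congrFun discriminant_S_invariant (⟨z, hz⟩ : ℍ)
  rw [SL_slash_apply, ModularGroup.denom_S] at h
  rw [dl, oc_S z hz, dl, ofComplex_apply_of_im_pos hz, ← h]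
  simp only
  rw [mul_left_comm, ← zpow_natCast, ← zpow_add₀ hz0]; simp

lemma e2_S (z : ℂ) (hz : 0 < z.im) : e2 (-1 / z) = z ^ 2 * e2 z - 6 * I / Real.pi * z := by
  have hz0 : z ≠ 0 := by rintro rfl; simp at hz
  have h := congrFun (E2_slash_action ModularGroup.S) (⟨z, hz⟩ : ℍ)
  rw [SL_slash_apply, ModularGroup.denom_S] at h
  simp only [Pi.sub_apply, Pi.smul_apply, D2_S, riemannZeta_two, smul_eq_mul] at h
  rw [e2, oc_S z hz, e2, ofComplex_apply_of_im_pos hz]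
  have hp : (Real.pi : ℂ) ≠ 0 := by exact_mod_cast Real.pi_ne_zero
  rw [zpow_neg] at h
  have h2 : z ^ (2:ℤ) = z ^ 2 := by norm_cast
  rw [h2] at h
  field_simp at h ⊢
  linear_combination h

lemma eE_S (k : ℕ) (hk : 3 ≤ k) (z : ℂ) (hz : 0 < z.im) :
    E hk (ofComplex (-1 / z)) = z ^ k * E hk (ofComplex z) := by
  have h := SlashInvariantForm.slash_action_eqn'' (E hk) (γ := ModularGroup.S) (MonoidHom.mem_range.2 ⟨ModularGroup.S, rfl⟩) (⟨z, hz⟩ : ℍ)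
  rw [oc_S z hz, ofComplex_apply_of_im_pos hz]
  rw [ModularGroup.denom_S] at h
  simpa using h
lemma e4_S (z : ℂ) (hz : 0 < z.im) : e4 (-1 / z) = z ^ 4 * e4 z := eE_S 4 _ z hz
lemma e6_S (z : ℂ) (hz : 0 < z.im) : e6 (-1 / z) = z ^ 6 * e6 z := eE_S 6 _ z hz
end SP

namespace SP
open Complex Set Filter Topology ArithmeticFunction

noncomputable def sr (k : ℕ) (r : ℝ) : ℝ := ∑' n : ℕ, (sigma k (n + 1) : ℝ) * r ^ (n + 1)

lemma sr_summable (k : ℕ) (r : ℝ) (h0 : 0 ≤ r) (h1 : r < 1) :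
    Summable (fun n : ℕ => (sigma k (n + 1) : ℝ) * r ^ (n + 1)) := by
  have h := summable_pow_mul_geometric_of_norm_lt_one (R := ℝ) (k + 1) (r := r)
    (by rwa [Real.norm_of_nonneg h0])
  have h2 := (summable_nat_add_iff 1).2 h
  refine Summable.of_nonneg_of_le (fun n => by positivity) (fun n => ?_) h2
  gcongr
  exact_mod_cast sigma_le_pow_succ k (n + 1)

lemma norm_qq (z : ℂ) : ‖qq z‖ = Real.exp (-(2 * Real.pi * z.im)) := by
  rw [qq, Complex.norm_exp]; simp

lemma norm_qq_lt (z : ℂ) (hz : 0 < z.im) : ‖qq z‖ < 1 := by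
  rw [norm_qq, Real.exp_lt_one_iff]
  have := Real.pi_pos
  nlinarith [mul_pos this hz]

lemma norm_qq_half (z : ℂ) (hz : 1 / 2 ≤ z.im) : ‖qq z‖ ≤ 1 / 8 := by
  rw [norm_qq]
  have h3 : Real.exp (-(2 * Real.pi * z.im)) ≤ Real.exp (-3) := by
    apply Real.exp_le_exp.2; nlinarith [Real.pi_gt_three]
  have h1 : (2:ℝ) ≤ Real.exp 1 := by linarith [Real.add_one_le_exp (1:ℝ)]
  have h2 : Real.exp 3 = Real.exp 1 ^ 3 := by rw [← Real.exp_nat_mul]; norm_num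
  have h4 : (8:ℝ) ≤ Real.exp 3 := by rw [h2]; nlinarith [pow_le_pow_left₀ (by norm_num) h1 3]
  refine h3.trans ?_
  rw [Real.exp_neg, one_div]; exact inv_anti₀ (by norm_num) h4

lemma sA_summable (k : ℕ) (z : ℂ) (hz : 0 < z.im) :
    Summable (fun n : ℕ => ‖(sigma k (n + 1) : ℂ) * qq z ^ (n + 1)‖) := by
  have := sr_summable k ‖qq z‖ (norm_nonneg _) (norm_qq_lt z hz)
  simpa using this

lemma norm_sA_le (k : ℕ) (z : ℂ) (hz : 0 < z.im) : ‖sA k z‖ ≤ sr k ‖qq z‖ := by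
  refine (norm_tsum_le_tsum_norm (sA_summable k z hz)).trans (le_of_eq ?_)
  rw [sr]; congr 1; ext n; simp

lemma sA_bound (k : ℕ) : ∃ C : ℝ, 0 ≤ C ∧ ∀ z : ℂ, 1/2 ≤ z.im → ‖sA k z‖ ≤ C * ‖qq z‖ := by
  refine ⟨∑' n : ℕ, (sigma k (n + 1) : ℝ) * (1/8) ^ n, tsum_nonneg fun n => by positivity, fun z hz => ?_⟩
  refine (norm_sA_le k z (by linarith)).trans ?_
  rw [sr, ← tsum_mul_right]
  have hs : Summable (fun n : ℕ => (sigma k (n + 1) : ℝ) * (1/8) ^ n) := by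
    have := (sr_summable k (1/8) (by norm_num) (by norm_num)).mul_right 8
    refine this.congr fun n => ?_
    rw [pow_succ]; ring
  refine Summable.tsum_le_tsum (fun n => ?_) (sr_summable k _ (norm_nonneg _) (norm_qq_lt z (by linarith)))
    (hs.mul_right _)
  rw [pow_succ, ← mul_assoc]
  gcongr
  exact norm_qq_half z hz

lemma prod_lower (r : ℝ) (h0 : 0 ≤ r) (h1 : r < 1) (N : ℕ) :
    1 - r / (1 - r) ≤ ∏ n ∈ Finset.range N, (1 - r ^ (n + 1)) := by
  have key : 1 - ∑ n ∈ Finset.range N, r ^ (n + 1) ≤ ∏ n ∈ Finset.range N, (1 - r ^ (n + 1)) ∧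
      ∏ n ∈ Finset.range N, (1 - r ^ (n + 1)) ≤ 1 := by
    induction N with
    | zero => simp
    | succ N ih =>
      rw [Finset.sum_range_succ, Finset.prod_range_succ]
      have h2 : 0 ≤ r ^ (N + 1) := by positivity
      have h3 : r ^ (N + 1) ≤ 1 := pow_le_one₀ h0 h1.le
      have h4 : 0 ≤ ∏ n ∈ Finset.range N, (1 - r ^ (n + 1)) :=
        Finset.prod_nonneg fun n _ => sub_nonneg.2 (pow_le_one₀ h0 h1.le)
      constructor <;> nlinarith
  refine le_trans ?_ key.1
  have hs : HasSum (fun n : ℕ => r ^ (n + 1)) (r / (1 - r)) := by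
    have := (hasSum_geometric_of_lt_one h0 h1).mul_left r
    simpa [pow_succ', div_eq_mul_inv] using this
  linarith [sum_le_hasSum (Finset.range N) (fun n _ => by positivity) hs]

lemma qmult (q : ℂ) (hq : ‖q‖ < 1) : Multipliable (fun n : ℕ => 1 - q ^ (n + 1)) := by
  have : Summable (fun n : ℕ => ‖-q ^ (n + 1)‖) := by
    simp only [norm_neg, norm_pow]
    exact (summable_nat_add_iff 1).2 (summable_geometric_of_lt_one (norm_nonneg _) hq)
  simpa [sub_eq_add_neg] using multipliable_one_add_of_summable this

lemma dl_prod2 (z : ℂ) (hz : 0 < z.im) : dl z = qq z * (∏' n : ℕ, (1 - qq z ^ (n + 1))) ^ 24 := by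
  rw [dl_prod z hz, (qmult _ (norm_qq_lt z hz)).tprod_pow]

lemma dl_lower (z : ℂ) (hz : 1/2 ≤ z.im) : ‖qq z‖ * (6/7) ^ 24 ≤ ‖dl z‖ := by
  have hz' : 0 < z.im := by linarith
  have hq := norm_qq_half z hz
  rw [dl_prod2 z hz', norm_mul, norm_pow]
  gcongr
  have ht := (qmult _ (norm_qq_lt z hz')).hasProd.tendsto_prod_nat.norm
  refine ge_of_tendsto' ht fun N => ?_
  rw [norm_prod]
  have h1 : (6/7:ℝ) ≤ 1 - ‖qq z‖ / (1 - ‖qq z‖) := by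
    rw [le_sub_comm, div_le_iff₀ (by linarith)]; linarith
  refine h1.trans ((prod_lower _ (norm_nonneg _) (norm_qq_lt z hz') N).trans ?_)
  refine Finset.prod_le_prod (fun n _ => sub_nonneg.2 (pow_le_one₀ (norm_nonneg _) (norm_qq_lt z hz').le)) fun n _ => ?_
  have := norm_sub_norm_le (1:ℂ) (qq z ^ (n+1))
  simpa using this

lemma qq_ne (z : ℂ) : qq z ≠ 0 := Complex.exp_ne_zero _

lemma dl_inv_bound : ∃ D : ℝ, 0 ≤ D ∧ ∀ z : ℂ, 1/2 ≤ z.im → ‖dl z‖⁻¹ ≤ D * ‖qq z‖⁻¹ := by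
  refine ⟨((6/7) ^ 24)⁻¹, by positivity, fun z hz => ?_⟩
  rw [← mul_inv, mul_comm]
  have := norm_pos_iff.2 (qq_ne z)
  exact inv_anti₀ (by positivity) (dl_lower z hz)

noncomputable def nn (z : ℂ) : ℂ := e2 z * e4 z - e6 z
noncomputable def p0 (z : ℂ) : ℂ := nn z ^ 2 / dl z
noncomputable def pm2 (z : ℂ) : ℂ := e4 z * nn z / dl z
noncomputable def pm4 (z : ℂ) : ℂ := e4 z ^ 2 / dl z
noncomputable def fa (z : ℂ) : ℂ := z ^ 2 * p0 (-1 / z)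

lemma nn_eq (z : ℂ) (hz : 0 < z.im) :
    nn z = -24 * sA 1 z + 240 * sA 3 z - 5760 * sA 1 z * sA 3 z + 504 * sA 5 z := by
  rw [nn, e2_q z hz, e4_q z hz, e6_q z hz]; ring

lemma nn_bound : ∃ C : ℝ, 0 ≤ C ∧ ∀ z : ℂ, 1/2 ≤ z.im → ‖nn z‖ ≤ C * ‖qq z‖ := by
  obtain ⟨a, ha, h1⟩ := sA_bound 1
  obtain ⟨b, hb, h3⟩ := sA_bound 3
  obtain ⟨c, hc, h5⟩ := sA_bound 5
  refine ⟨24 * a + 240 * b + 5760 * a * b + 504 * c, by positivity, fun z hz => ?_⟩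
  rw [nn_eq z (by linarith)]
  have hq := norm_qq_half z hz
  have hq0 := norm_nonneg (qq z)
  have := norm_add_le (-24 * sA 1 z + 240 * sA 3 z - 5760 * sA 1 z * sA 3 z) (504 * sA 5 z)
  have := norm_sub_le (-24 * sA 1 z + 240 * sA 3 z) (5760 * sA 1 z * sA 3 z)
  have := norm_add_le (-24 * sA 1 z) (240 * sA 3 z)
  simp only [norm_mul, norm_neg, Complex.norm_ofNat] at *
  have h13 : ‖sA 1 z‖ * ‖sA 3 z‖ ≤ a * b * ‖qq z‖ := by
    calc _ ≤ (a * ‖qq z‖) * (b * ‖qq z‖) := mul_le_mul (h1 z hz) (h3 z hz) (norm_nonneg _) (by positivity)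
      _ = a * b * (‖qq z‖ * ‖qq z‖) := by ring
      _ ≤ a * b * ‖qq z‖ := by gcongr; nlinarith
  nlinarith [h1 z hz, h3 z hz, h5 z hz]

lemma e4_bound : ∃ C : ℝ, 0 ≤ C ∧ ∀ z : ℂ, 1/2 ≤ z.im → ‖e4 z‖ ≤ C := by
  obtain ⟨b, hb, h3⟩ := sA_bound 3
  refine ⟨1 + 240 * b, by positivity, fun z hz => ?_⟩
  rw [e4_q z (by linarith)]
  have hq := norm_qq_half z hz
  have := norm_add_le 1 (240 * sA 3 z)
  simp only [norm_mul, norm_one, Complex.norm_ofNat] at *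
  nlinarith [h3 z hz]

lemma fa_eq (z : ℂ) (hz : 0 < z.im) :
    fa z = z ^ 2 * p0 z - 12 * I / Real.pi * z * pm2 z - 36 / Real.pi ^ 2 * pm4 z := by
  have hz0 : z ≠ 0 := by rintro rfl; simp at hz
  have hp : (Real.pi : ℂ) ≠ 0 := by exact_mod_cast Real.pi_ne_zero
  have hd := dl_ne z
  rw [fa, p0, p0, pm2, pm4, nn, nn, e2_S z hz, e4_S z hz, e6_S z hz, dl_S z hz]
  field_simp
  linear_combination (-36 * e4 z ^ 2) * (-I_sq)

lemma p0_bound : ∃ C : ℝ, 0 ≤ C ∧ ∀ z : ℂ, 1/2 ≤ z.im → ‖p0 z‖ ≤ C * ‖qq z‖ := by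
  obtain ⟨n, hn, h1⟩ := nn_bound
  obtain ⟨d, hd, h2⟩ := dl_inv_bound
  refine ⟨n ^ 2 * d, by positivity, fun z hz => ?_⟩
  have := norm_pos_iff.2 (qq_ne z)
  rw [p0, norm_div, norm_pow, div_eq_mul_inv]
  calc _ ≤ (n * ‖qq z‖) ^ 2 * (d * ‖qq z‖⁻¹) := by gcongr; exacts [h1 z hz, h2 z hz]
    _ = _ := by field_simp

lemma pm2_bound : ∃ C : ℝ, 0 ≤ C ∧ ∀ z : ℂ, 1/2 ≤ z.im → ‖pm2 z‖ ≤ C := by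
  obtain ⟨n, hn, h1⟩ := nn_bound
  obtain ⟨e, he, h4⟩ := e4_bound
  obtain ⟨d, hd, h2⟩ := dl_inv_bound
  refine ⟨e * n * d, by positivity, fun z hz => ?_⟩
  have := norm_pos_iff.2 (qq_ne z)
  rw [pm2, norm_div, norm_mul, div_eq_mul_inv]
  calc _ ≤ e * (n * ‖qq z‖) * (d * ‖qq z‖⁻¹) := by gcongr; exacts [h4 z hz, h1 z hz, h2 z hz]
    _ = _ := by field_simp

lemma pm4_bound : ∃ C : ℝ, 0 ≤ C ∧ ∀ z : ℂ, 1/2 ≤ z.im → ‖pm4 z‖ ≤ C * ‖qq z‖⁻¹ := by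
  obtain ⟨e, he, h4⟩ := e4_bound
  obtain ⟨d, hd, h2⟩ := dl_inv_bound
  refine ⟨e ^ 2 * d, by positivity, fun z hz => ?_⟩
  have := norm_pos_iff.2 (qq_ne z)
  rw [pm4, norm_div, norm_pow, div_eq_mul_inv]
  calc _ ≤ e ^ 2 * (d * ‖qq z‖⁻¹) := by gcongr; exacts [h4 z hz, h2 z hz]
    _ = _ := by ring

lemma p0_T (z : ℂ) (hz : 0 < z.im) : p0 (z + 1) = p0 z := by
  rw [p0, p0, nn, nn, e2_T z hz, e4_T z hz, e6_T z hz, dl_T z hz]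
lemma pm2_T (z : ℂ) (hz : 0 < z.im) : pm2 (z + 1) = pm2 z := by
  rw [pm2, pm2, nn, nn, e2_T z hz, e4_T z hz, e6_T z hz, dl_T z hz]
lemma pm4_T (z : ℂ) (hz : 0 < z.im) : pm4 (z + 1) = pm4 z := by
  rw [pm4, pm4, e4_T z hz, dl_T z hz]

lemma p0_diff : DifferentiableOn ℂ p0 {z | 0 < z.im} :=
  (((e2_diff.mul e4_diff).sub e6_diff).pow 2).div dl_diff (fun z _ => dl_ne z)

lemma inv_diff (k : ℂ → ℂ) (hk : DifferentiableOn ℂ k {z | 0 < z.im}) :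
    DifferentiableOn ℂ (fun z => z ^ 2 * k (-1 / z)) {z | 0 < z.im} := by
  refine DifferentiableOn.mul (by fun_prop) (hk.comp ?_ fun z hz => im_neg_inv_pos z hz)
  exact DifferentiableOn.div (by fun_prop) (by fun_prop) fun z hz h => by
    subst h; simp at hz

lemma coreA : Core 1 p0 fa := by
  have hpi := Real.pi_pos
  refine ⟨Or.inl rfl, p0_diff, inv_diff _ p0_diff, fun z hz => by rw [p0_T z hz, one_mul],
    fun z hz => by rw [fa, one_mul], fun z hz => ?_, ?_, ?_⟩
  · have hz1 : 0 < (z + 1).im := by simpa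
    have hz2 : 0 < (z - 1).im := by simpa
    rw [fa_eq z hz, fa_eq _ hz1, fa_eq _ hz2, p0_T z hz, pm2_T z hz, pm4_T z hz]
    have a := p0_T _ hz2
    have b := pm2_T _ hz2
    have c := pm4_T _ hz2
    rw [sub_add_cancel] at a b c
    rw [← a, ← b, ← c]; ring
  · obtain ⟨C, hC, h⟩ := p0_bound
    refine ⟨C, fun z hz => (h z hz).trans ?_⟩
    rw [norm_qq]; gcongr; nlinarith
  · obtain ⟨C, hC, h⟩ := p0_bound
    obtain ⟨D, hD, h2⟩ := pm2_bound
    obtain ⟨F, hF, h4⟩ := pm4_bound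
    refine ⟨C + 12 * D + 36 * F, fun z hz hr => ?_⟩
    rw [fa_eq z (by linarith)]
    have h := h z (by linarith)
    have h2 := h2 z (by linarith)
    have h4 := h4 z (by linarith)
    have hq : ‖qq z‖⁻¹ = Real.exp (2 * Real.pi * z.im) := by
      rw [norm_qq, Real.exp_neg, inv_inv]
    have hq2 := norm_qq_half z (by linarith)
    set X := Real.exp (2 * Real.pi * z.im) with hX
    have hX1 : 1 ≤ X := Real.one_le_exp (by nlinarith)
    have hzn : ‖z‖ ^ 2 ≤ 1 + z.im ^ 2 := by
      rw [Complex.sq_norm, normSq_apply]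
      nlinarith [abs_le.1 hr, abs_nonneg z.re]
    have hzn1 : ‖z‖ ≤ 1 + z.im ^ 2 := by
      nlinarith [sq_nonneg (‖z‖ - 1), norm_nonneg z]
    have t1 : ‖z ^ 2 * p0 z‖ ≤ (1 + z.im ^ 2) * (C * X) := by
      rw [norm_mul, norm_pow]
      refine mul_le_mul hzn ?_ (norm_nonneg _) (by positivity)
      refine h.trans ?_
      gcongr; linarith
    have pinv : ‖(Real.pi : ℂ)‖⁻¹ ≤ 1 := by
      rw [Complex.norm_real, Real.norm_of_nonneg hpi.le]
      exact inv_le_one_of_one_le₀ (by linarith [Real.pi_gt_three])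
    have t2 : ‖12 * I / Real.pi * z * pm2 z‖ ≤ 12 * 1 * (1 + z.im ^ 2) * (D * X) := by
      rw [norm_mul, norm_mul, norm_div, norm_mul, Complex.norm_I, Complex.norm_ofNat, mul_one, div_eq_mul_inv]
      have : ‖pm2 z‖ ≤ D * X := by nlinarith
      have := norm_nonneg z
      refine mul_le_mul (mul_le_mul (by linarith) hzn1 (norm_nonneg _) (by positivity)) ‹_› (norm_nonneg _) (by positivity)
    have t3 : ‖36 / Real.pi ^ 2 * pm4 z‖ ≤ 36 * 1 ^ 2 * (F * X) := by
      rw [norm_mul, norm_div, norm_pow, Complex.norm_ofNat, div_eq_mul_inv, ← inv_pow, ← hq]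
      gcongr
    have := norm_sub_le (z ^ 2 * p0 z - 12 * I / Real.pi * z * pm2 z) (36 / Real.pi ^ 2 * pm4 z)
    have := norm_sub_le (z ^ 2 * p0 z) (12 * I / Real.pi * z * pm2 z)
    have hFX : F * X ≤ (1 + z.im ^ 2) * (F * X) := by
      have : 0 ≤ F * X := by positivity
      nlinarith [sq_nonneg z.im]
    nlinarith
end SP

namespace SP
open Complex Set Filter Topology

noncomputable def t2 (z : ℂ) : ℂ := cexp (Real.pi * I * z / 4) * jacobiTheta₂ (z / 2) z
noncomputable def t3 (z : ℂ) : ℂ := jacobiTheta z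
noncomputable def t4 (z : ℂ) : ℂ := jacobiTheta (z + 1)
noncomputable def H2 (z : ℂ) : ℂ := t2 z ^ 4
noncomputable def H3 (z : ℂ) : ℂ := t3 z ^ 4
noncomputable def H4 (z : ℂ) : ℂ := t4 z ^ 4

lemma even_exp (n : ℤ) : cexp (Real.pi * I * (n ^ 2 + n)) = 1 := by
  obtain ⟨m, hm⟩ := Int.even_mul_succ_self n
  have : ((n:ℂ) ^ 2 + n) = 2 * m := by
    have : ((n * (n + 1) : ℤ) : ℂ) = ((m + m : ℤ) : ℂ) := by rw [hm]
    push_cast at this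
    linear_combination this
  rw [this, Complex.exp_eq_one_iff]
  exact ⟨m, by ring⟩

lemma t2_T (z : ℂ) : t2 (z + 1) = cexp (Real.pi * I / 4) * t2 z := by
  have : jacobiTheta₂ ((z + 1) / 2) (z + 1) = jacobiTheta₂ (z / 2) z := by
    refine tsum_congr fun n => ?_
    rw [jacobiTheta₂_term, jacobiTheta₂_term]
    rw [show 2 * (Real.pi:ℂ) * I * n * ((z + 1) / 2) + Real.pi * I * n ^ 2 * (z + 1) =
      (2 * Real.pi * I * n * (z / 2) + Real.pi * I * n ^ 2 * z) + Real.pi * I * (n ^ 2 + n) by ring,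
      Complex.exp_add, even_exp, mul_one]
  rw [t2, t2, this, ← mul_assoc, ← Complex.exp_add]
  congr 2; ring

lemma H2_T (z : ℂ) : H2 (z + 1) = -H2 z := by
  rw [H2, H2, t2_T, mul_pow, ← Complex.exp_nat_mul]
  rw [show ((4:ℕ):ℂ) * (Real.pi * I / 4) = Real.pi * I by push_cast; ring, Complex.exp_pi_mul_I]; ring
lemma H3_T (z : ℂ) : H3 (z + 1) = H4 z := rfl
lemma H4_T (z : ℂ) : H4 (z + 1) = H3 z := by
  rw [H4, H3, t4, t3, ← jacobiTheta_two_add z]; congr 2; ring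

lemma t4_eq (z : ℂ) : t4 z = jacobiTheta₂ (1 / 2) z := by
  rw [t4, jacobiTheta_eq_jacobiTheta₂]
  refine tsum_congr fun n => ?_
  rw [jacobiTheta₂_term, jacobiTheta₂_term]
  have h := even_exp n
  have h2 : cexp (Real.pi * I * n ^ 2) = cexp (Real.pi * I * n) := by
    have h3 : cexp (2 * Real.pi * I * n) = 1 := by
      rw [Complex.exp_eq_one_iff]; exact ⟨n, by ring⟩
    calc cexp (Real.pi * I * n ^ 2) = cexp (Real.pi * I * n ^ 2) * cexp (2 * Real.pi * I * n) := by rw [h3, mul_one]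
      _ = cexp (Real.pi * I * (n ^ 2 + n)) * cexp (Real.pi * I * n) := by
        rw [← Complex.exp_add, ← Complex.exp_add]; congr 1; ring
      _ = _ := by rw [h, one_mul]
  rw [show 2 * (Real.pi:ℂ) * I * n * 0 + Real.pi * I * n ^ 2 * (z + 1) = Real.pi * I * n ^ 2 + Real.pi * I * n ^ 2 * z by ring,
    Complex.exp_add, h2, ← Complex.exp_add]
  congr 1; ring

lemma cpow4 (z : ℂ) : ((-I * z) ^ (1 / 2 : ℂ)) ^ 4 = -z ^ 2 := by
  rw [← Complex.cpow_nat_mul]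
  rw [show ((4:ℕ):ℂ) * (1/2) = ((2:ℕ):ℂ) by norm_num, Complex.cpow_natCast, mul_pow, neg_sq, I_sq]; ring

lemma c_ne (z : ℂ) (hz : 0 < z.im) : (-I * z) ^ (1 / 2 : ℂ) ≠ 0 := by
  have hz0 : z ≠ 0 := by rintro rfl; simp at hz
  intro h
  have := cpow4 z
  rw [h] at this
  have h2 : z ^ 2 = 0 := by rw [zero_pow (by norm_num)] at this; exact neg_eq_zero.1 this.symm
  exact hz0 (pow_eq_zero_iff (by norm_num) |>.1 h2)

lemma H4_S (z : ℂ) (hz : 0 < z.im) : H4 (-1 / z) = -z ^ 2 * H2 z := by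
  have hz0 : z ≠ 0 := by rintro rfl; simp at hz
  have h := jacobiTheta₂_functional_equation (z / 2) z
  rw [show z / 2 / z = 1 / 2 by field_simp, ← t4_eq] at h
  have h1 : (-I * z) ^ (1 / 2 : ℂ) * t2 z = t4 (-1 / z) := by
    rw [t2, h]
    have := c_ne z hz
    rw [show -Real.pi * I * (z / 2) ^ 2 / z = -(Real.pi * I * z / 4) by field_simp; ring, Complex.exp_neg]
    have := Complex.exp_ne_zero (Real.pi * I * z / 4)
    generalize (-I * z) ^ (1 / 2 : ℂ) = c at *
    generalize t4 (-1 / z) = T at *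
    field_simp
  rw [H4, ← h1, mul_pow, cpow4, H2]

lemma H3_S (z : ℂ) (hz : 0 < z.im) : H3 (-1 / z) = -z ^ 2 * H3 z := by
  have h := jacobiTheta₂_functional_equation 0 z
  have hc := c_ne z hz
  rw [zero_div, ← jacobiTheta_eq_jacobiTheta₂, ← jacobiTheta_eq_jacobiTheta₂] at h
  simp only [ne_eq, OfNat.ofNat_ne_zero, not_false_eq_true, zero_pow, mul_zero, zero_div, Complex.exp_zero, mul_one] at h
  have h2 : (-I * z) ^ (1 / 2 : ℂ) * jacobiTheta z = jacobiTheta (-1 / z) := by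
    rw [h]
    generalize (-I * z) ^ (1 / 2 : ℂ) = c at *
    generalize jacobiTheta (-1 / z) = T at *
    field_simp
  rw [H3, H3, t3, t3, ← h2, mul_pow, cpow4]

lemma H2_S (z : ℂ) (hz : 0 < z.im) : H2 (-1 / z) = -z ^ 2 * H4 z := by
  have hz0 : z ≠ 0 := by rintro rfl; simp at hz
  have h := H4_S (-1 / z) (im_neg_inv_pos z hz)
  rw [show -1 / (-1 / z) = z by field_simp] at h
  rw [h]; field_simp

lemma t3_diff : DifferentiableOn ℂ t3 {z | 0 < z.im} := fun z hz =>
  (differentiableAt_jacobiTheta hz).differentiableWithinAt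
lemma t4_diff : DifferentiableOn ℂ t4 {z | 0 < z.im} :=
  t3_diff.comp (by fun_prop) (fun _ hz => by simpa using hz)
lemma t2_diff : DifferentiableOn ℂ t2 {z | 0 < z.im} := by
  intro z hz
  have h := (hasFDerivAt_jacobiTheta₂ (z / 2) hz).differentiableAt
  have h2 : DifferentiableAt ℂ (fun w : ℂ => (w / 2, w)) z := by fun_prop
  have h3 : DifferentiableAt ℂ (fun w : ℂ => jacobiTheta₂ (w / 2) w) z :=
    DifferentiableAt.comp (g := fun p : ℂ × ℂ => jacobiTheta₂ p.1 p.2) (f := fun w : ℂ => (w / 2, w)) z h h2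
  exact (DifferentiableAt.mul (by fun_prop) h3).differentiableWithinAt

noncomputable def psI (z : ℂ) : ℂ :=
  ((H3 z + H4 z) * H3 z ^ 2 * H4 z ^ 2 + (H4 z - H2 z) * H2 z ^ 2 * H4 z ^ 2) / (2 * dl z)
noncomputable def kS (z : ℂ) : ℂ :=
  H2 z ^ 2 * (H2 z * (H3 z ^ 2 + H4 z ^ 2) + H3 z ^ 3 - H4 z ^ 3) / (2 * dl z)

lemma t2_hasSum (z : ℂ) (hz : 0 < z.im) :
    HasSum (fun n : ℕ => 2 * cexp (Real.pi * I * ((n:ℂ) ^ 2 + n + 1 / 4) * z)) (t2 z) := by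
  have h := ((hasSum_jacobiTheta₂_term (z / 2) hz).nat_add_neg_add_one).mul_left (cexp (Real.pi * I * z / 4))
  refine HasSum.congr_fun h fun n => ?_
  rw [jacobiTheta₂_term, jacobiTheta₂_term, mul_add (cexp _), ← Complex.exp_add, ← Complex.exp_add, two_mul]
  congr 2 <;> push_cast <;> ring_nf

noncomputable def pp (y : ℝ) : ℝ := Real.exp (-Real.pi * y)
lemma pp_pos (y : ℝ) : 0 < pp y := Real.exp_pos _
lemma pp_lt (y : ℝ) (hy : 0 < y) : pp y < 1 := by
  rw [pp, Real.exp_lt_one_iff]; nlinarith [Real.pi_pos]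
lemma norm_qq_pp (z : ℂ) : ‖qq z‖ = pp z.im ^ 2 := by
  rw [norm_qq, pp, ← Real.exp_nat_mul]; congr 1; push_cast; ring
lemma pp_half (y : ℝ) (hy : 1 / 2 ≤ y) : pp y ≤ 3 / 8 := by
  have h := norm_qq_half (y * I) (by simpa using hy)
  rw [norm_qq_pp] at h
  simp at h
  nlinarith [pp_pos y]

lemma norm_t2 (z : ℂ) (hz : 0 < z.im) :
    ‖t2 z‖ ≤ 2 * Real.exp (-Real.pi * z.im / 4) / (1 - pp z.im ^ 2) := by
  have hp := pp_lt z.im hz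
  have hp0 := pp_pos z.im
  have hg := (hasSum_geometric_of_lt_one (sq_nonneg (pp z.im)) (by nlinarith)).mul_left
    (2 * Real.exp (-Real.pi * z.im / 4))
  rw [← div_eq_mul_inv] at hg
  rw [← (t2_hasSum z hz).tsum_eq]
  refine tsum_of_norm_bounded hg fun n => ?_
  rw [norm_mul, Complex.norm_ofNat, Complex.norm_exp, mul_assoc (2:ℝ) (Real.exp (-Real.pi * z.im / 4))]
  refine mul_le_mul_of_nonneg_left ?_ (by norm_num)
  simp only [pp]
  rw [← pow_mul, ← Real.exp_nat_mul, ← Real.exp_add]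
  apply Real.exp_le_exp.2
  have e : (Real.pi * I * ((n:ℂ) ^ 2 + n + 1 / 4) * z).re = -(Real.pi * ((n:ℝ) ^ 2 + n + 1 / 4) * z.im) := by
    rw [show Real.pi * I * ((n:ℂ) ^ 2 + n + 1 / 4) * z = ((Real.pi * ((n:ℝ) ^ 2 + n + 1 / 4) : ℝ) : ℂ) * (I * z) by push_cast; ring]
    rw [Complex.re_ofReal_mul]; simp
  rw [e]
  have hn : (n:ℝ) ≤ (n:ℝ) ^ 2 := by exact_mod_cast Nat.le_self_pow (by norm_num) n
  have : 0 < Real.pi * z.im := mul_pos Real.pi_pos hz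
  push_cast
  nlinarith

lemma norm_H2 (z : ℂ) (hz : 0 < z.im) : ‖H2 z‖ ≤ 16 * pp z.im / (1 - pp z.im ^ 2) ^ 4 := by
  rw [H2, norm_pow]
  refine (pow_le_pow_left₀ (norm_nonneg _) (norm_t2 z hz) 4).trans (le_of_eq ?_)
  rw [div_pow, mul_pow, ← Real.exp_nat_mul, pp]
  congr 2
  · norm_num
  · congr 1; push_cast; ring

lemma norm_t3_sub (z : ℂ) (hz : 1/2 ≤ z.im) : ‖t3 z - 1‖ ≤ 4 * pp z.im := by
  refine (norm_jacobiTheta_sub_one_le (by linarith)).trans ?_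
  have := pp_half _ hz
  have h0 := pp_pos z.im
  rw [← pp]
  gcongr
  rw [div_le_iff₀ (by linarith)]; linarith

lemma norm_t4_sub (z : ℂ) (hz : 1/2 ≤ z.im) : ‖t4 z - 1‖ ≤ 4 * pp z.im := by
  have := norm_t3_sub (z + 1) (by simpa using hz)
  rw [im_add_one] at this; exact this

lemma theta_bds : ∃ C : ℝ, 0 ≤ C ∧ ∀ z : ℂ, 1/2 ≤ z.im → ‖H2 z‖ ≤ C * pp z.im ∧ ‖H3 z‖ ≤ C ∧ ‖H4 z‖ ≤ C
    ∧ ‖H3 z - H4 z‖ ≤ C * pp z.im := by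
  refine ⟨1000, by norm_num, fun z hz => ?_⟩
  have hp := pp_half _ hz
  have h0 := pp_pos z.im
  have h3 := norm_t3_sub z hz
  have h4 := norm_t4_sub z hz
  have a3 : ‖t3 z‖ ≤ 5/2 := by
    have := norm_add_le (t3 z - 1) 1
    rw [sub_add_cancel, norm_one] at this; linarith
  have a4 : ‖t4 z‖ ≤ 5/2 := by
    have := norm_add_le (t4 z - 1) 1
    rw [sub_add_cancel, norm_one] at this; linarith
  refine ⟨?_, ?_, ?_, ?_⟩
  · refine (norm_H2 z (by linarith)).trans ?_
    have : (1/2:ℝ) ^ 4 ≤ (1 - pp z.im ^ 2) ^ 4 := by gcongr; nlinarith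
    rw [div_le_iff₀ (by positivity)]
    nlinarith
  · rw [H3, norm_pow]
    exact (pow_le_pow_left₀ (norm_nonneg _) a3 4).trans (by norm_num)
  · rw [H4, norm_pow]
    exact (pow_le_pow_left₀ (norm_nonneg _) a4 4).trans (by norm_num)
  · rw [H3, H4, show t3 z ^ 4 - t4 z ^ 4 = ((t3 z - 1) - (t4 z - 1)) * ((t3 z + t4 z) * (t3 z ^ 2 + t4 z ^ 2)) by ring]
    rw [norm_mul, norm_mul]
    have b1 : ‖(t3 z - 1) - (t4 z - 1)‖ ≤ 8 * pp z.im := (norm_sub_le _ _).trans (by linarith)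
    have b2 : ‖t3 z + t4 z‖ ≤ 5 := (norm_add_le _ _).trans (by linarith)
    have b3 : ‖t3 z ^ 2 + t4 z ^ 2‖ ≤ 25/2 := by
      refine (norm_add_le _ _).trans ?_
      rw [norm_pow, norm_pow]
      have := pow_le_pow_left₀ (norm_nonneg _) a3 2
      have := pow_le_pow_left₀ (norm_nonneg _) a4 2
      linarith
    calc _ ≤ (8 * pp z.im) * (5 * (25/2)) := by gcongr
      _ ≤ _ := by linarith

lemma coreB : Core (-1) kS psI := by
  have d2 : DifferentiableOn ℂ H2 {z | 0 < z.im} := t2_diff.pow 4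
  have d3 : DifferentiableOn ℂ H3 {z | 0 < z.im} := t3_diff.pow 4
  have d4 : DifferentiableOn ℂ H4 {z | 0 < z.im} := t4_diff.pow 4
  have dd : DifferentiableOn ℂ (fun z => 2 * dl z) {z | 0 < z.im} := dl_diff.const_mul 2
  refine ⟨Or.inr rfl, ?_, ?_, fun z hz => ?_, fun z hz => ?_, fun z hz => ?_, ?_, ?_⟩
  · exact DifferentiableOn.div ((d2.pow 2).mul (((d2.mul ((d3.pow 2).add (d4.pow 2))).add (d3.pow 3)).sub (d4.pow 3)))
      dd fun z _ => mul_ne_zero two_ne_zero (dl_ne z)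
  · exact DifferentiableOn.div ((((d3.add d4).mul (d3.pow 2)).mul (d4.pow 2)).add (((d4.sub d2).mul (d2.pow 2)).mul (d4.pow 2)))
      dd fun z _ => mul_ne_zero two_ne_zero (dl_ne z)
  · rw [kS, kS, H2_T, H3_T, H4_T, dl_T z hz]; ring
  · have hz0 : z ≠ 0 := by rintro rfl; simp at hz
    have := dl_ne z
    rw [kS, psI, H2_S z hz, H3_S z hz, H4_S z hz, dl_S z hz]
    field_simp
    ring
  · have hz2 : 0 < (z - 1).im := by simpa
    have a := dl_T _ hz2
    have b2 := H2_T (z - 1)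
    have b3 := H3_T (z - 1)
    have b4 := H4_T (z - 1)
    rw [sub_add_cancel] at a b2 b3 b4
    have b2' : H2 (z - 1) = - H2 z := by rw [b2, neg_neg]
    rw [psI, psI, psI, kS, H2_T, H3_T, H4_T, dl_T z hz, ← a, ← b3, ← b4, b2']
    ring
  · obtain ⟨C, hC, h⟩ := theta_bds
    obtain ⟨D, hD, h2⟩ := dl_inv_bound
    refine ⟨C ^ 2 * (C * (C ^ 2 + C ^ 2) + C * (C ^ 2 + C * C + C ^ 2)) * D, fun z hz => ?_⟩
    obtain ⟨a2, a3, a4, a34⟩ := h z hz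
    have hd := h2 z hz
    have hp0 := pp_pos z.im
    rw [norm_qq_pp] at hd
    rw [← pp, kS, norm_div, norm_mul, norm_mul, Complex.norm_ofNat, norm_pow]
    have e : H2 z * (H3 z ^ 2 + H4 z ^ 2) + H3 z ^ 3 - H4 z ^ 3 = H2 z * (H3 z ^ 2 + H4 z ^ 2) +
      (H3 z - H4 z) * (H3 z ^ 2 + H3 z * H4 z + H4 z ^ 2) := by ring
    have c1 : ‖H3 z ^ 2 + H4 z ^ 2‖ ≤ C ^ 2 + C ^ 2 := by
      refine (norm_add_le _ _).trans ?_
      rw [norm_pow, norm_pow]; gcongr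
    have c2 : ‖H3 z ^ 2 + H3 z * H4 z + H4 z ^ 2‖ ≤ C ^ 2 + C * C + C ^ 2 := by
      refine (norm_add₃_le).trans ?_
      rw [norm_pow, norm_pow, norm_mul]; gcongr
    have c3 : ‖H2 z * (H3 z ^ 2 + H4 z ^ 2) + H3 z ^ 3 - H4 z ^ 3‖ ≤
        (C * (C ^ 2 + C ^ 2) + C * (C ^ 2 + C * C + C ^ 2)) * pp z.im := by
      rw [e]
      refine (norm_add_le _ _).trans ?_
      rw [norm_mul, norm_mul]
      calc _ ≤ (C * pp z.im) * (C ^ 2 + C ^ 2) + (C * pp z.im) * (C ^ 2 + C * C + C ^ 2) := by gcongr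
        _ = _ := by ring
    have hdl : 0 ≤ ‖dl z‖⁻¹ := by positivity
    calc _ ≤ (C * pp z.im) ^ 2 * ((C * (C ^ 2 + C ^ 2) + C * (C ^ 2 + C * C + C ^ 2)) * pp z.im) * ‖dl z‖⁻¹ := by
          rw [div_eq_mul_inv, mul_inv]
          gcongr
          nlinarith
      _ ≤ (C * pp z.im) ^ 2 * ((C * (C ^ 2 + C ^ 2) + C * (C ^ 2 + C * C + C ^ 2)) * pp z.im) * (D * (pp z.im ^ 2)⁻¹) := by
          gcongr
      _ = _ := by field_simp
  · obtain ⟨C, hC, h⟩ := theta_bds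
    obtain ⟨D, hD, h2⟩ := dl_inv_bound
    refine ⟨((C + C) * C ^ 2 * C ^ 2 + (C + C) * C ^ 2 * C ^ 2) * D, fun z hz _ => ?_⟩
    have hz' : 1/2 ≤ z.im := by linarith
    obtain ⟨a2, a3, a4, a34⟩ := h z hz'
    have hp := pp_half _ hz'
    have hd := h2 z hz'
    have hq : ‖qq z‖⁻¹ = Real.exp (2 * Real.pi * z.im) := by
      rw [norm_qq, Real.exp_neg, inv_inv]
    rw [hq] at hd
    have a2' : ‖H2 z‖ ≤ C := a2.trans (by nlinarith)
    rw [psI, norm_div, norm_mul, Complex.norm_ofNat, div_eq_mul_inv, mul_inv]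
    have c1 : ‖H3 z + H4 z‖ ≤ C + C := (norm_add_le _ _).trans (by linarith)
    have c2 : ‖H4 z - H2 z‖ ≤ C + C := (norm_sub_le _ _).trans (by linarith)
    have c3 : ‖(H3 z + H4 z) * H3 z ^ 2 * H4 z ^ 2 + (H4 z - H2 z) * H2 z ^ 2 * H4 z ^ 2‖ ≤
        ((C + C) * C ^ 2 * C ^ 2 + (C + C) * C ^ 2 * C ^ 2) := by
      refine (norm_add_le _ _).trans ?_
      simp only [norm_mul, norm_pow]
      gcongr
    have hdl : 0 ≤ ‖dl z‖⁻¹ := by positivity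
    calc _ ≤ ((C + C) * C ^ 2 * C ^ 2 + (C + C) * C ^ 2 * C ^ 2) * (1 * (D * Real.exp (2 * Real.pi * z.im))) := by
          refine mul_le_mul c3 (mul_le_mul (by norm_num) hd hdl (by norm_num)) (by positivity) (by positivity)
      _ ≤ ((C + C) * C ^ 2 * C ^ 2 + (C + C) * C ^ 2 * C ^ 2) * D * Real.exp (2 * Real.pi * z.im) := by
          apply le_of_eq; ring
      _ ≤ _ := by
          refine mul_le_mul_of_nonneg_right ?_ (Real.exp_pos _).le
          exact le_mul_of_one_le_right (by positivity) (by nlinarith [sq_nonneg z.im])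
end SP

namespace SP
open Complex Set Filter Topology ArithmeticFunction

lemma axis_im (t : ℝ) : ((t:ℂ) * I).im = t := by simp

lemma qq_axis (t : ℝ) : qq (t * I) = ((pp t ^ 2 : ℝ) : ℂ) := by
  rw [qq, pp, ← Real.exp_nat_mul, Complex.ofReal_exp]
  congr 1
  push_cast
  linear_combination (2 * (Real.pi:ℂ) * t) * I_sq

lemma sA_axis (k : ℕ) (t : ℝ) : sA k (t * I) = (sr k (pp t ^ 2) : ℂ) := by
  rw [sA, sr, Complex.ofReal_tsum, qq_axis]
  congr 1; ext n; push_cast; rfl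

noncomputable def dr (t : ℝ) : ℝ := (dl (t * I)).re

lemma dl_axis (t : ℝ) (ht : 0 < t) : dl (t * I) = (dr t : ℂ) ∧ 0 < dr t ∧ dr t ≤ pp t ^ 2 ∧
    (pp t ^ 2 ≤ 1 / 3 → pp t ^ 2 * (1 - pp t ^ 2 / (1 - pp t ^ 2)) ^ 24 ≤ dr t) := by
  have him : 0 < ((t:ℂ) * I).im := by simpa
  have hp0 := pp_pos t
  have hp1 := pp_lt t ht
  set q := pp t ^ 2 with hq
  have hq0 : 0 < q := by positivity
  have hq1 : q < 1 := by nlinarith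
  have h := (qmult (qq (t * I)) (norm_qq_lt _ him)).hasProd.tendsto_prod_nat
  have hd := dl_prod2 _ him
  rw [qq_axis] at h hd
  set X := ∏' n : ℕ, (1 - (q:ℂ) ^ (n + 1)) with hX
  have hc : IsClosed {w : ℂ | w.im = 0 ∧ 0 ≤ w.re ∧ 1 - q / (1 - q) ≤ w.re ∧ w.re ≤ 1} := by
    apply IsClosed.and (isClosed_eq Complex.continuous_im continuous_const)
    apply IsClosed.and (isClosed_le continuous_const Complex.continuous_re)
    apply IsClosed.and (isClosed_le continuous_const Complex.continuous_re)
    exact isClosed_le Complex.continuous_re continuous_const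
  have hm : X ∈ {w : ℂ | w.im = 0 ∧ 0 ≤ w.re ∧ 1 - q / (1 - q) ≤ w.re ∧ w.re ≤ 1} := by
    refine hc.mem_of_tendsto h (Eventually.of_forall fun N => ?_)
    have e : ∏ n ∈ Finset.range N, (1 - (q:ℂ) ^ (n + 1)) = ((∏ n ∈ Finset.range N, (1 - q ^ (n + 1)) : ℝ) : ℂ) := by
      push_cast; rfl
    rw [e]
    refine ⟨Complex.ofReal_im _, ?_, ?_, ?_⟩ <;> rw [Complex.ofReal_re]
    · exact Finset.prod_nonneg fun n _ => sub_nonneg.2 (pow_le_one₀ hq0.le hq1.le)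
    · exact prod_lower q hq0.le hq1 N
    · exact Finset.prod_le_one (fun n _ => sub_nonneg.2 (pow_le_one₀ hq0.le hq1.le))
        fun n _ => by linarith [pow_pos hq0 (n+1)]
  obtain ⟨m1, m2, m3, m4⟩ := hm
  have hXr : X = (X.re : ℂ) := by apply Complex.ext <;> simp [m1]
  have hd2 : dl (t * I) = ((q * X.re ^ 24 : ℝ) : ℂ) := by
    rw [hd]; push_cast; rw [← hXr, hq]; push_cast; rfl
  have hdr : dr t = q * X.re ^ 24 := by rw [dr, hd2, Complex.ofReal_re]
  have hX0 : X.re ≠ 0 := by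
    intro h0
    have := dl_ne (t * I)
    rw [hd2, h0] at this
    simp at this
  refine ⟨by rw [hd2, hdr], ?_, ?_, ?_⟩
  · rw [hdr]; positivity
  · rw [hdr]
    have : X.re ^ 24 ≤ 1 := pow_le_one₀ m2 m4
    nlinarith
  · intro h3
    rw [hdr]
    have : 0 ≤ 1 - q / (1 - q) := by
      rw [sub_nonneg, div_le_one (by linarith)]; linarith
    gcongr

noncomputable def th (x : ℝ) : ℝ := 1 + 2 * ∑' n : ℕ, x ^ ((n + 1) ^ 2)
noncomputable def u2 (t : ℝ) : ℝ := ∑' n : ℕ, 2 * Real.exp (-Real.pi * ((n:ℝ) ^ 2 + n + 1 / 4) * t)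

lemma th_summable (x : ℝ) (h : |x| < 1) : Summable (fun n : ℕ => |x| ^ ((n + 1) ^ 2)) := by
  refine Summable.of_nonneg_of_le (fun n => by positivity) (fun n => ?_)
    (summable_geometric_of_lt_one (abs_nonneg x) h)
  exact pow_le_pow_of_le_one (abs_nonneg x) h.le (by nlinarith)

lemma th_summable' (x : ℝ) (h : |x| < 1) : Summable (fun n : ℕ => x ^ ((n + 1) ^ 2)) :=
  Summable.of_norm (by simpa using th_summable x h)

lemma th_abs_le (x : ℝ) (h : |x| < 1) : |th x| ≤ th |x| := by
  rw [th, th]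
  have h1 := norm_tsum_le_tsum_norm (f := fun n : ℕ => x ^ ((n + 1) ^ 2)) (by simpa using th_summable x h)
  simp only [Real.norm_eq_abs, abs_pow] at h1
  refine (abs_add_le _ _).trans ?_
  rw [abs_one, abs_mul, abs_two]; linarith

lemma th_ge (x : ℝ) (h0 : 0 ≤ x) (h : x < 1) : 1 + 2 * x ≤ th x := by
  have hs := th_summable' x (by rwa [abs_of_nonneg h0])
  have := hs.sum_le_tsum (Finset.range 1) (fun n _ => by positivity)
  simp at this
  rw [th]; linarith

lemma th_near (x : ℝ) (h : |x| < 1) : |th x - (1 + 2 * x)| ≤ 2 * |x| ^ 4 / (1 - |x|) := by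
  have hs := th_summable' x h
  have e : th x - (1 + 2 * x) = 2 * ∑' n : ℕ, x ^ ((n + 1 + 1) ^ 2) := by
    rw [th, hs.tsum_eq_zero_add]; simp; ring
  rw [e, abs_mul, abs_two, mul_div_assoc]
  gcongr
  have hg := (hasSum_geometric_of_lt_one (abs_nonneg x) h).mul_left (|x| ^ 4)
  rw [← div_eq_mul_inv] at hg
  refine tsum_of_norm_bounded (f := fun n : ℕ => x ^ ((n + 1 + 1) ^ 2)) hg fun n => ?_
  rw [Real.norm_eq_abs, abs_pow, ← pow_add]
  exact pow_le_pow_of_le_one (abs_nonneg x) h.le (by nlinarith)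

lemma t3_axis (t : ℝ) (ht : 0 < t) : t3 (t * I) = (th (pp t) : ℂ) := by
  rw [t3, jacobiTheta_eq_tsum_nat (by simpa), th]
  push_cast
  congr 3; ext n
  rw [pp, Complex.ofReal_exp, ← Complex.exp_nat_mul]
  congr 1; push_cast
  linear_combination (Real.pi * t * ((n:ℂ) + 1) ^ 2) * I_sq

lemma t4_axis (t : ℝ) (ht : 0 < t) : t4 (t * I) = (th (-pp t) : ℂ) := by
  rw [t4, jacobiTheta_eq_tsum_nat (by simpa), th]
  push_cast
  congr 3; ext n
  have : (-(pp t:ℂ)) = cexp (Real.pi * I * (t * I + 1)) := by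
    rw [mul_add, Complex.exp_add, mul_one, Complex.exp_pi_mul_I, pp, Complex.ofReal_exp]
    rw [mul_neg_one]; congr 2; push_cast
    linear_combination (-(Real.pi * t : ℂ)) * I_sq
  rw [this, ← Complex.exp_nat_mul]
  congr 1; push_cast; ring

lemma t2_axis_hasSum (t : ℝ) (ht : 0 < t) :
    HasSum (fun n : ℕ => ((2 * Real.exp (-Real.pi * ((n:ℝ) ^ 2 + n + 1 / 4) * t) : ℝ) : ℂ)) (t2 (t * I)) := by
  refine (t2_hasSum (t * I) (by simpa)).congr_fun fun n => ?_
  rw [Complex.ofReal_mul, Complex.ofReal_exp]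
  push_cast
  congr 2
  linear_combination (-(Real.pi * ((n:ℂ) ^ 2 + n + 1 / 4) * t : ℂ)) * I_sq

lemma t2_axis (t : ℝ) (ht : 0 < t) : t2 (t * I) = (u2 t : ℂ) ∧ 2 * Real.exp (-Real.pi * t / 4) ≤ u2 t := by
  have h := t2_axis_hasSum t ht
  have hs := Complex.summable_ofReal.1 h.summable
  refine ⟨by rw [u2, Complex.ofReal_tsum, h.tsum_eq], ?_⟩
  have := hs.sum_le_tsum (Finset.range 1) (fun n _ => by positivity)
  simp only [Finset.range_one, Finset.sum_singleton] at this
  refine le_trans (le_of_eq ?_) this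
  congr 2; push_cast; ring

noncomputable def h2 (t : ℝ) : ℝ := u2 t ^ 4
noncomputable def h3 (t : ℝ) : ℝ := th (pp t) ^ 4
noncomputable def h4 (t : ℝ) : ℝ := th (-pp t) ^ 4
lemma H2_axis (t : ℝ) (ht : 0 < t) : H2 (t * I) = (h2 t : ℂ) := by
  rw [H2, (t2_axis t ht).1, h2]; push_cast; rfl
lemma H3_axis (t : ℝ) (ht : 0 < t) : H3 (t * I) = (h3 t : ℂ) := by
  rw [H3, t3_axis t ht, h3]; push_cast; rfl
lemma H4_axis (t : ℝ) (ht : 0 < t) : H4 (t * I) = (h4 t : ℂ) := by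
  rw [H4, t4_axis t ht, h4]; push_cast; rfl

lemma neg_inv_axis (t : ℝ) : -1 / ((t:ℂ) * I) = ((1 / t : ℝ) : ℂ) * I := by
  push_cast
  rw [neg_div, one_div, mul_inv, inv_I]; ring

lemma h2_ge (t : ℝ) (ht : 0 < t) : 16 * pp t ≤ h2 t := by
  have h := pow_le_pow_left₀ (by positivity) (t2_axis t ht).2 4
  refine le_trans (le_of_eq ?_) h
  rw [mul_pow, ← Real.exp_nat_mul, pp]
  congr 1
  · norm_num
  · congr 1; push_cast; ring

lemma h2_le (t : ℝ) (ht : 0 < t) : h2 t ≤ 16 * pp t / (1 - pp t ^ 2) ^ 4 := by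
  have := norm_H2 (t * I) (by simpa)
  rw [H2_axis t ht, axis_im, Complex.norm_real] at this
  exact (le_abs_self _).trans this

lemma h4_pos (t : ℝ) (ht : 0 < t) : 0 < h4 t := by
  have hi : 0 < 1 / t := by positivity
  have h := H4_S (((1 / t : ℝ) : ℂ) * I) (by simpa)
  rw [neg_inv_axis, one_div_one_div, H4_axis t ht, H2_axis _ hi] at h
  have h' : h4 t = (1 / t) ^ 2 * h2 (1 / t) := by
    have : (h4 t : ℂ) = (((1 / t) ^ 2 * h2 (1 / t) : ℝ) : ℂ) := by
      rw [h, mul_pow, I_sq]; push_cast; ring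
    exact_mod_cast this
  rw [h']
  have h5 := h2_ge _ hi
  have h6 := pp_pos (1 / t)
  have : 0 < h2 (1 / t) := by linarith
  positivity

lemma h4_le_h3 (t : ℝ) (ht : 0 < t) : h4 t ≤ h3 t := by
  have hp := pp_lt t ht
  have hp0 := pp_pos t
  have h := th_abs_le (-pp t) (by rw [abs_neg, abs_of_pos hp0]; exact hp)
  rw [abs_neg, abs_of_pos hp0] at h
  rw [h3, h4, ← Even.pow_abs (by decide) (th (-pp t))]
  gcongr

noncomputable def er (t : ℝ) : ℝ := 1 + 240 * sr 3 (pp t ^ 2)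
noncomputable def nr (t : ℝ) : ℝ := -24 * sr 1 (pp t ^ 2) + 240 * sr 3 (pp t ^ 2)
    - 5760 * sr 1 (pp t ^ 2) * sr 3 (pp t ^ 2) + 504 * sr 5 (pp t ^ 2)
noncomputable def f0 (t : ℝ) : ℝ := nr t ^ 2 / dr t
noncomputable def kr (t : ℝ) : ℝ :=
  h2 t ^ 2 * (h2 t * (h3 t ^ 2 + h4 t ^ 2) + h3 t ^ 3 - h4 t ^ 3) / (2 * dr t)
noncomputable def ps (t : ℝ) : ℝ :=
  ((h3 t + h4 t) * h3 t ^ 2 * h4 t ^ 2 + (h4 t - h2 t) * h2 t ^ 2 * h4 t ^ 2) / (2 * dr t)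
noncomputable def far (t : ℝ) : ℝ :=
  -t ^ 2 * f0 t + 12 / Real.pi * t * (er t * nr t / dr t) - 36 / Real.pi ^ 2 * (er t ^ 2 / dr t)

lemma e4_axis (t : ℝ) (ht : 0 < t) : e4 (t * I) = (er t : ℂ) := by
  rw [e4_q _ (by simpa), sA_axis, er]; push_cast; rfl
lemma nn_axis (t : ℝ) (ht : 0 < t) : nn (t * I) = (nr t : ℂ) := by
  rw [nn_eq _ (by simpa), sA_axis, sA_axis, sA_axis, nr]; push_cast; rfl
lemma p0_axis (t : ℝ) (ht : 0 < t) : p0 (t * I) = (f0 t : ℂ) := by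
  rw [p0, nn_axis t ht, (dl_axis t ht).1, f0]; push_cast; rfl
lemma kS_axis (t : ℝ) (ht : 0 < t) : kS (t * I) = (kr t : ℂ) := by
  rw [kS, H2_axis t ht, H3_axis t ht, H4_axis t ht, (dl_axis t ht).1, kr]; push_cast; rfl
lemma ps_axis (t : ℝ) (ht : 0 < t) : psI (t * I) = (ps t : ℂ) := by
  rw [psI, H2_axis t ht, H3_axis t ht, H4_axis t ht, (dl_axis t ht).1, ps]; push_cast; rfl
lemma fa_axis (t : ℝ) (ht : 0 < t) : fa (t * I) = (far t : ℂ) := by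
  rw [fa_eq _ (by simpa), pm2, pm4, p0_axis t ht, e4_axis t ht, nn_axis t ht, (dl_axis t ht).1, far]
  push_cast
  linear_combination (t ^ 2 * (f0 t : ℂ) - 12 / Real.pi * t * (er t * nr t / dr t : ℂ)) * I_sq

lemma far_inv (t : ℝ) (ht : 0 < t) : far t = -t ^ 2 * f0 (1 / t) := by
  have h := fa_axis t ht
  rw [fa, neg_inv_axis, p0_axis _ (by positivity)] at h
  have : (far t : ℂ) = ((-t ^ 2 * f0 (1 / t) : ℝ) : ℂ) := by
    rw [← h, mul_pow, I_sq]; push_cast; ring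
  exact_mod_cast this

lemma ps_inv (t : ℝ) (ht : 0 < t) : ps t = t ^ 2 * kr (1 / t) := by
  have h := coreB.inv (t * I) (by simpa)
  rw [neg_inv_axis, kS_axis _ (by positivity), ps_axis t ht] at h
  have : (ps t : ℂ) = ((t ^ 2 * kr (1 / t) : ℝ) : ℂ) := by
    rw [h, mul_pow, I_sq]; push_cast; ring
  exact_mod_cast this

lemma kr_pos (t : ℝ) (ht : 0 < t) : 0 < kr t := by
  have a := h2_ge t ht
  have b := pp_pos t
  have c := h4_pos t ht
  have d := h4_le_h3 t ht
  have e := (dl_axis t ht).2.1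
  have g : h4 t ^ 3 ≤ h3 t ^ 3 := by gcongr
  have h2p : 0 < h2 t := by linarith
  rw [kr]
  apply div_pos _ (by positivity)
  apply mul_pos (by positivity)
  have : 0 < h2 t * (h3 t ^ 2 + h4 t ^ 2) := by positivity
  linarith

lemma f0_nonneg (t : ℝ) (ht : 0 < t) : 0 ≤ f0 t := by
  have e := (dl_axis t ht).2.1
  rw [f0]; positivity

lemma A_neg (t : ℝ) (ht : 0 < t) : far t - 36 / Real.pi ^ 2 * ps t < 0 := by
  have hi : 0 < 1 / t := by positivity
  rw [far_inv t ht, ps_inv t ht]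
  have := kr_pos _ hi
  have h0 := f0_nonneg _ hi
  have h1 : 0 ≤ t ^ 2 * f0 (1 / t) := by positivity
  have h2 : 0 < 36 / Real.pi ^ 2 * (t ^ 2 * kr (1 / t)) := by
    have := Real.pi_pos
    positivity
  linarith
end SP

namespace SP
open Complex Set Filter Topology ArithmeticFunction

lemma sr_lo (k : ℕ) (q : ℝ) (h0 : 0 ≤ q) (h1 : q < 1) : q + (1 + 2 ^ k) * q ^ 2 ≤ sr k q := by
  have := (sr_summable k q h0 h1).sum_le_tsum (Finset.range 2) (fun n _ => by positivity)
  rw [sr]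
  refine le_trans (le_of_eq ?_) this
  have h2 : sigma k 2 = 1 + 2 ^ k := by
    rw [sigma_apply, Nat.Prime.divisors Nat.prime_two]; simp
  rw [Finset.sum_range_succ, Finset.sum_range_one]
  simp [h2]

lemma pow6 (n : ℕ) : (n + 3) ^ 6 ≤ 27 ^ (n + 2) := by
  induction n with
  | zero => norm_num
  | succ n ih =>
    have h : (n + 1 + 3) ^ 6 ≤ 27 * (n + 3) ^ 6 := by
      have h1 : 3 * (n + 1 + 3) ≤ 4 * (n + 3) + 0 := by omega
      have h2 := Nat.pow_le_pow_left h1 6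
      rw [add_zero, mul_pow, mul_pow] at h2
      omega
    calc _ ≤ _ := h
      _ ≤ 27 * 27 ^ (n + 2) := by gcongr
      _ = _ := by ring

lemma sr_hi (k : ℕ) (hk : k ≤ 5) (q : ℝ) (h0 : 0 ≤ q) (h1 : q ≤ 187/100000) :
    sr k q ≤ q + (1 + 2 ^ k) * q ^ 2 + 770 * q ^ 3 := by
  have hs := sr_summable k q h0 (by linarith)
  have h2 : sigma k 2 = 1 + 2 ^ k := by
    rw [sigma_apply, Nat.Prime.divisors Nat.prime_two]; simp
  have h27 : 27 * q < 1 := by linarith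
  have hg := (hasSum_geometric_of_lt_one (by positivity : 0 ≤ 27 * q) h27).mul_left (729 * q ^ 3)
  have ht : ∑' n : ℕ, (sigma k (n + 2 + 1) : ℝ) * q ^ (n + 2 + 1) ≤ 729 * q ^ 3 * (1 - 27 * q)⁻¹ := by
    rw [← hg.tsum_eq]
    refine Summable.tsum_le_tsum (fun n => ?_) ((summable_nat_add_iff 2).2 hs) hg.summable
    have a1 : (sigma k (n + 2 + 1) : ℝ) ≤ 27 ^ (n + 2) := by
      have : sigma k (n + 2 + 1) ≤ 27 ^ (n + 2) :=
        (sigma_le_pow_succ k _).trans ((Nat.pow_le_pow_right (by omega) (by omega : k + 1 ≤ 6)).trans (pow6 n))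
      exact_mod_cast this
    calc _ ≤ (27:ℝ) ^ (n + 2) * q ^ (n + 2 + 1) := by gcongr
      _ = _ := by rw [mul_pow]; ring
  have h3 : 729 * q ^ 3 * (1 - 27 * q)⁻¹ ≤ 770 * q ^ 3 := by
    rw [← div_eq_mul_inv, div_le_iff₀ (by linarith)]
    have : 0 ≤ q ^ 3 := by positivity
    nlinarith
  have := hs.sum_add_tsum_nat_add 2
  rw [Finset.sum_range_succ, Finset.sum_range_one] at this
  rw [sr, ← this]
  simp [h2] at this ⊢
  linarith

lemma exp_pi_ge : (23.1375:ℝ) ≤ Real.exp Real.pi := by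
  have h1 : Real.exp Real.pi = Real.exp 1 ^ 3 * Real.exp (Real.pi - 3) := by
    rw [← Real.exp_nat_mul, ← Real.exp_add]; congr 1; push_cast; ring
  have h2 : (1.15197:ℝ) ≤ Real.exp (Real.pi - 3) := by
    have := Real.pi_gt_d4
    have h := Real.sum_le_exp_of_nonneg (by linarith : (0:ℝ) ≤ Real.pi - 3) 4
    norm_num [Finset.sum_range_succ, Nat.factorial] at h
    nlinarith [pow_pos (by linarith : (0:ℝ) < Real.pi - 3) 2, pow_le_pow_left₀ (by norm_num) (by linarith : (0.1415:ℝ) ≤ Real.pi - 3) 3, pow_le_pow_left₀ (by norm_num) (by linarith : (0.1415:ℝ) ≤ Real.pi - 3) 2]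
  have h3 : (20.0855:ℝ) ≤ Real.exp 1 ^ 3 :=
    le_trans (by norm_num) (pow_le_pow_left₀ (by norm_num) Real.exp_one_gt_d9.le 3)
  rw [h1]
  calc (23.1375:ℝ) ≤ 20.0855 * 1.15197 := by norm_num
    _ ≤ _ := by gcongr

lemma pp1 : pp 1 ≤ 0.04322 := by
  rw [pp, mul_one, Real.exp_neg]
  have := exp_pi_ge
  rw [inv_le_comm₀ (Real.exp_pos _) (by norm_num)]
  refine le_trans (by norm_num) this

lemma pp_le (t : ℝ) (ht : 1 ≤ t) : pp t ≤ pp 1 := by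
  rw [pp, pp]; apply Real.exp_le_exp.2; nlinarith [Real.pi_pos]

/-- bounds of powers -/
lemma pw (p : ℝ) (h0 : 0 < p) (h1 : p ≤ 0.04322) (n : ℕ) : p ^ (n + 1) ≤ 0.04322 * p ^ n ∧ 0 < p ^ n := by
  refine ⟨?_, by positivity⟩
  rw [pow_succ, mul_comm]; gcongr

lemma bern (n : ℕ) (x : ℝ) (h : x ≤ 1) : 1 - n * x ≤ (1 - x) ^ n := by
  have := one_add_mul_le_pow (by linarith : -2 ≤ -x) n
  simpa [sub_eq_add_neg] using this


lemma dr_lo (t : ℝ) (ht : 1 ≤ t) :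
    pp t ^ 2 * (1 - 24 * pp t ^ 2 - 25 * pp t ^ 4) ≤ dr t := by
  have h := (dl_axis t (by linarith)).2.2.2
  have h0 := pp_pos t
  have h1 := (pp_le t ht).trans pp1
  have w := pw _ h0 h1
  set p := pp t
  obtain ⟨w1, w1'⟩ := w 1
  obtain ⟨w2, w2'⟩ := w 2
  obtain ⟨w3, w3'⟩ := w 3
  obtain ⟨w4, w4'⟩ := w 4
  obtain ⟨w5, w5'⟩ := w 5
  norm_num at w1 w2 w3 w4 w5 w1'
  refine le_trans ?_ (h (by linarith))
  gcongr
  have hx : p ^ 2 / (1 - p ^ 2) ≤ p ^ 2 + 1.01 * p ^ 4 := by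
    rw [div_le_iff₀ (by linarith)]
    nlinarith
  have := bern 24 (p ^ 2 / (1 - p ^ 2)) (by linarith)
  push_cast at this
  linarith

lemma nr_bd (t : ℝ) (ht : 1 ≤ t) : 720 * pp t ^ 2 ≤ nr t ∧ nr t ≤ 747 * pp t ^ 2 := by
  have h0 := pp_pos t
  have h1 := (pp_le t ht).trans pp1
  rw [nr]
  have hq : pp t ^ 2 ≤ 0.001868 := by nlinarith
  have hq0 : 0 < pp t ^ 2 := by positivity
  set q := pp t ^ 2
  have a1 := sr_lo 1 q hq0.le (by linarith)
  have a3 := sr_lo 3 q hq0.le (by linarith)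
  have a5 := sr_lo 5 q hq0.le (by linarith)
  have b1 := sr_hi 1 (by norm_num) q hq0.le (by linarith)
  have b3 := sr_hi 3 (by norm_num) q hq0.le (by linarith)
  have b5 := sr_hi 5 (by norm_num) q hq0.le (by linarith)
  set s1 := sr 1 q
  set s3 := sr 3 q
  set s5 := sr 5 q
  have q2 : q ^ 2 ≤ 0.001868 * q := by nlinarith
  have q3 : q ^ 3 ≤ 0.001868 * q ^ 2 := by nlinarith [pow_pos hq0 2]
  have q2' := pow_pos hq0 2
  have q3' := pow_pos hq0 3
  norm_num at a1 a3 a5 b1 b3 b5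
  have c1 : q ≤ s1 := by linarith
  have c3 : q ≤ s3 := by linarith
  have d1 : s1 ≤ 1.02 * q := by linarith
  have d3 : s3 ≤ 1.03 * q := by linarith
  have m1 : q * q ≤ s1 * s3 := mul_le_mul c1 c3 hq0.le (by linarith)
  have m2 : s1 * s3 ≤ (1.02 * q) * (1.03 * q) := mul_le_mul d1 d3 (by linarith) (by positivity)
  constructor <;> nlinarith

lemma er_bd (t : ℝ) (ht : 1 ≤ t) : 1 + 240 * pp t ^ 2 ≤ er t ∧
    er t ≤ 1 + 240 * pp t ^ 2 + 2510 * pp t ^ 4 := by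
  have h0 := pp_pos t
  have h1 := (pp_le t ht).trans pp1
  rw [er]
  have hq : pp t ^ 2 ≤ 0.001868 := by nlinarith
  have hq0 : 0 < pp t ^ 2 := by positivity
  have e4 : pp t ^ 4 = (pp t ^ 2) ^ 2 := by ring
  rw [e4]
  set q := pp t ^ 2
  have a3 := sr_lo 3 q hq0.le (by linarith)
  have b3 := sr_hi 3 (by norm_num) q hq0.le (by linarith)
  have q3 : q ^ 3 ≤ 0.001868 * q ^ 2 := by nlinarith [pow_pos hq0 2]
  have q2' := pow_pos hq0 2
  norm_num at a3 b3
  constructor <;> linarith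

lemma dr_lo' (t : ℝ) (ht : 1 ≤ t) : 0.955 * pp t ^ 2 ≤ dr t := by
  have h := dr_lo t ht
  have h0 := pp_pos t
  have h1 := (pp_le t ht).trans pp1
  have hq : pp t ^ 2 ≤ 0.001868 := by nlinarith
  have hq0 : 0 < pp t ^ 2 := by positivity
  have e4 : pp t ^ 4 = (pp t ^ 2) ^ 2 := by ring
  rw [e4] at h
  set q := pp t ^ 2
  refine le_trans ?_ h
  rw [mul_comm]; gcongr; nlinarith

lemma f0_hi (t : ℝ) (ht : 1 ≤ t) : f0 t ≤ 586000 * pp t ^ 2 := by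
  have h := dr_lo' t ht
  have hq0 : 0 < pp t ^ 2 := by have := pp_pos t; positivity
  obtain ⟨n1, n2⟩ := nr_bd t ht
  rw [f0, div_le_iff₀ (by linarith)]
  have : nr t ^ 2 ≤ (747 * pp t ^ 2) ^ 2 := pow_le_pow_left₀ (by linarith) n2 2
  nlinarith

lemma phi_bd (t : ℝ) (ht : 1 ≤ t) : 720 * (1 + 240 * pp t ^ 2) ≤ er t * nr t / dr t ∧
    er t * nr t / dr t ≤ 1200 := by
  have h := dr_lo' t ht
  have h0 := pp_pos t
  have h1 := (pp_le t ht).trans pp1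
  have hq : pp t ^ 2 ≤ 0.001868 := by nlinarith
  have hq0 : 0 < pp t ^ 2 := by positivity
  obtain ⟨_, hd0, hd, _⟩ := dl_axis t (by linarith)
  obtain ⟨n1, n2⟩ := nr_bd t ht
  obtain ⟨e1, e2⟩ := er_bd t ht
  have e4 : pp t ^ 4 = (pp t ^ 2) ^ 2 := by ring
  rw [e4] at e2
  set q := pp t ^ 2
  constructor
  · rw [le_div_iff₀ hd0]
    calc 720 * (1 + 240 * q) * dr t ≤ 720 * (1 + 240 * q) * q := by gcongr
      _ = (1 + 240 * q) * (720 * q) := by ring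
      _ ≤ _ := by gcongr; linarith
  · rw [div_le_iff₀ hd0]
    have : er t ≤ 1.5 := by nlinarith
    calc er t * nr t ≤ 1.5 * (747 * q) := by gcongr; linarith
      _ ≤ _ := by nlinarith

lemma ee_bd (t : ℝ) (ht : 1 ≤ t) : 1 / pp t ^ 2 ≤ er t ^ 2 / dr t ∧
    er t ^ 2 / dr t ≤ 1 / pp t ^ 2 + 504 + 82000 * pp t ^ 2 := by
  have h := dr_lo t ht
  have h0 := pp_pos t
  have h1 := (pp_le t ht).trans pp1
  have hq : pp t ^ 2 ≤ 0.001868 := by nlinarith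
  have hq0 : 0 < pp t ^ 2 := by positivity
  obtain ⟨_, hd0, hd, _⟩ := dl_axis t (by linarith)
  obtain ⟨e1, e2⟩ := er_bd t ht
  have e4 : pp t ^ 4 = (pp t ^ 2) ^ 2 := by ring
  rw [e4] at e2 h
  set q := pp t ^ 2
  have q2 : q ^ 2 ≤ 0.001868 * q := by nlinarith
  have q2' := pow_pos hq0 2
  have q3' := pow_pos hq0 3
  have q3 : q ^ 3 ≤ 0.001868 * q ^ 2 := by nlinarith
  have q4 : q ^ 4 ≤ 0.001868 * q ^ 3 := by nlinarith
  constructor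
  · apply div_le_div₀ (by positivity) _ hd0 hd
    nlinarith
  · rw [div_le_iff₀ hd0]
    have a : er t ^ 2 ≤ (1 + 240 * q + 2510 * q ^ 2) ^ 2 := pow_le_pow_left₀ (by linarith) e2 2
    refine a.trans (le_trans ?_ (mul_le_mul_of_nonneg_left h (by positivity)))
    have : (1 / q + 504 + 82000 * q) * (q * (1 - 24 * q - 25 * q ^ 2)) =
      (1 + 504 * q + 82000 * q ^ 2) * (1 - 24 * q - 25 * q ^ 2) := by field_simp
    rw [this]
    nlinarith
end SP

namespace SP
open Complex Set Filter Topology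

lemma u_bd (t : ℝ) (ht : 1 ≤ t) : 1 + 2 * pp t ≤ th (pp t) ∧ th (pp t) ≤ 1 + 2 * pp t + 2.1 * pp t ^ 4
    ∧ 1 - 2 * pp t - 2.1 * pp t ^ 4 ≤ th (-pp t) ∧ th (-pp t) ≤ 1 - 2 * pp t + 2.1 * pp t ^ 4 := by
  have h0 := pp_pos t
  have h1 := (pp_le t ht).trans pp1
  have a := th_near (pp t) (by rw [abs_of_pos h0]; linarith)
  have b := th_near (-pp t) (by rw [abs_neg, abs_of_pos h0]; linarith)
  rw [abs_neg] at b
  rw [abs_of_pos h0] at a b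
  have c : 2 * pp t ^ 4 / (1 - pp t) ≤ 2.1 * pp t ^ 4 := by
    rw [div_le_iff₀ (by linarith)]
    nlinarith [pow_pos h0 4]
  have a' := abs_le.1 (a.trans c)
  have b' := abs_le.1 (b.trans c)
  exact ⟨th_ge _ h0.le (by linarith), by linarith, by linarith, by linarith⟩

lemma pg (x e : ℝ) (hx : 0 ≤ x) (hx1 : x ≤ 1.1) (he : 0 ≤ e) (he1 : e ≤ 0.00001) :
    (x + e) ^ 4 ≤ x ^ 4 + 5.34 * e := by
  have a3 : x ^ 3 ≤ 1.1 ^ 3 := pow_le_pow_left₀ hx hx1 3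
  have a2 : x ^ 2 ≤ 1.1 ^ 2 := pow_le_pow_left₀ hx hx1 2
  have : (x + e) ^ 4 = x ^ 4 + (4 * x ^ 3 + 6 * (x ^ 2 * e) + 4 * (x * e ^ 2) + e ^ 3) * e := by ring
  rw [this]
  have e2 : e ^ 2 ≤ 0.00001 := by nlinarith
  have e3 : e ^ 3 ≤ 0.00001 := by
    have := pow_le_pow_left₀ he he1 3; linarith
  have b1 : x ^ 2 * e ≤ 1.1 ^ 2 * 0.00001 := by gcongr
  have b2 : x * e ^ 2 ≤ 1.1 * 0.00001 := by gcongr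
  have : 4 * x ^ 3 + 6 * (x ^ 2 * e) + 4 * (x * e ^ 2) + e ^ 3 ≤ 5.34 := by linarith
  gcongr

lemma pg' (x e : ℝ) (hx : 0 ≤ x - e) (hx1 : x ≤ 1) (he : 0 ≤ e) : x ^ 4 - 4 * e ≤ (x - e) ^ 4 := by
  have y : (x - e) ^ 3 ≤ 1 := pow_le_one₀ hx (by linarith)
  have y3 : x ^ 3 ≤ 1 := pow_le_one₀ (by linarith) hx1
  have y2 : x ^ 2 ≤ 1 := pow_le_one₀ (by linarith) hx1
  have z2 : (x - e) ^ 2 ≤ 1 := pow_le_one₀ (by linarith) (by linarith)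
  have h : x ^ 4 - (x - e) ^ 4 = (x ^ 3 + x ^ 2 * (x - e) + x * (x - e) ^ 2 + (x - e) ^ 3) * e := by ring
  have m1 : x ^ 2 * (x - e) ≤ 1 * 1 := mul_le_mul y2 (by linarith) hx (by norm_num)
  have m2 : x * (x - e) ^ 2 ≤ 1 * 1 := mul_le_mul hx1 z2 (by positivity) (by norm_num)
  have m3 : (x ^ 3 + x ^ 2 * (x - e) + x * (x - e) ^ 2 + (x - e) ^ 3) * e ≤ 4 * e := by
    gcongr; linarith
  linarith

lemma py (y : ℝ) (hy0 : 0 ≤ y) (hy1 : y ≤ 0.01) : (1 - y) ^ 8 ≤ 1 - 8 * y + 28 * y ^ 2 := by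
  have y3 : 0 ≤ y ^ 3 := by positivity
  have y4 : y ^ 4 ≤ 0.01 * y ^ 3 := by rw [pow_succ, mul_comm]; gcongr
  have s4 : (1 - y) ^ 4 ≤ 1 - 4 * y + 6 * y ^ 2 := by linarith
  calc (1 - y) ^ 8 = ((1 - y) ^ 4) ^ 2 := by ring
    _ ≤ (1 - 4 * y + 6 * y ^ 2) ^ 2 := pow_le_pow_left₀ (by positivity) s4 2
    _ ≤ _ := by linarith

lemma hh_bd (t : ℝ) (ht : 1 ≤ t) : 1 + 8 * pp t ≤ h3 t ∧ h3 t ≤ 1 + 9.1 * pp t ∧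
    1 - 8.004 * pp t ≤ h4 t ∧ h4 t ≤ 1 - 8 * pp t + 24 * pp t ^ 2 ∧ h3 t - h4 t ≤ 16.3 * pp t ∧
    2 + 48 * pp t ^ 2 ≤ h3 t + h4 t ∧ h3 t + h4 t ≤ 2 + 48 * pp t ^ 2 + 60 * pp t ^ 4 := by
  obtain ⟨a1, a2, a3, a4⟩ := u_bd t ht
  have h0 := pp_pos t
  have h1 := (pp_le t ht).trans pp1
  have w := pw _ h0 h1
  rw [h3, h4]
  set p := pp t
  obtain ⟨w1, w1'⟩ := w 1
  obtain ⟨w2, w2'⟩ := w 2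
  obtain ⟨w3, w3'⟩ := w 3
  obtain ⟨w4, w4'⟩ := w 4
  obtain ⟨w5, w5'⟩ := w 5
  obtain ⟨w6, w6'⟩ := w 6
  obtain ⟨w7, w7'⟩ := w 7
  norm_num at w1 w2 w3 w4 w5 w6 w7 w1'
  have l3 : (1 + 2 * p) ^ 4 ≤ th p ^ 4 := pow_le_pow_left₀ (by positivity) a1 4
  have u3 : th p ^ 4 ≤ (1 + 2 * p + 2.1 * p ^ 4) ^ 4 := pow_le_pow_left₀ (by linarith) a2 4
  have u4 : th (-p) ^ 4 ≤ (1 - 2 * p + 2.1 * p ^ 4) ^ 4 := pow_le_pow_left₀ (by linarith) a4 4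
  have l4 : (1 - 2 * p - 2.1 * p ^ 4) ^ 4 ≤ th (-p) ^ 4 := pow_le_pow_left₀ (by linarith) a3 4
  have U3 := u3.trans (pg (1 + 2 * p) (2.1 * p ^ 4) (by positivity) (by linarith) (by positivity) (by linarith))
  have U4 := u4.trans (pg (1 - 2 * p) (2.1 * p ^ 4) (by linarith) (by linarith) (by positivity) (by linarith))
  have L4 := (pg' (1 - 2 * p) (2.1 * p ^ 4) (by linarith) (by linarith) (by positivity)).trans l4
  ring_nf at l3 U3 U4 L4 ⊢
  refine ⟨?_, ?_, ?_, ?_, ?_, ?_, ?_⟩ <;> linarith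

lemma M1_bd (t : ℝ) (ht : 1 ≤ t) : 1 - 8 * pp t ^ 2 - 790 * pp t ^ 4 ≤ (h3 t + h4 t) * h3 t ^ 2 * h4 t ^ 2 / 2 ∧
    (h3 t + h4 t) * h3 t ^ 2 * h4 t ^ 2 / 2 ≤ 1 - 8 * pp t ^ 2 := by
  obtain ⟨a1, a2, a3, a4⟩ := u_bd t ht
  obtain ⟨-, -, -, -, -, b1, b2⟩ := hh_bd t ht
  have e : (h3 t + h4 t) * h3 t ^ 2 * h4 t ^ 2 / 2 = (h3 t + h4 t) / 2 * (th (pp t) * th (-pp t)) ^ 8 := by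
    rw [h3, h4]; ring
  rw [e]
  have h0 := pp_pos t
  have h1 := (pp_le t ht).trans pp1
  have w := pw _ h0 h1
  set p := pp t
  obtain ⟨w1, w1'⟩ := w 1
  obtain ⟨w2, w2'⟩ := w 2
  obtain ⟨w3, w3'⟩ := w 3
  obtain ⟨w4, w4'⟩ := w 4
  obtain ⟨w5, w5'⟩ := w 5
  obtain ⟨w6, w6'⟩ := w 6
  obtain ⟨w7, w7'⟩ := w 7
  norm_num at w1 w2 w3 w4 w5 w6 w7 w1'
  have lo : 1 - (4 * p ^ 2 + 2.4 * p ^ 4) ≤ th p * th (-p) := by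
    calc _ ≤ (1 + 2 * p) * (1 - 2 * p - 2.1 * p ^ 4) := by nlinarith
      _ ≤ _ := by apply mul_le_mul a1 a3 <;> linarith
  have hi : th p * th (-p) ≤ 1 - (4 * p ^ 2 - 4.3 * p ^ 4) := by
    calc _ ≤ (1 + 2 * p + 2.1 * p ^ 4) * (1 - 2 * p + 2.1 * p ^ 4) := by
          apply mul_le_mul a2 a4 <;> linarith
      _ ≤ _ := by nlinarith
  set W := th p * th (-p)
  have lo8 : 1 - 32 * p ^ 2 - 19.2 * p ^ 4 ≤ W ^ 8 := by
    have := bern 8 (4 * p ^ 2 + 2.4 * p ^ 4) (by linarith)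
    have := pow_le_pow_left₀ (by linarith) lo 8
    push_cast at *; linarith
  have hi8 : W ^ 8 ≤ 1 - 32 * p ^ 2 + 483 * p ^ 4 := by
    refine (pow_le_pow_left₀ (by linarith) hi 8).trans ?_
    have hy0 : 0 ≤ 4 * p ^ 2 - 4.3 * p ^ 4 := by linarith
    have hy1 : 4 * p ^ 2 - 4.3 * p ^ 4 ≤ 0.01 := by linarith
    have hy2 : (4 * p ^ 2 - 4.3 * p ^ 4) ^ 2 ≤ 16 * p ^ 4 := by
      have := pow_le_pow_left₀ hy0 (by linarith : 4 * p ^ 2 - 4.3 * p ^ 4 ≤ 4 * p ^ 2) 2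
      refine this.trans (le_of_eq (by ring))
    have := py _ hy0 hy1
    linarith
  constructor
  · calc _ ≤ (1 + 24 * p ^ 2) * (1 - 32 * p ^ 2 - 19.2 * p ^ 4) := by linarith
      _ ≤ _ := by apply mul_le_mul (by linarith) lo8 <;> linarith
  · calc _ ≤ (1 + 24 * p ^ 2 + 30 * p ^ 4) * (1 - 32 * p ^ 2 + 483 * p ^ 4) := by
          apply mul_le_mul (by linarith) hi8 (by positivity); linarith
      _ ≤ _ := by linarith

lemma h2_hi (t : ℝ) (ht : 1 ≤ t) : h2 t ≤ 16 * pp t * (1 + 4.1 * pp t ^ 2) := by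
  refine (h2_le t (by linarith)).trans ?_
  have h0 := pp_pos t
  have h1 := (pp_le t ht).trans pp1
  set p := pp t
  have hq : p ^ 2 ≤ 0.001868 := by nlinarith
  have hq0 : 0 < p ^ 2 := by positivity
  rw [div_le_iff₀ (by apply pow_pos; linarith), mul_assoc]
  have := bern 4 (p ^ 2) (by linarith)
  have : 1 ≤ (1 + 4.1 * p ^ 2) * (1 - p ^ 2) ^ 4 := by
    push_cast at this
    calc 1 ≤ (1 + 4.1 * p ^ 2) * (1 - 4 * p ^ 2) := by nlinarith
      _ ≤ _ := by gcongr
  nlinarith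

lemma M2_bd (t : ℝ) (ht : 1 ≤ t) : 128 * pp t ^ 2 * (1 - 40.2 * pp t) ≤ (h4 t - h2 t) * h2 t ^ 2 * h4 t ^ 2 / 2 ∧
    (h4 t - h2 t) * h2 t ^ 2 * h4 t ^ 2 / 2 ≤ 128 * pp t ^ 2 * (1 - 40 * pp t + 530 * pp t ^ 2) := by
  obtain ⟨-, -, b1, b2, -, -, -⟩ := hh_bd t ht
  have c1 := h2_ge t (by linarith)
  have c2 := h2_hi t ht
  have h0 := pp_pos t
  have h1 := (pp_le t ht).trans pp1
  have w := pw _ h0 h1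
  set p := pp t
  obtain ⟨w1, w1'⟩ := w 1
  obtain ⟨w2, w2'⟩ := w 2
  obtain ⟨w3, w3'⟩ := w 3
  obtain ⟨w4, w4'⟩ := w 4
  obtain ⟨w5, w5'⟩ := w 5
  obtain ⟨w6, w6'⟩ := w 6
  obtain ⟨w7, w7'⟩ := w 7
  norm_num at w1 w2 w3 w4 w5 w6 w7 w1'
  have d1 : 1 - 24.14 * p ≤ h4 t - h2 t := by nlinarith
  have d2 : h4 t - h2 t ≤ 1 - 24 * p + 24 * p ^ 2 := by linarith
  have f1 : 256 * p ^ 2 ≤ h2 t ^ 2 := by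
    have := pow_le_pow_left₀ (by positivity) c1 2; linarith
  have f2 : h2 t ^ 2 ≤ 256 * p ^ 2 * (1 + 8.3 * p ^ 2) := by
    have := pow_le_pow_left₀ (by linarith) c2 2
    ring_nf at this ⊢; linarith
  have g1 : 1 - 16.008 * p ≤ h4 t ^ 2 := by
    have := pow_le_pow_left₀ (by linarith) b1 2; ring_nf at this ⊢; linarith
  have g2 : h4 t ^ 2 ≤ 1 - 16 * p + 112 * p ^ 2 - 359 * p ^ 3 := by
    have := pow_le_pow_left₀ (by linarith) b2 2; ring_nf at this ⊢; linarith
  constructor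
  · rcases le_or_gt 0 (1 - 24.14 * p) with d0 | d0
    · calc _ ≤ (1 - 24.14 * p) * (256 * p ^ 2) * (1 - 16.008 * p) / 2 := by ring_nf; linarith
        _ ≤ _ := by
          have : 0 ≤ 1 - 16.008 * p := by linarith
          have : 0 ≤ h4 t - h2 t := by linarith
          gcongr
    · have z1 : h2 t ^ 2 * h4 t ^ 2 ≤ (256 * p ^ 2 * (1 + 8.3 * p ^ 2)) * 1 := by
        apply mul_le_mul f2 (by linarith) (by positivity) (by positivity)
      have z2 : h2 t ^ 2 * h4 t ^ 2 ≤ 300 * p ^ 2 := by linarith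
      have z3 : -0.05 * (h2 t ^ 2 * h4 t ^ 2) ≤ (h4 t - h2 t) * (h2 t ^ 2 * h4 t ^ 2) := by
        apply mul_le_mul_of_nonneg_right _ (by positivity); linarith
      have z4 : 128 * p ^ 2 * (1 - 40.2 * p) ≤ 128 * p ^ 2 * (- 0.6) := by gcongr; linarith
      linarith
  · calc _ ≤ (1 - 24 * p + 24 * p ^ 2) * (256 * p ^ 2 * (1 + 8.3 * p ^ 2)) * (1 - 16 * p + 112 * p ^ 2 - 359 * p ^ 3) / 2 := by
          have : 0 ≤ 1 - 24 * p + 24 * p ^ 2 := by linarith [sq_nonneg (p - 0.04322)]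
          gcongr
      _ ≤ _ := by
        ring_nf; linarith [(w 8).1, (w 8).2, (w 9).2]

lemma ps_bd (t : ℝ) (ht : 1 ≤ t) : 1 / pp t ^ 2 + 100 - 5120 * pp t ≤ ps t ∧
    ps t ≤ 1 / pp t ^ 2 + 190 - 5120 * pp t + 71000 * pp t ^ 2 := by
  obtain ⟨a1, a2⟩ := M1_bd t ht
  obtain ⟨b1, b2⟩ := M2_bd t ht
  have hd := dr_lo t ht
  obtain ⟨_, hd0, hd1, _⟩ := dl_axis t (by linarith)
  have e : ps t = ((h3 t + h4 t) * h3 t ^ 2 * h4 t ^ 2 / 2 + (h4 t - h2 t) * h2 t ^ 2 * h4 t ^ 2 / 2) / dr t := by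
    rw [ps]; field_simp
  rw [e]
  set M1 := (h3 t + h4 t) * h3 t ^ 2 * h4 t ^ 2 / 2
  set M2 := (h4 t - h2 t) * h2 t ^ 2 * h4 t ^ 2 / 2
  have h0 := pp_pos t
  have h1 := (pp_le t ht).trans pp1
  have w := pw _ h0 h1
  set p := pp t
  obtain ⟨w1, w1'⟩ := w 1
  obtain ⟨w2, w2'⟩ := w 2
  obtain ⟨w3, w3'⟩ := w 3
  obtain ⟨w4, w4'⟩ := w 4
  obtain ⟨w5, w5'⟩ := w 5
  obtain ⟨w6, w6'⟩ := w 6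
  obtain ⟨w7, w7'⟩ := w 7
  norm_num at w1 w2 w3 w4 w5 w6 w7 w1'
  constructor
  · rw [le_div_iff₀ hd0]
    have k : 0 ≤ 1 / p ^ 2 + 100 - 5120 * p := by
      have : 535 ≤ 1 / p ^ 2 := by rw [le_div_iff₀ (by positivity)]; linarith
      linarith
    refine (mul_le_mul_of_nonneg_left hd1 k).trans ?_
    have : (1 / p ^ 2 + 100 - 5120 * p) * p ^ 2 = 1 + 100 * p ^ 2 - 5120 * p ^ 3 := by field_simp
    rw [this]
    ring_nf at b1 a1 ⊢
    linarith
  · rw [div_le_iff₀ hd0]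
    have k : 0 ≤ 1 / p ^ 2 + 190 - 5120 * p + 71000 * p ^ 2 := by
      have : 535 ≤ 1 / p ^ 2 := by rw [le_div_iff₀ (by positivity)]; linarith
      linarith
    refine le_trans ?_ (mul_le_mul_of_nonneg_left hd k)
    have : (1 / p ^ 2 + 190 - 5120 * p + 71000 * p ^ 2) * (p ^ 2 * (1 - 24 * p ^ 2 - 25 * p ^ 4)) =
      (1 + 190 * p ^ 2 - 5120 * p ^ 3 + 71000 * p ^ 4) * (1 - 24 * p ^ 2 - 25 * p ^ 4) := by field_simp
    rw [this]
    ring_nf at b2 a2 ⊢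
    linarith [(w 8).1, (w 8).2]

lemma kr_bd (t : ℝ) (ht : 1 ≤ t) : 7100 * pp t ≤ kr t ∧ kr t ≤ 13500 * pp t := by
  obtain ⟨a1, a2, a3, a4, a5, -, -⟩ := hh_bd t ht
  have c1 := h2_ge t (by linarith)
  have c2 := h2_hi t ht
  have hd := dr_lo' t ht
  obtain ⟨_, hd0, hd1, _⟩ := dl_axis t (by linarith)
  have h0 := pp_pos t
  have h1 := (pp_le t ht).trans pp1
  have w := pw _ h0 h1
  rw [kr]
  set p := pp t
  obtain ⟨w1, w1'⟩ := w 1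
  obtain ⟨w2, w2'⟩ := w 2
  obtain ⟨w3, w3'⟩ := w 3
  obtain ⟨w4, w4'⟩ := w 4
  obtain ⟨w5, w5'⟩ := w 5
  norm_num at w1 w2 w3 w4 w5 w1'
  have f1 : 256 * p ^ 2 ≤ h2 t ^ 2 := by
    have := pow_le_pow_left₀ (by positivity) c1 2; linarith
  have c2' : h2 t ≤ 16.13 * p := by linarith
  have f2 : h2 t ^ 2 ≤ 260.2 * p ^ 2 := by
    have := pow_le_pow_left₀ (by linarith) c2' 2
    ring_nf at this ⊢; linarith
  have a4' : h4 t ≤ 1 - 6.96 * p := by linarith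
  have h40 : 0 ≤ h4 t := by linarith
  have h4le : h4 t ≤ 1 := by linarith
  have s3l : 1 + 16 * p ≤ h3 t ^ 2 := by
    have := pow_le_pow_left₀ (by linarith) a1 2; linarith
  have s3h : h3 t ^ 2 ≤ 1 + 18.2 * p + 82.9 * p ^ 2 := by
    have := pow_le_pow_left₀ (by linarith) a2 2; linarith
  have s4l : 1 - 16.008 * p ≤ h4 t ^ 2 := by
    have := pow_le_pow_left₀ (by linarith) a3 2; ring_nf at this ⊢; linarith
  have s4h : h4 t ^ 2 ≤ 1 - 13.92 * p + 48.5 * p ^ 2 := by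
    have := pow_le_pow_left₀ (by linarith) a4' 2; linarith
  have s34 : h3 t * h4 t ≤ (1 + 9.1 * p) * (1 - 6.96 * p) := mul_le_mul a2 a4' h40 (by positivity)
  have s34' : 0 ≤ h3 t * h4 t := mul_nonneg (by linarith) h40
  constructor
  · rw [le_div_iff₀ (by positivity)]
    have b1 : 24 * p ≤ h3 t ^ 3 - h4 t ^ 3 := by
      have : h4 t ^ 3 ≤ 1 := pow_le_one₀ h40 h4le
      have : (1 + 8 * p) ^ 3 ≤ h3 t ^ 3 := pow_le_pow_left₀ (by positivity) a1 3
      linarith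
    have b2 : 16 * p * 1.99 ≤ h2 t * (h3 t ^ 2 + h4 t ^ 2) := by
      apply mul_le_mul c1 (by linarith) (by norm_num) (by linarith)
    calc 7100 * p * (2 * dr t) ≤ 7100 * p * (2 * p ^ 2) := by gcongr
      _ ≤ 256 * p ^ 2 * (16 * p * 1.99 + 24 * p) := by linarith
      _ ≤ _ := by
        apply mul_le_mul f1 (by linarith) (by positivity) (by positivity)
  · rw [div_le_iff₀ (by positivity)]
    have b1 : h3 t ^ 3 - h4 t ^ 3 ≤ 16.3 * p * 3.41 := by
      have : h3 t ^ 3 - h4 t ^ 3 = (h3 t - h4 t) * (h3 t ^ 2 + h3 t * h4 t + h4 t ^ 2) := by ring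
      rw [this]
      apply mul_le_mul a5 _ (by positivity) (by positivity)
      linarith
    have b2 : h2 t * (h3 t ^ 2 + h4 t ^ 2) ≤ 16.13 * p * 2.44 := by
      apply mul_le_mul c2' (by linarith) (by positivity) (by positivity)
    calc _ ≤ 260.2 * p ^ 2 * (16.13 * p * 2.44 + 16.3 * p * 3.41) := by
          rw [add_sub_assoc]
          exact (mul_le_mul_of_nonneg_left (add_le_add b2 b1) (by positivity)).trans
            (mul_le_mul_of_nonneg_right f2 (by positivity))
      _ ≤ 13500 * p * (2 * (0.955 * p ^ 2)) := by linarith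
      _ ≤ _ := by gcongr
end SP

namespace SP
open Complex Set Filter Topology

lemma tq_bd (t : ℝ) (ht : 1 ≤ t) : t * pp t ^ 2 ≤ 0.8409 * pp t ^ 2 + 0.0002975 := by
  have h0 := pp_pos t
  have h1 := pp1
  have h10 := pp_pos 1
  have e : pp 1 ^ 2 = pp t ^ 2 * Real.exp (2 * Real.pi * (t - 1)) := by
    rw [pp, pp, ← Real.exp_nat_mul, ← Real.exp_nat_mul, ← Real.exp_add]; congr 1; push_cast; ring
  have h2 := Real.add_one_le_exp (2 * Real.pi * (t - 1))
  have hq : pp 1 ^ 2 ≤ 0.001868 := by nlinarith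
  have hq0 : 0 < pp t ^ 2 := by positivity
  have h3 : pp t ^ 2 * (2 * Real.pi * (t - 1) + 1) ≤ 0.001868 := by
    rw [e] at hq
    exact (mul_le_mul_of_nonneg_left h2 hq0.le).trans hq
  set q := pp t ^ 2
  have h4 : q * (6.283 * (t - 1)) ≤ q * (2 * Real.pi * (t - 1)) := by
    have := Real.pi_gt_d4
    have : 0 ≤ t - 1 := by linarith
    gcongr; linarith
  nlinarith

lemma c_bd : 3.6475 ≤ 36 / Real.pi ^ 2 ∧ 36 / Real.pi ^ 2 ≤ 3.648 ∧ 3.8197 ≤ 12 / Real.pi ∧ 12 / Real.pi ≤ 4 := by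
  have h1 := Real.pi_gt_d4
  have h2 := Real.pi_lt_d4
  have h0 := Real.pi_pos
  refine ⟨?_, ?_, ?_, ?_⟩
  · rw [le_div_iff₀ (by positivity)]; nlinarith
  · rw [div_le_iff₀ (by positivity)]; nlinarith
  · rw [le_div_iff₀ (by positivity)]; nlinarith
  · rw [div_le_iff₀ (by positivity)]; nlinarith

lemma exp_pp (t : ℝ) : Real.exp (2 * Real.pi * t) = 1 / pp t ^ 2 := by
  rw [pp, ← Real.exp_nat_mul, one_div, ← Real.exp_neg]; congr 1; push_cast; ring

lemma lin_bd (t : ℝ) (ht : 1 ≤ t) : 2575 + 167000 * pp t ^ 2 ≤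
    -t ^ 2 * f0 t + 12 / Real.pi * t * (er t * nr t / dr t) := by
  obtain ⟨-, -, k1, k2⟩ := c_bd
  have h1 := tq_bd t ht
  have h2 := f0_hi t ht
  have h3 := (phi_bd t ht).1
  have hq0 : 0 < pp t ^ 2 := by have := pp_pos t; positivity
  set φ := er t * nr t / dr t
  set q := pp t ^ 2
  have a : 3.8197 * (720 * (1 + 240 * q)) ≤ 12 / Real.pi * φ := by gcongr
  have b : t * f0 t ≤ t * (586000 * q) := by gcongr
  have c : 2575 + 167000 * q ≤ 12 / Real.pi * φ - t * f0 t := by linarith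
  have d : 1 * (2575 + 167000 * q) ≤ t * (12 / Real.pi * φ - t * f0 t) := by
    apply mul_le_mul ht c (by positivity) (by linarith)
  linarith

lemma B_pos1 (t : ℝ) (ht : 1 ≤ t) : 0 < far t + 36 / Real.pi ^ 2 * ps t := by
  obtain ⟨c1, c2, -, -⟩ := c_bd
  have h1 := lin_bd t ht
  have h2 := (ee_bd t ht).2
  have h3 := (ps_bd t ht).1
  have h0 := pp_pos t
  have hp := (pp_le t ht).trans pp1
  rw [far]
  set c := 36 / Real.pi ^ 2
  have h4 : c * (er t ^ 2 / dr t - ps t) ≤ 3.648 * (404 + 5120 * pp t + 82000 * pp t ^ 2) :=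
    (mul_le_mul_of_nonneg_left (by linarith) (by linarith)).trans
      (mul_le_mul_of_nonneg_right c2 (by positivity))
  have : pp t ^ 2 ≤ 0.04322 * pp t := by nlinarith
  linarith

lemma A1_pos1 (t : ℝ) (ht : 1 ≤ t) :
    0 < far t - 36 / Real.pi ^ 2 * ps t + 72 / Real.pi ^ 2 * Real.exp (2 * Real.pi * t) := by
  obtain ⟨c1, c2, -, -⟩ := c_bd
  have h1 := lin_bd t ht
  have h2 := (ee_bd t ht).2
  have h3 := (ps_bd t ht).2
  have h0 := pp_pos t
  have hp := (pp_le t ht).trans pp1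
  have e : 72 / Real.pi ^ 2 = 2 * (36 / Real.pi ^ 2) := by ring
  rw [far, exp_pp, e]
  set c := 36 / Real.pi ^ 2
  have h4 : c * (er t ^ 2 / dr t + ps t - 2 * (1 / pp t ^ 2)) ≤ 3.648 * (694 - 5120 * pp t + 153000 * pp t ^ 2) :=
    (mul_le_mul_of_nonneg_left (by linarith) (by linarith)).trans
      (mul_le_mul_of_nonneg_right c2 (by nlinarith))
  have : pp t ^ 2 ≤ 0.04322 * pp t := by nlinarith
  linarith

lemma B_pos (t : ℝ) (ht : 0 < t) : 0 < far t + 36 / Real.pi ^ 2 * ps t := by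
  rcases le_or_gt 1 t with h | h
  · exact B_pos1 t h
  have hs : 1 ≤ 1 / t := by rw [le_div_iff₀ ht]; linarith
  rw [far_inv t ht, ps_inv t ht]
  obtain ⟨c1, c2, -, -⟩ := c_bd
  have h1 := f0_hi _ hs
  have h2 := (kr_bd _ hs).1
  have h0 := pp_pos (1 / t)
  have hp := (pp_le _ hs).trans pp1
  have h3 : 3.6475 * (7100 * pp (1 / t)) ≤ 36 / Real.pi ^ 2 * kr (1 / t) := by gcongr
  have : pp (1 / t) ^ 2 ≤ 0.04322 * pp (1 / t) := by nlinarith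
  have : 0 < t ^ 2 * (36 / Real.pi ^ 2 * kr (1 / t) - f0 (1 / t)) := by
    apply mul_pos (by positivity); linarith
  linarith

lemma e93 : (10300:ℝ) ≤ Real.exp 9.3 := by
  have h : Real.exp 9.3 = Real.exp 1 ^ 9 * Real.exp 0.3 := by
    rw [← Real.exp_nat_mul, ← Real.exp_add]; congr 1; norm_num
  have h2 : (1.3:ℝ) ≤ Real.exp 0.3 := by have := Real.add_one_le_exp 0.3; linarith
  have h3 : (8100:ℝ) ≤ Real.exp 1 ^ 9 :=
    le_trans (by norm_num) (pow_le_pow_left₀ (by norm_num) Real.exp_one_gt_d9.le 9)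
  rw [h]
  calc (10300:ℝ) ≤ 8100 * 1.3 := by norm_num
    _ ≤ _ := by gcongr

lemma A1_pos (t : ℝ) (ht : 0 < t) :
    0 < far t - 36 / Real.pi ^ 2 * ps t + 72 / Real.pi ^ 2 * Real.exp (2 * Real.pi * t) := by
  rcases le_or_gt 1 t with h | h
  · exact A1_pos1 t h
  have hs : 1 ≤ 1 / t := by rw [le_div_iff₀ ht]; linarith
  rw [far_inv t ht, ps_inv t ht]
  obtain ⟨c1, c2, -, -⟩ := c_bd
  have h1 := f0_hi _ hs
  have h2 := (kr_bd _ hs).2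
  have h0 := pp_pos (1 / t)
  have hp := (pp_le _ hs).trans pp1
  have h3 : 36 / Real.pi ^ 2 * kr (1 / t) ≤ 3.648 * (13500 * pp (1 / t)) :=
    (mul_le_mul_of_nonneg_left h2 (by positivity)).trans
      (mul_le_mul_of_nonneg_right c2 (by positivity))
  have h4 : pp (1 / t) ^ 2 ≤ 0.04322 * pp (1 / t) := by nlinarith
  have h5 : f0 (1 / t) + 36 / Real.pi ^ 2 * kr (1 / t) ≤ 74600 * pp (1 / t) := by linarith
  -- exponential estimate
  have hpi := Real.pi_gt_d4
  have hl := Real.one_sub_inv_le_log_of_pos (by positivity : 0 < 1 / t)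
  have h6 : (9.3:ℝ) ≤ 2 * Real.pi * t + 2 * Real.log (1 / t) + Real.pi * (1 / t) := by
    rw [one_div, inv_inv] at hl
    have : 2 * Real.pi * t + 2 * (1 - t) + Real.pi * (1 / t) - 9.3 =
      ((2 * Real.pi - 2) * t ^ 2 - 7.3 * t + Real.pi) / t := by field_simp; ring
    have h7 : 0 ≤ ((2 * Real.pi - 2) * t ^ 2 - 7.3 * t + Real.pi) / t := by
      apply div_nonneg _ ht.le
      nlinarith [sq_nonneg (t - 0.852), sq_nonneg t]
    rw [one_div t] at *
    linarith
  have h7 : (10300:ℝ) * pp (1 / t) * t ^ 2 ≤ Real.exp (2 * Real.pi * t) := by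
    have h8 := e93.trans (Real.exp_le_exp.2 h6)
    have h9 : Real.exp (2 * Real.pi * t + 2 * Real.log (1 / t) + Real.pi * (1 / t)) * (pp (1 / t) * t ^ 2)
      = Real.exp (2 * Real.pi * t) := by
      have : t ^ 2 = Real.exp (-(2 * Real.log (1 / t))) := by
        rw [one_div, Real.log_inv, mul_neg, neg_neg, two_mul, Real.exp_add, Real.exp_log ht]; ring
      rw [this, pp, ← Real.exp_add, ← Real.exp_add]; congr 1; ring
    rw [← h9, mul_assoc]
    gcongr
  have h8 : t ^ 2 * (f0 (1 / t) + 36 / Real.pi ^ 2 * kr (1 / t)) ≤ t ^ 2 * (74600 * pp (1 / t)) := by gcongr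
  have h9 : 72 / Real.pi ^ 2 = 2 * (36 / Real.pi ^ 2) := by ring
  have h10 : 7.295 * Real.exp (2 * Real.pi * t) ≤ 72 / Real.pi ^ 2 * Real.exp (2 * Real.pi * t) := by
    gcongr; linarith
  have h11 : 0 < pp (1 / t) * t ^ 2 := by positivity
  linarith

lemma ps_growth : ∃ C : ℝ, 0 ≤ C ∧ ∀ t : ℝ, 0 < t → |ps t - Real.exp (2 * Real.pi * t)| ≤ C := by
  refine ⟨600 + Real.exp (2 * Real.pi), by positivity, fun t ht => ?_⟩
  rcases le_or_gt 1 t with h | h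
  · have h1 := ps_bd t h
    have h0 := pp_pos t
    have hp := (pp_le t h).trans pp1
    have : 0 < Real.exp (2 * Real.pi) := by positivity
    rw [exp_pp, abs_le]
    have : pp t ^ 2 ≤ 0.04322 * pp t := by nlinarith
    constructor <;> linarith
  · have hs : 1 ≤ 1 / t := by rw [le_div_iff₀ ht]; linarith
    rw [ps_inv t ht]
    have h2 := kr_bd _ hs
    have h0 := pp_pos (1 / t)
    have hp := (pp_le _ hs).trans pp1
    have h3 : t ^ 2 * kr (1 / t) ≤ 1 * 600 := by
      apply mul_le_mul (by nlinarith) (by linarith) (by linarith) (by norm_num)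
    have h4 : 0 ≤ t ^ 2 * kr (1 / t) := mul_nonneg (by positivity) (by linarith)
    have h5 : Real.exp (2 * Real.pi * t) ≤ Real.exp (2 * Real.pi) := by
      apply Real.exp_le_exp.2; nlinarith [Real.pi_pos]
    have h6 := Real.exp_pos (2 * Real.pi * t)
    rw [abs_le]; constructor <;> linarith

lemma BA_growth : ∃ C : ℝ, 0 ≤ C ∧ ∀ t : ℝ, 0 < t → far t + 36 / Real.pi ^ 2 * ps t ≤ C * (1 + t) ∧
    far t - 36 / Real.pi ^ 2 * ps t + 72 / Real.pi ^ 2 * Real.exp (2 * Real.pi * t) ≤ C * (1 + t) := by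
  refine ⟨10000 + 8 * Real.exp (2 * Real.pi), by positivity, fun t ht => ?_⟩
  obtain ⟨c1, c2, -, k2⟩ := c_bd
  have e72 : 72 / Real.pi ^ 2 = 2 * (36 / Real.pi ^ 2) := by ring
  have hE : 0 < Real.exp (2 * Real.pi) := by positivity
  have hEt : 0 < Real.exp (2 * Real.pi) * t := by positivity
  rcases le_or_gt 1 t with h | h
  · have h1 := ps_bd t h
    have h2 := ee_bd t h
    have h3 := phi_bd t h
    have h0 := pp_pos t
    have hp := (pp_le t h).trans pp1
    have hf := f0_nonneg t ht
    have q1 : pp t ^ 2 ≤ 0.04322 * pp t := by nlinarith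
    have a1 : 12 / Real.pi * t * (er t * nr t / dr t) ≤ 4 * t * 1200 := by
      apply mul_le_mul (by gcongr) h3.2 _ (by positivity)
      linarith [sq_nonneg (pp t), h3.1]
    have a2 : 0 ≤ t ^ 2 * f0 t := by positivity
    rw [far, e72, exp_pp]
    set c := 36 / Real.pi ^ 2
    have b1 : c * (ps t - er t ^ 2 / dr t) ≤ 3.648 * 400 :=
      (mul_le_mul_of_nonneg_left (by linarith) (by linarith)).trans
      (mul_le_mul_of_nonneg_right c2 (by positivity))
    have b2 : c * (2 * (1 / pp t ^ 2) - ps t - er t ^ 2 / dr t) ≤ 3.648 * 400 :=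
      (mul_le_mul_of_nonneg_left (by linarith) (by linarith)).trans
      (mul_le_mul_of_nonneg_right c2 (by positivity))
    constructor <;> linarith
  · have hA := A_neg t ht
    have hs : 1 ≤ 1 / t := by rw [le_div_iff₀ ht]; linarith
    have h5 : Real.exp (2 * Real.pi * t) ≤ Real.exp (2 * Real.pi) := by
      apply Real.exp_le_exp.2; nlinarith [Real.pi_pos]
    have h2 := kr_bd _ hs
    have h0 := pp_pos (1 / t)
    have hp := (pp_le _ hs).trans pp1
    have h3 : t ^ 2 * kr (1 / t) ≤ 1 * 600 := by
      apply mul_le_mul (by nlinarith) (by linarith) (by linarith) (by norm_num)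
    have hf := f0_nonneg (1 / t) (by positivity)
    constructor
    · rw [far_inv t ht, ps_inv t ht]
      have a2 : 0 ≤ t ^ 2 * f0 (1 / t) := by positivity
      have : 36 / Real.pi ^ 2 * (t ^ 2 * kr (1 / t)) ≤ 3.648 * 600 := by
        refine (mul_le_mul_of_nonneg_left (h3.trans (by norm_num)) (by linarith)).trans
          (mul_le_mul_of_nonneg_right c2 (by norm_num))
      linarith
    · have : 72 / Real.pi ^ 2 * Real.exp (2 * Real.pi * t) ≤ 7.3 * Real.exp (2 * Real.pi) := by
        apply mul_le_mul (by linarith) h5 (by positivity) (by norm_num)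
      linarith
end SP

namespace SP
open Complex Set Filter Topology

noncomputable def Lp (F : ℝ → ℝ) (u : ℂ) : ℂ := ∫ t in Ioi (0:ℝ), (F t : ℂ) * cexp (-(Real.pi * u * t))

structure Gr (F : ℝ → ℝ) (C : ℝ) : Prop where
  c : ContinuousOn F (Ioi 0)
  b : ∀ t, 0 < t → |F t| ≤ C * (1 + t)

lemma Gr.C0 {F : ℝ → ℝ} {C : ℝ} (h : Gr F C) : 0 ≤ C := by
  have := (abs_nonneg _).trans (h.b 1 one_pos); linarith

lemma one_add_le_e (b t : ℝ) (hb : 0 < b) (ht : 0 < t) : 1 + t ≤ (1 + 1 / b) * Real.exp (b * t) := by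
  have h1 := Real.add_one_le_exp (b * t)
  have h2 : 0 ≤ b * t := by positivity
  have h3 : t = (b * t) / b := by field_simp
  have h4 : (b * t) / b ≤ Real.exp (b * t) / b := by gcongr; linarith
  rw [add_mul, one_mul, div_mul_eq_mul_div, one_mul]
  linarith

lemma norm_lap (u : ℂ) (t : ℝ) : ‖cexp (-(Real.pi * u * t))‖ = Real.exp (-(Real.pi * u.re * t)) := by
  rw [Complex.norm_exp]; congr 1; simp

lemma Gr.bound {F : ℝ → ℝ} {C : ℝ} (h : Gr F C) (a : ℝ) (ha : 0 < a) (u : ℂ) (hu : a ≤ u.re) (t : ℝ) (ht : 0 < t) :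
    ‖(F t : ℂ) * cexp (-(Real.pi * u * t))‖ * (1 + t) ≤
      C * (1 + 1 / (Real.pi * a / 4)) ^ 2 * Real.exp (-(Real.pi * a / 2) * t) := by
  have hpi := Real.pi_pos
  have h1 := one_add_le_e (Real.pi * a / 4) t (by positivity) ht
  have hC := h.C0
  rw [norm_mul, norm_lap, Complex.norm_real, Real.norm_eq_abs]
  have h2 : Real.exp (-(Real.pi * u.re * t)) ≤ Real.exp (-(Real.pi * a * t)) := by
    apply Real.exp_le_exp.2; gcongr
  calc _ ≤ (C * (1 + t)) * Real.exp (-(Real.pi * a * t)) * (1 + t) := by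
        gcongr; exact h.b t ht
    _ = C * (1 + t) ^ 2 * Real.exp (-(Real.pi * a * t)) := by ring
    _ ≤ C * ((1 + 1 / (Real.pi * a / 4)) * Real.exp (Real.pi * a / 4 * t)) ^ 2 * Real.exp (-(Real.pi * a * t)) := by
        gcongr
    _ = _ := by
        rw [mul_pow, ← Real.exp_nat_mul, ← mul_assoc, mul_assoc _ (Real.exp _) (Real.exp _), ← Real.exp_add]
        congr 2; push_cast; ring

lemma Gr.meas {F : ℝ → ℝ} {C : ℝ} (h : Gr F C) (u : ℂ) :
    ContinuousOn (fun t : ℝ => (F t : ℂ) * cexp (-(Real.pi * u * t))) (Ioi 0) := by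
  have := h.c
  fun_prop

lemma Gr.int {F : ℝ → ℝ} {C : ℝ} (h : Gr F C) (u : ℂ) (hu : 0 < u.re) :
    IntegrableOn (fun t : ℝ => (F t : ℂ) * cexp (-(Real.pi * u * t))) (Ioi 0) := by
  have hpi := Real.pi_pos
  refine Integrable.mono' (expint 0 (b := Real.pi * u.re / 2) (by positivity)
    (C * (1 + 1 / (Real.pi * u.re / 4)) ^ 2)) ((h.meas u).aestronglyMeasurable measurableSet_Ioi) ?_
  filter_upwards [ae_restrict_mem measurableSet_Ioi] with t ht
  have := h.bound u.re hu u le_rfl t ht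
  refine le_trans ?_ this
  have h0 : 0 ≤ ‖(F t : ℂ) * cexp (-(Real.pi * u * t))‖ := norm_nonneg _
  have : (0:ℝ) < t := ht
  nlinarith

lemma Gr.diff {F : ℝ → ℝ} {C : ℝ} (h : Gr F C) : DifferentiableOn ℂ (Lp F) {u | 0 < u.re} := by
  intro u0 hu0
  have hu0' : 0 < u0.re := hu0
  have hpi := Real.pi_pos
  have hop : IsOpen {u : ℂ | u0.re / 2 < u.re} := isOpen_lt continuous_const Complex.continuous_re
  have key := hasDerivAt_integral_of_dominated_loc_of_deriv_le (μ := volume.restrict (Ioi 0))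
    (F := fun (u : ℂ) (t : ℝ) => (F t : ℂ) * cexp (-(Real.pi * u * t)))
    (F' := fun (u : ℂ) (t : ℝ) => (-(Real.pi * t)) * ((F t : ℂ) * cexp (-(Real.pi * u * t))))
    (bound := fun t => (Real.pi * (C * (1 + 1 / (Real.pi * (u0.re / 2) / 4)) ^ 2)) * Real.exp (-(Real.pi * (u0.re / 2) / 2) * t))
    (x₀ := u0) (s := {u : ℂ | u0.re / 2 < u.re})
    (hop.mem_nhds (by simp only [mem_ofPred_eq]; linarith)) ?_ (h.int u0 hu0') ?_ ?_ ?_ ?_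
  · exact key.2.differentiableAt.differentiableWithinAt
  · exact Filter.Eventually.of_forall fun u => (h.meas u).aestronglyMeasurable measurableSet_Ioi
  · refine ContinuousOn.aestronglyMeasurable ?_ measurableSet_Ioi
    have := h.meas u0
    fun_prop
  · filter_upwards [ae_restrict_mem measurableSet_Ioi] with t ht u hu
    have ht' : (0:ℝ) < t := ht
    have hb := h.bound (u0.re / 2) (by positivity) u (le_of_lt hu) t ht
    rw [norm_mul, norm_neg, norm_mul, Complex.norm_real, Complex.norm_real, Real.norm_of_nonneg hpi.le,
      Real.norm_of_nonneg ht'.le]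
    have h0 : 0 ≤ ‖(F t : ℂ) * cexp (-(Real.pi * u * t))‖ := norm_nonneg _
    calc _ ≤ Real.pi * (‖(F t : ℂ) * cexp (-(Real.pi * u * t))‖ * (1 + t)) := by
          rw [mul_assoc]; apply mul_le_mul_of_nonneg_left _ hpi.le; nlinarith
      _ ≤ _ := by rw [mul_assoc Real.pi]; gcongr
  · exact expint 0 (by positivity) _
  · filter_upwards with t u hu
    have : HasDerivAt (fun u : ℂ => -(Real.pi * u * t)) (-(Real.pi * t)) u := by
      exact (((hasDerivAt_id u).const_mul (Real.pi : ℂ)).mul_const (t:ℂ)).fun_neg.congr_deriv (by simp)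
    exact (this.cexp.const_mul (F t : ℂ)).congr_deriv (by ring)

lemma ident (h g : ℂ → ℂ) (hh : DifferentiableOn ℂ h {u | 0 < u.re}) (hg : DifferentiableOn ℂ g {u | 0 < u.re})
    (e : ∀ u : ℝ, 2 < u → h u = g u) (u : ℝ) (hu : 0 < u) : h u = g u := by
  have hop : IsOpen {u : ℂ | 0 < u.re} := isOpen_lt continuous_const Complex.continuous_re
  have hconv : Convex ℝ {u : ℂ | 0 < u.re} := convex_halfSpace_re_gt 0
  have key := (hh.analyticOnNhd hop).eqOn_of_preconnected_of_frequently_eq (hg.analyticOnNhd hop)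
    hconv.isPreconnected (z₀ := ((3:ℝ):ℂ)) (by simp) ?_
  · exact key (by simpa using hu)
  have ht : Tendsto (fun n : ℕ => ((3 + 1 / ((n:ℝ) + 1) : ℝ) : ℂ)) atTop (𝓝[≠] ((3:ℝ):ℂ)) := by
    apply tendsto_nhdsWithin_iff.2
    constructor
    · apply (Complex.continuous_ofReal.tendsto _).comp
      have := (tendsto_one_div_add_atTop_nhds_zero_nat (𝕜 := ℝ)).const_add 3
      simpa using this
    · refine Eventually.of_forall fun n => ?_
      have : (0:ℝ) < 1 / ((n:ℝ) + 1) := by positivity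
      intro h
      have h2 := Complex.ofReal_injective h
      linarith
  refine ht.frequently (Frequently.of_forall fun n => e _ ?_)
  have : (0:ℝ) < 1 / ((n:ℝ) + 1) := by positivity
  linarith

lemma Lp_real (F : ℝ → ℝ) (u : ℝ) : Lp F u = ((∫ t in Ioi (0:ℝ), F t * Real.exp (-(Real.pi * u * t)) : ℝ) : ℂ) := by
  rw [Lp, ← integral_complex_ofReal]
  congr 1; ext t; push_cast; rfl

/-- real Laplace integral -/
noncomputable def Lr (F : ℝ → ℝ) (u : ℝ) : ℝ := ∫ t in Ioi (0:ℝ), F t * Real.exp (-(Real.pi * u * t))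

lemma Lr_pos (F : ℝ → ℝ) (u : ℝ) (hi : IntegrableOn (fun t => F t * Real.exp (-(Real.pi * u * t))) (Ioi 0))
    (hF : ∀ t, 0 < t → 0 < F t) : 0 < Lr F u := by
  rw [Lr, setIntegral_pos_iff_support_of_nonneg_ae _ hi]
  · have : Function.support (fun t => F t * Real.exp (-(Real.pi * u * t))) ∩ Ioi 0 = Ioi 0 := by
      apply inter_eq_right.2
      intro t ht
      exact (mul_pos (hF t ht) (Real.exp_pos _)).ne'
    rw [this]; simp
  · filter_upwards [ae_restrict_mem measurableSet_Ioi] with t ht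
    exact (mul_pos (hF t ht) (Real.exp_pos _)).le

lemma Gr.intr {F : ℝ → ℝ} {C : ℝ} (h : Gr F C) (u : ℝ) (hu : 0 < u) :
    IntegrableOn (fun t => F t * Real.exp (-(Real.pi * u * t))) (Ioi 0) := by
  have := (h.int u (by simpa)).re
  refine this.congr (Eventually.of_forall fun t => ?_)
  have : (F t : ℂ) * cexp (-(Real.pi * u * t)) = ((F t * Real.exp (-(Real.pi * u * t)) : ℝ) : ℂ) := by
    push_cast; rfl
  show ((F t : ℂ) * cexp (-(Real.pi * u * t))).re = _
  rw [this, Complex.ofReal_re]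

noncomputable def ha (u : ℂ) : ℂ := hC 1 p0 u
noncomputable def hb (u : ℂ) : ℂ := hC (-1) kS u
noncomputable def cmb (α β : ℝ) (u : ℂ) : ℂ := I / 4 * (α * ha u + β * hb u)

lemma cmb_diff (α β : ℝ) : DifferentiableOn ℂ (cmb α β) {u | -1/2 < u.re} := by
  have h1 : DifferentiableOn ℂ ha {u | -1/2 < u.re} := coreA.hdiff
  have h2 : DifferentiableOn ℂ hb {u | -1/2 < u.re} := coreB.hdiff
  unfold cmb
  fun_prop

lemma far_c : ContinuousOn far (Ioi 0) := by
  have h := coreA.fd.continuousOn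
  have h2 : ContinuousOn (fun t : ℝ => (fa (t * I)).re) (Ioi 0) := by
    apply Complex.continuous_re.comp_continuousOn
    exact h.comp (by fun_prop) (fun t ht => by simpa using ht)
  refine h2.congr fun t ht => ?_
  simp only [fa_axis t ht, Complex.ofReal_re]

lemma ps_c : ContinuousOn ps (Ioi 0) := by
  have h := coreB.fd.continuousOn
  have h2 : ContinuousOn (fun t : ℝ => (psI (t * I)).re) (Ioi 0) := by
    apply Complex.continuous_re.comp_continuousOn
    exact h.comp (by fun_prop) (fun t ht => by simpa using ht)
  refine h2.congr fun t ht => ?_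
  simp only [ps_axis t ht, Complex.ofReal_re]

lemma int_of (f : ℂ → ℂ) (r : ℝ → ℝ) (hr : ∀ t : ℝ, 0 < t → f (t * I) = r t) (u : ℝ)
    (hi : IntegrableOn (fun t : ℝ => f (t*I) * cexp (-(Real.pi*u*t : ℝ))) (Ioi 0)) :
    IntegrableOn (fun t => r t * Real.exp (-(Real.pi * u * t))) (Ioi 0) ∧
    ∫ t in Ioi (0:ℝ), f (t*I) * cexp (-(Real.pi*u*t : ℝ)) = (Lr r u : ℂ) := by
  have e : ∀ t ∈ Ioi (0:ℝ), f (t*I) * cexp (-(Real.pi*u*t : ℝ)) = ((r t * Real.exp (-(Real.pi * u * t)) : ℝ) : ℂ) := by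
    intro t ht
    rw [hr t ht]; push_cast; rfl
  constructor
  · have := (hi.congr_fun e measurableSet_Ioi).re
    exact this.congr (Eventually.of_forall fun t => Complex.ofReal_re _)
  · rw [setIntegral_congr_fun measurableSet_Ioi e, integral_complex_ofReal, Lr]

lemma cmb0 (α β u : ℝ) (hu : 2 < u) :
    IntegrableOn (fun t => (α * far t + β * ps t) * Real.exp (-(Real.pi * u * t))) (Ioi 0) ∧
    cmb α β u = ((Real.sin (Real.pi * u / 2) ^ 2 * Lr (fun t => α * far t + β * ps t) u : ℝ) : ℂ) := by
  obtain ⟨i1, e1⟩ := coreA.main u hu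
  obtain ⟨i2, e2⟩ := coreB.main u hu
  obtain ⟨j1, f1⟩ := int_of fa far fa_axis u i1
  obtain ⟨j2, f2⟩ := int_of psI ps ps_axis u i2
  have e : (fun t => (α * far t + β * ps t) * Real.exp (-(Real.pi * u * t))) = fun t =>
    α * (far t * Real.exp (-(Real.pi * u * t))) + β * (ps t * Real.exp (-(Real.pi * u * t))) := by
    ext t; ring
  constructor
  · rw [e]; exact (j1.const_mul α).add (j2.const_mul β)
  · have : Lr (fun t => α * far t + β * ps t) u = α * Lr far u + β * Lr ps u := by
      rw [Lr, e, integral_add (j1.const_mul α) (j2.const_mul β), integral_const_mul, integral_const_mul]; rfl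
    rw [this, cmb, ha, hb, e1, e2, f1, f2]
    push_cast
    linear_combination (-(α * Lr far u + β * Lr ps u) * Complex.sin (Real.pi * u / 2) ^ 2 : ℂ) * I_sq

lemma cmb1 (α β κ C : ℝ) (h : Gr (fun t => α * far t + β * ps t - κ * Real.exp (2 * Real.pi * t)) C)
    (u : ℝ) (hu : 0 < u) (hu2 : u ≠ 2) : cmb α β u = ((Real.sin (Real.pi * u / 2) ^ 2 *
      (κ / (Real.pi * (u - 2)) + Lr (fun t => α * far t + β * ps t - κ * Real.exp (2 * Real.pi * t)) u) : ℝ) : ℂ) := by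
  have hpi := Real.pi_pos
  set F := fun t => α * far t + β * ps t - κ * Real.exp (2 * Real.pi * t) with hF
  have hsub : {u : ℂ | 0 < u.re} ⊆ {u | -1/2 < u.re} := by
    intro u hu; simp only [mem_ofPred_eq] at *; linarith
  have key := ident (fun u => (u - 2) * cmb α β u)
    (fun u => Complex.sin (Real.pi * u / 2) ^ 2 * (κ / Real.pi + (u - 2) * Lp F u))
    (by have := (cmb_diff α β).mono hsub; fun_prop)
    (by
      have := h.diff
      have h2 : DifferentiableOn ℂ (fun u : ℂ => Complex.sin (Real.pi * u / 2) ^ 2) {u | 0 < u.re} := by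
        apply Differentiable.differentiableOn
        apply Differentiable.pow
        exact Complex.differentiable_sin.comp (by fun_prop)
      fun_prop) ?_ u hu
  · simp only [Lp_real] at key
    have hne : (u:ℂ) - 2 ≠ 0 := by
      intro h0; apply hu2
      have : (u:ℂ) = ((2:ℝ):ℂ) := by push_cast; linear_combination h0
      exact_mod_cast this
    apply mul_left_cancel₀ hne
    rw [key]
    have hp : (Real.pi : ℂ) ≠ 0 := by exact_mod_cast hpi.ne'
    rw [← Lr]; push_cast
    field_simp
  · intro v hv
    obtain ⟨i0, e0⟩ := cmb0 α β v hv
    have hE : IntegrableOn (fun t : ℝ => Real.exp (-(Real.pi * (v - 2)) * t)) (Ioi 0) :=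
      exp_neg_integrableOn_Ioi 0 (by nlinarith)
    have hI := integral_exp_mul_Ioi (a := -(Real.pi * (v - 2))) (by nlinarith) 0
    have e : Lr F v = Lr (fun t => α * far t + β * ps t) v - κ * (1 / (Real.pi * (v - 2))) := by
      have e1 : (fun t => F t * Real.exp (-(Real.pi * v * t))) = fun t =>
          (α * far t + β * ps t) * Real.exp (-(Real.pi * v * t)) - κ * Real.exp (-(Real.pi * (v - 2)) * t) := by
        ext t
        have : Real.exp (-(Real.pi * (v - 2)) * t) = Real.exp (2 * Real.pi * t) * Real.exp (-(Real.pi * v * t)) := by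
          rw [← Real.exp_add]; congr 1; ring
        rw [this, hF]; ring
      rw [Lr, e1, integral_sub i0 (hE.const_mul κ), integral_const_mul, hI]
      simp [Lr]
    have hv2 : v - 2 ≠ 0 := by linarith
    have : Lr (fun t => α * far t + β * ps t) v = Lr F v + κ * (1 / (Real.pi * (v - 2))) := by linarith
    simp only [Lp_real, e0, this]
    rw [← Lr]
    have hv3 : (v:ℂ) - 2 ≠ 0 := by exact_mod_cast hv2
    have hp : (Real.pi : ℂ) ≠ 0 := by exact_mod_cast hpi.ne'
    push_cast
    field_simp
    ring
end SP

namespace SP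
open Complex Set Filter Topology

noncomputable def gm : ℝ := 36 / Real.pi ^ 2

lemma gm_pos : 0 < gm := by unfold gm; positivity

def NN : Set ℂ := {z | z.im = 0 ∧ 0 ≤ z.re}
def NP : Set ℂ := {z | z.im = 0 ∧ z.re ≤ 0}

lemma NN_closed : IsClosed NN :=
  (isClosed_eq Complex.continuous_im continuous_const).inter
    (isClosed_le continuous_const Complex.continuous_re)
lemma NP_closed : IsClosed NP :=
  (isClosed_eq Complex.continuous_im continuous_const).inter
    (isClosed_le Complex.continuous_re continuous_const)

lemma cmb_tend (α β u : ℝ) (hu : 0 ≤ u) :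
    Tendsto (fun v : ℝ => cmb α β v) (𝓝[>] u) (𝓝 (cmb α β u)) := by
  have hop : IsOpen {u : ℂ | -1/2 < u.re} := isOpen_lt continuous_const Complex.continuous_re
  have hm : (u:ℂ) ∈ {u : ℂ | -1/2 < u.re} := by simp only [mem_ofPred_eq, Complex.ofReal_re]; linarith
  have h1 : ContinuousAt (cmb α β) (u:ℂ) := (cmb_diff α β).continuousOn.continuousAt (hop.mem_nhds hm)
  have h2 : Tendsto (fun v : ℝ => (v:ℂ)) (𝓝[>] u) (𝓝 (u:ℂ)) :=
    (Complex.continuous_ofReal.tendsto u).mono_left nhdsWithin_le_nhds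
  exact h1.tendsto.comp h2

lemma cmb_lim (α β u : ℝ) (hu : 0 ≤ u) (S : Set ℂ) (hS : IsClosed S)
    (h : ∀ v : ℝ, u < v → v < u + 1 → cmb α β v ∈ S) : cmb α β u ∈ S := by
  refine hS.mem_of_tendsto (cmb_tend α β u hu) ?_
  filter_upwards [Ioo_mem_nhdsGT (show u < u + 1 by linarith)] with v hv
  exact h v hv.1 hv.2

lemma sin_ne (u : ℝ) (hu : 0 < u) (h : ¬ ∃ n : ℤ, 0 < n ∧ u = 2 * (n : ℝ)) :
    0 < Real.sin (Real.pi * u / 2) ^ 2 := by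
  have hpi := Real.pi_pos
  have : Real.sin (Real.pi * u / 2) ≠ 0 := by
    intro h0
    obtain ⟨n, hn⟩ := Real.sin_eq_zero_iff.1 h0
    have e : u = 2 * (n:ℝ) := by
      have : Real.pi * (u - 2 * n) = 0 := by linarith
      rcases mul_eq_zero.1 this with h | h
      · linarith
      · linarith
    refine h ⟨n, ?_, e⟩
    have : (0:ℝ) < n := by linarith
    exact_mod_cast this
  positivity

lemma GrB : ∃ C, Gr (fun t => 1 * far t + gm * ps t - 0 * Real.exp (2 * Real.pi * t)) C := by
  obtain ⟨C, hC, h⟩ := BA_growth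
  have h1 := far_c
  have h2 := ps_c
  refine ⟨C, ⟨by fun_prop, fun t ht => ?_⟩⟩
  have := B_pos t ht
  have e : 1 * far t + gm * ps t - 0 * Real.exp (2 * Real.pi * t) = far t + 36 / Real.pi ^ 2 * ps t := by
    rw [gm]; ring
  rw [e, abs_of_pos this]; exact (h t ht).1

lemma GrA : ∃ C, Gr (fun t => 1 * far t + (-gm) * ps t - (-(72 / Real.pi ^ 2)) * Real.exp (2 * Real.pi * t)) C := by
  obtain ⟨C, hC, h⟩ := BA_growth
  have h1 := far_c
  have h2 := ps_c
  refine ⟨C, ⟨by fun_prop, fun t ht => ?_⟩⟩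
  have := A1_pos t ht
  have e : 1 * far t + (-gm) * ps t - (-(72 / Real.pi ^ 2)) * Real.exp (2 * Real.pi * t) =
      far t - 36 / Real.pi ^ 2 * ps t + 72 / Real.pi ^ 2 * Real.exp (2 * Real.pi * t) := by
    rw [gm]; ring
  rw [e, abs_of_pos this]; exact (h t ht).2

lemma Bh_pos (u : ℝ) (hu : 0 < u) (h2 : u ≠ 2) :
    ∃ c : ℝ, 0 < c ∧ cmb 1 gm u = ((Real.sin (Real.pi * u / 2) ^ 2 * c : ℝ) : ℂ) := by
  obtain ⟨C, h⟩ := GrB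
  refine ⟨_, ?_, cmb1 1 gm 0 C h u hu h2⟩
  rw [zero_div, zero_add]
  refine Lr_pos _ u (h.intr u hu) fun t ht => ?_
  have := B_pos t ht
  rw [gm]; linarith

lemma Bh_NN (u : ℝ) (hu : 0 ≤ u) : cmb 1 gm u ∈ NN := by
  have key : ∀ v : ℝ, 0 < v → v ≠ 2 → cmb 1 gm v ∈ NN := by
    intro v hv h2
    obtain ⟨c, hc, e⟩ := Bh_pos v hv h2
    rw [e]; exact ⟨Complex.ofReal_im _, by rw [Complex.ofReal_re]; positivity⟩
  by_cases h : u = 0 ∨ u = 2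
  · refine cmb_lim 1 gm u hu NN NN_closed fun v h1 h3 => key v (by linarith) ?_
    rcases h with rfl | rfl
    · intro h; linarith
    · exact h1.ne'
  · push Not at h
    exact key u (lt_of_le_of_ne hu (Ne.symm h.1)) h.2

lemma Ah_small (u : ℝ) (hu : 0 < u) (h2 : u < 2) :
    ∃ c : ℝ, 0 < c ∧ cmb 1 (-gm) u = ((Real.sin (Real.pi * u / 2) ^ 2 * c : ℝ) : ℂ) := by
  obtain ⟨C, h⟩ := GrA
  refine ⟨_, ?_, cmb1 1 (-gm) _ C h u hu h2.ne⟩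
  have hpi := Real.pi_pos
  apply add_pos
  · apply div_pos_of_neg_of_neg
    · have : 0 < 72 / Real.pi ^ 2 := by positivity
      linarith
    · nlinarith
  refine Lr_pos _ u (h.intr u hu) fun t ht => ?_
  have := A1_pos t ht
  rw [gm]; linarith

lemma Ah_big (u : ℝ) (h2 : 2 < u) :
    ∃ c : ℝ, 0 < c ∧ cmb 1 (-gm) u = ((-(Real.sin (Real.pi * u / 2) ^ 2 * c) : ℝ) : ℂ) := by
  obtain ⟨h, e⟩ := cmb0 1 (-gm) u h2
  have ee : (fun t => (-(1 * far t + (-gm) * ps t)) * Real.exp (-(Real.pi * u * t))) =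
      fun t => -((1 * far t + (-gm) * ps t) * Real.exp (-(Real.pi * u * t))) := by
    ext t; ring
  have hL : Lr (fun t => -(1 * far t + (-gm) * ps t)) u = - Lr (fun t => 1 * far t + (-gm) * ps t) u := by
    rw [Lr, ee, integral_neg]; rfl
  refine ⟨Lr (fun t => -(1 * far t + (-gm) * ps t)) u, ?_, ?_⟩
  · refine Lr_pos _ u (by rw [ee]; exact h.neg) fun t ht => ?_
    have := A_neg t ht
    rw [gm]; linarith
  · rw [e, hL]; congr 1; ring

lemma Ah_NP (u : ℝ) (hu : 2 ≤ u) : cmb 1 (-gm) u ∈ NP := by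
  have key : ∀ v : ℝ, 2 < v → cmb 1 (-gm) v ∈ NP := by
    intro v hv
    obtain ⟨c, hc, e⟩ := Ah_big v hv
    rw [e]; refine ⟨Complex.ofReal_im _, ?_⟩
    rw [Complex.ofReal_re]; have : 0 ≤ Real.sin (Real.pi * v / 2) ^ 2 * c := by positivity
    linarith
  rcases hu.lt_or_eq with h | h
  · exact key u h
  · exact cmb_lim 1 (-gm) u (by linarith) NP NP_closed fun v h1 _ => key v (by linarith)

lemma hb_zero : cmb 0 1 ((0:ℝ):ℂ) = 0 := by
  obtain ⟨C, hC, hps⟩ := ps_growth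
  have h1 := far_c
  have h2 := ps_c
  have hpi := Real.pi_pos
  have hG : Gr (fun t => 0 * far t + 1 * ps t - 1 * Real.exp (2 * Real.pi * t)) C := by
    refine ⟨by fun_prop, fun t ht => ?_⟩
    have := hps t ht
    simp only [zero_mul, zero_add, one_mul]
    nlinarith
  have hbd : ∀ v : ℝ, 0 < v → v < 1 → ‖cmb 0 1 v‖ ≤ Real.pi / 4 * v ^ 2 + Real.pi * C / 4 * v := by
    intro v hv hv1
    rw [cmb1 0 1 1 C hG v hv (by linarith), Complex.norm_real, norm_mul]
    have a1 : ‖Real.sin (Real.pi * v / 2) ^ 2‖ ≤ (Real.pi * v / 2) ^ 2 := by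
      rw [norm_pow, Real.norm_eq_abs]
      have := Real.abs_sin_le_abs (x := Real.pi * v / 2)
      rw [abs_of_pos (by positivity : 0 < Real.pi * v / 2)] at this
      gcongr
    have a2 : ‖1 / (Real.pi * (v - 2))‖ ≤ 1 / Real.pi := by
      rw [norm_div, norm_one, norm_mul, Real.norm_of_nonneg hpi.le, Real.norm_eq_abs,
        abs_of_neg (by linarith)]
      apply one_div_le_one_div_of_le hpi
      nlinarith
    have a3 : ‖Lr (fun t => 0 * far t + 1 * ps t - 1 * Real.exp (2 * Real.pi * t)) v‖ ≤ C / (Real.pi * v) := by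
      have hE : IntegrableOn (fun t : ℝ => C * Real.exp (-(Real.pi * v) * t)) (Ioi 0) :=
        (exp_neg_integrableOn_Ioi 0 (by positivity)).const_mul C
      have hI := integral_exp_mul_Ioi (a := -(Real.pi * v)) (by nlinarith) 0
      have : ∫ t in Ioi (0:ℝ), C * Real.exp (-(Real.pi * v) * t) = C / (Real.pi * v) := by
        rw [integral_const_mul, hI]; simp; ring
      rw [← this, Lr]
      refine norm_integral_le_of_norm_le hE ?_
      filter_upwards [ae_restrict_mem measurableSet_Ioi] with t ht
      rw [norm_mul, Real.norm_eq_abs, Real.norm_of_nonneg (Real.exp_pos _).le]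
      simp only [zero_mul, zero_add, one_mul, neg_mul]
      gcongr
      exact hps t ht
    calc _ ≤ (Real.pi * v / 2) ^ 2 * (1 / Real.pi + C / (Real.pi * v)) := by
          gcongr
          exact (norm_add_le _ _).trans (add_le_add a2 a3)
      _ = _ := by field_simp; ring
  have ht := (cmb_tend 0 1 0 le_rfl).norm
  have h0 : Tendsto (fun v : ℝ => Real.pi / 4 * v ^ 2 + Real.pi * C / 4 * v) (𝓝[>] 0) (𝓝 0) := by
    have : Continuous (fun v : ℝ => Real.pi / 4 * v ^ 2 + Real.pi * C / 4 * v) := by fun_prop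
    have := this.tendsto 0
    simp only [ne_eq, OfNat.ofNat_ne_zero, not_false_eq_true, zero_pow, mul_zero, add_zero] at this
    exact this.mono_left nhdsWithin_le_nhds
  have hle := le_of_tendsto_of_tendsto ht h0 (by
    filter_upwards [Ioo_mem_nhdsGT (show (0:ℝ) < 1 by norm_num)] with v hv
    exact hbd v hv.1 hv.2)
  exact norm_le_zero_iff.1 hle

lemma AB_zero : cmb 1 (-gm) ((0:ℝ):ℂ) = cmb 1 gm ((0:ℝ):ℂ) := by
  have h := hb_zero
  simp only [cmb] at h ⊢
  push_cast at h ⊢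
  linear_combination (-2 * gm : ℂ) * h

lemma exists_S (α β : ℝ) : ∃ S : SchwartzMap V ℂ, (∀ x, S x = cmb α β ((‖x‖ ^ 2 : ℝ) : ℂ)) ∧
    ∀ y, 𝓕 (S : V → ℂ) y = cmb α (-β) ((‖y‖ ^ 2 : ℝ) : ℂ) := by
  obtain ⟨Sa, ea⟩ := exists_schwartz (hC 1 p0) coreA.hdiff coreA.hdecay
  obtain ⟨Sb, eb⟩ := exists_schwartz (hC (-1) kS) coreB.hdiff coreB.hdecay
  have fa' : ∀ y, 𝓕 (Sa : V → ℂ) y = 1 * hC 1 p0 ((‖y‖ ^ 2 : ℝ) : ℂ) := by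
    intro y; rw [← coreA.four y, show (Sa : V → ℂ) = _ from funext ea]
  have fb' : ∀ y, 𝓕 (Sb : V → ℂ) y = (-1) * hC (-1) kS ((‖y‖ ^ 2 : ℝ) : ℂ) := by
    intro y; rw [← coreB.four y, show (Sb : V → ℂ) = _ from funext eb]
  refine ⟨(I / 4 * α) • Sa + (I / 4 * β) • Sb, fun x => ?_, fun y => ?_⟩
  · simp only [SchwartzMap.add_apply, SchwartzMap.smul_apply, ea, eb, cmb, ha, hb, smul_eq_mul]; ring
  · rw [← SchwartzMap.fourier_coe, FourierTransform.fourier_add, FourierTransform.fourier_smul,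
      FourierTransform.fourier_smul]
    simp only [SchwartzMap.add_apply, SchwartzMap.smul_apply, SchwartzMap.fourier_coe, fa', fb', cmb, ha, hb,
      smul_eq_mul]
    push_cast; ring

lemma c0_pos : ∃ c : ℝ, 0 < c ∧ cmb 1 gm ((0:ℝ):ℂ) = c := by
  obtain ⟨S, e, f⟩ := exists_S 1 gm
  have hre : ∀ x, S x = ((S x).re : ℂ) := by
    intro x
    have := Bh_NN (‖x‖ ^ 2) (by positivity)
    rw [← e] at this
    apply Complex.ext
    · simp
    · simpa using this.1
  refine ⟨∫ x, (S x).re, ?_, ?_⟩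
  · have hc : Continuous (fun x => (S x).re) := Complex.continuous_re.comp S.continuous
    have hi : Integrable (fun x => (S x).re) := S.integrable.re
    rw [integral_pos_iff_support_of_nonneg _ hi]
    · have ho : IsOpen (Function.support (fun x => (S x).re)) := hc.isOpen_support
      refine ho.measure_pos volume ⟨EuclideanSpace.single 0 1, ?_⟩
      have : ‖(EuclideanSpace.single 0 1 : V)‖ = 1 := by simp
      rw [Function.mem_support, e, this]
      obtain ⟨c, hc, e'⟩ := Bh_pos 1 one_pos (by norm_num)
      have h1 : ((1:ℝ) ^ 2) = 1 := one_pow 2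
      rw [h1, e', Complex.ofReal_re]
      have := sin_ne 1 one_pos (by
        rintro ⟨n, hn, h⟩
        have : (1:ℤ) = 2 * n := by exact_mod_cast h
        omega)
      positivity
    · intro x
      have := Bh_NN (‖x‖ ^ 2) (by positivity)
      rw [← e] at this
      exact this.2
  · have := f 0
    rw [Real.fourier_eq] at this
    simp only [inner_zero_right, neg_zero, AddChar.map_zero_eq_one, one_smul, norm_zero, ne_eq,
      OfNat.ofNat_ne_zero, not_false_eq_true, zero_pow] at this
    rw [← AB_zero, ← this, ← integral_complex_ofReal]
    congr 1; ext x; exact hre x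

theorem final :
    ∃ g : SchwartzMap V ℝ,
      (∀ x y : V, ‖x‖ = ‖y‖ → g x = g y) ∧
      (∀ x, Real.sqrt 2 ≤ ‖x‖ → g x ≤ 0) ∧
      (∀ x, ∃ c : ℝ, 0 ≤ c ∧ 𝓕 (fun y => (g y : ℂ)) x = c) ∧
      g 0 = 1 ∧ 𝓕 (fun y => (g y : ℂ)) 0 = 1 ∧
      (∀ x, (¬ ∃ n : ℤ, 0 < n ∧ ‖x‖ ^ 2 = 2 * (n : ℝ)) →
        g x ≠ 0 ∧ 𝓕 (fun y => (g y : ℂ)) x ≠ 0) := by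
  obtain ⟨S, e, f⟩ := exists_S 1 (-gm)
  rw [neg_neg] at f
  obtain ⟨c0, hc0, e0⟩ := c0_pos
  have hc0' : (c0 : ℂ) ≠ 0 := by exact_mod_cast hc0.ne'
  have e0' := AB_zero.trans e0
  have im0 : ∀ u : ℝ, 0 ≤ u → (cmb 1 (-gm) u).im = 0 := by
    intro u hu
    rcases lt_or_ge u 2 with h | h
    · rcases hu.lt_or_eq with h0 | h0
      · obtain ⟨c, -, e⟩ := Ah_small u h0 h
        rw [e, Complex.ofReal_im]
      · rw [← h0, e0', Complex.ofReal_im]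
    · exact (Ah_NP u h).1
  set g : SchwartzMap V ℝ := SchwartzMap.postcompCLM (𝕜 := ℝ) Complex.reCLM (((c0:ℂ)⁻¹) • S) with hg
  have gr : ∀ x, g x = c0⁻¹ * (cmb 1 (-gm) ((‖x‖ ^ 2 : ℝ) : ℂ)).re := by
    intro x
    rw [← e]
    have : g x = (((c0:ℂ)⁻¹) * S x).re := rfl
    rw [this, ← Complex.ofReal_inv, Complex.re_ofReal_mul]
  have gc : (fun x => (g x : ℂ)) = (((c0:ℂ)⁻¹) • S : SchwartzMap V ℂ) := by
    ext x
    rw [gr x, SchwartzMap.smul_apply, e, smul_eq_mul]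
    have := im0 (‖x‖ ^ 2) (by positivity)
    push_cast
    congr 1
    apply Complex.ext
    · simp
    · rw [Complex.ofReal_im]; exact_mod_cast this.symm
  have gf : ∀ y, 𝓕 (fun x => (g x : ℂ)) y = (c0:ℂ)⁻¹ * cmb 1 gm ((‖y‖ ^ 2 : ℝ) : ℂ) := by
    intro y
    rw [gc, ← SchwartzMap.fourier_coe, FourierTransform.fourier_smul, SchwartzMap.smul_apply,
      SchwartzMap.fourier_coe, f, smul_eq_mul]
  have z0 : ((‖(0:V)‖ ^ 2 : ℝ) : ℂ) = ((0:ℝ):ℂ) := by simp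
  have g0 : g 0 = 1 := by
    rw [gr, z0, e0', Complex.ofReal_re]; field_simp
  have f0 : 𝓕 (fun x => (g x : ℂ)) 0 = 1 := by
    rw [gf, z0, e0]; field_simp
  refine ⟨g, ?_, ?_, ?_, g0, f0, ?_⟩
  · intro x y h
    rw [gr, gr, h]
  · intro x hx
    have h2 : 2 ≤ ‖x‖ ^ 2 := (Real.sqrt_le_left (norm_nonneg x)).1 hx
    rw [gr]
    exact mul_nonpos_of_nonneg_of_nonpos (by positivity) (Ah_NP _ h2).2
  · intro x
    obtain ⟨h1, h2⟩ := Bh_NN (‖x‖ ^ 2) (by positivity)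
    refine ⟨c0⁻¹ * (cmb 1 gm ((‖x‖ ^ 2 : ℝ) : ℂ)).re, by positivity, ?_⟩
    rw [gf]; push_cast
    congr 1
    apply Complex.ext
    · simp
    · rw [Complex.ofReal_im]; exact_mod_cast h1
  · intro x hx
    by_cases h0 : x = 0
    · subst h0
      rw [g0, f0]; exact ⟨one_ne_zero, one_ne_zero⟩
    have hu : 0 < ‖x‖ ^ 2 := by positivity
    have hs := sin_ne _ hu hx
    have h2 : ‖x‖ ^ 2 ≠ 2 := fun h => hx ⟨1, one_pos, by rw [h]; norm_num⟩
    constructor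
    · rw [gr]
      apply mul_ne_zero (inv_ne_zero hc0.ne')
      rcases lt_or_gt_of_ne h2 with h | h
      · obtain ⟨c, hc, e⟩ := Ah_small _ hu h
        rw [e, Complex.ofReal_re]; positivity
      · obtain ⟨c, hc, e⟩ := Ah_big _ h
        rw [e, Complex.ofReal_re]
        exact neg_ne_zero.2 (by positivity)
    · rw [gf]
      apply mul_ne_zero (inv_ne_zero hc0')
      obtain ⟨c, hc, e⟩ := Bh_pos _ hu h2
      rw [e]
      exact_mod_cast (mul_pos hs hc).ne'
end SP

/-- **Theorem 3.** There exists a radial Schwartz function `g : ℝ⁸ → ℝ` with `g(x) ≤ 0` for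
`‖x‖ ≥ √2`, `ĝ(x) ≥ 0` for all `x`, `g(0) = ĝ(0) = 1`, and moreover `g(x) ≠ 0` and `ĝ(x) ≠ 0`
for every vector `x` with `‖x‖² ∉ 2ℤ_{>0}`. -/
theorem exists_optimal_function :
    ∃ g : SchwartzMap (EuclideanSpace ℝ (Fin 8)) ℝ,
      (∀ x y : EuclideanSpace ℝ (Fin 8), ‖x‖ = ‖y‖ → g x = g y) ∧
      (∀ x, Real.sqrt 2 ≤ ‖x‖ → g x ≤ 0) ∧
      (∀ x, ∃ c : ℝ, 0 ≤ c ∧ 𝓕 (fun y => (g y : ℂ)) x = c) ∧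
      g 0 = 1 ∧ 𝓕 (fun y => (g y : ℂ)) 0 = 1 ∧
      (∀ x, (¬ ∃ n : ℤ, 0 < n ∧ ‖x‖ ^ 2 = 2 * (n : ℝ)) →
        g x ≠ 0 ∧ 𝓕 (fun y => (g y : ℂ)) x ≠ 0) := by
  exact SP.final
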